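/- (Local test for completeness.) Let (L₁,…,L_k; m; X) be a complete multinet on a line arrangement L in the complex projective plane, with the multiplicities m(ℓ) having greatest common divisor 1. Then for every p ∈ X, 2n_p − 2 = ∑_{ℓ ∈ L, p ∈ ℓ} (m(ℓ) − 1). In particular, if m(ℓ) = 1 for all ℓ ∈ L, then n_p = 1 for all p ∈ X, i.e., the multinet is a net. -/

import Mathlib

/-!
Write `κ = k - 2`, `r = |L|` and, for a base point `p`,
`t_p = 2 n_p - 2 - ∑_{ℓ ∋ p} (m(ℓ) - 1) = r_p - 2 - κ n_p` (`MNet.tp`); the claim is `t_p = 0`.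
The proof is algebraic and replaces the Euler characteristic of the associated fibration by counts
of dimensions.

*The pencil.* Let `Q_i` be the product of the lines of the `i`-th class with their multiplicities.
Forms whose degree is balanced against their multiplicities at the base points (`MNet.Bal`) are,
by Bézout on each line and the connectedness axiom, divisible by the primitive root of `Q_i` as
soon as they vanish at one point of that class outside the base locus (`MNet.R_dvd`). Counting the
possible orders of vanishing along different classes and using `gcd m = 1`, these orders are
multiples of the gcd of the class (`MNet.Ref.g_dvd_ord`), so the `Q_i` lie in one pencil
(`MNet.mem_pencil`).

*The 1-form.* `Q_1 dQ_0 - Q_0 dQ_1 = (∏ ℓ^(m(ℓ) - 1)) G w` with `w` primitive. The form `G` of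
degree `γ` meets the lines only in the base locus, its multiplicities `γ_p` are balanced
(`MNet.bal_γ`), satisfy `γ_p ≤ t_p` (`MNet.γp_le_tp`), and `G` is the only form with these
multiplicities (`MNet.WG_eq_smul`); hence `γ² + 3γ ≤ ∑ γ_p² + ∑ γ_p` (`MNet.γ_ineq`).

*Tangent fields.* The space of homogeneous vector fields tangent to all lines has dimension at
least the value found by adding the lines one by one (`tangent_lower`), and at most the value found
by contracting the fields with `w` (`MNet.tangent_upper`). In degree `r + deg w` the comparison
gives `∑ (m_p - 1) ≥ r - 1 + (deg w - 1)(r - deg w)` (`MNet.mult_bound`), the sum being over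
all points where lines meet.

*Conclusion.* With completeness this becomes
`∑ (t_p - γ_p)(κ n_p - 1 + γ_p) ≤ γ² + 3γ - ∑ γ_p² - ∑ γ_p ≤ 0` (`MNet.defect_sum`). All
summands on the left are nonnegative, so equality holds throughout. If `γ` were positive this would
contradict a Cauchy–Schwarz estimate combined with `3d ≤ ∑ n_p + 2` (`MNet.three_d_le`) and
`r + 1 ≤ |X| + k` (`MNet.rank_bound`); so `γ = 0` (`MNet.gamma_zero`) and all `t_p` vanish.
-/

open Finset
open scoped Classical

/-! ### Linear forms, homogeneous polynomials and multiplicities at a point -/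

namespace Multinet
open MvPolynomial

/-- The homogeneous coordinate ring of the projective plane. -/
abbrev S3 := MvPolynomial (Fin 3) ℂ
/-- Coordinate vectors of points and coefficient vectors of lines (pairing `⬝ᵥ`). -/
abbrev V3 := Fin 3 → ℂ

/-- The linear form with coefficient vector `α`. -/
noncomputable def lin (α : V3) : S3 := ∑ i, C (α i) * X i

/-- The substitution `x ↦ x - α(x) w`; when `α(w) = 1` it is the projection onto the plane
`α = 0` along `w`. -/
noncomputable def proj (α w : V3) : S3 →ₐ[ℂ] S3 := aeval (fun i => X i - C (w i) * lin α)

@[simp] lemma eval_lin (α x : V3) : eval x (lin α) = α ⬝ᵥ x := by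
  simp [lin, dotProduct]

lemma lin_hom (α : V3) : (lin α).IsHomogeneous 1 :=
  IsHomogeneous.sum _ _ _ fun _ _ => isHomogeneous_C_mul_X _ _

lemma lin_smul (c : ℂ) (α : V3) : lin (c • α) = C c * lin α := by
  simp [lin, Finset.mul_sum, mul_assoc]

lemma proj_hom (α w : V3) {P : S3} {c : ℕ} (h : P.IsHomogeneous c) :
    (proj α w P).IsHomogeneous c := by
  have := h.aeval (fun i => X i - C (w i) * lin α) (n := 1) (fun i =>
    (isHomogeneous_X _ _).sub ((lin_hom α).C_mul _))
  rwa [one_mul] at this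

lemma eval_proj (α w x : V3) (P : S3) :
    eval x (proj α w P) = eval (x - (α ⬝ᵥ x) • w) P := by
  have : (aeval x : S3 →ₐ[ℂ] ℂ).comp (proj α w) = aeval (x - (α ⬝ᵥ x) • w) := by
    apply MvPolynomial.algHom_ext
    intro i
    have := eval_lin α x
    simp only [proj, AlgHom.comp_apply, aeval_X, map_sub, map_mul, Pi.sub_apply, Pi.smul_apply,
      smul_eq_mul]
    rw [← coe_aeval_eq_eval] at this
    simp only [RingHom.coe_coe] at this
    rw [this]; simp [mul_comm]
  have h := DFunLike.congr_fun this P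
  rw [← coe_aeval_eq_eval, ← coe_aeval_eq_eval]
  exact h

lemma lin_ne_zero {α : V3} (h : α ≠ 0) : lin α ≠ 0 := by
  intro h0
  apply h
  ext i
  have := congrArg (eval (Pi.single i 1)) h0
  simpa using this

lemma exists_dual {α : V3} (h : α ≠ 0) : ∃ w : V3, α ⬝ᵥ w = 1 := by
  obtain ⟨i, hi⟩ := Function.ne_iff.1 h
  exact ⟨Pi.single i (α i)⁻¹, by simp [mul_inv_cancel₀ (show α i ≠ 0 from hi)]⟩

lemma proj_lin {α w : V3} (h : α ⬝ᵥ w = 1) : proj α w (lin α) = 0 := by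
  apply MvPolynomial.funext
  intro x
  simp [eval_proj, dotProduct_sub, h]

lemma lin_dvd_sub_proj (α w : V3) (P : S3) : lin α ∣ P - proj α w P := by
  induction P using MvPolynomial.induction_on with
  | C a => simp [proj]
  | add p q hp hq =>
    have : p + q - proj α w (p + q) = (p - proj α w p) + (q - proj α w q) := by
      rw [map_add]; ring
    rw [this]; exact dvd_add hp hq
  | mul_X p i hp =>
    have : p * X i - proj α w (p * X i) = (p - proj α w p) * X i
        + proj α w p * (C (w i) * lin α) := by
      rw [map_mul]; simp only [proj, aeval_X]; ring
    rw [this]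
    exact dvd_add (hp.mul_right _) ((Dvd.intro_left _ rfl).mul_left _)

lemma lin_dvd_iff_proj {α w : V3} (h : α ⬝ᵥ w = 1) (P : S3) :
    lin α ∣ P ↔ proj α w P = 0 := by
  constructor
  · rintro ⟨Q, rfl⟩; simp [proj_lin h]
  · intro h0
    simpa [h0] using lin_dvd_sub_proj α w P

lemma lin_dvd_iff {α : V3} (h : α ≠ 0) (P : S3) :
    lin α ∣ P ↔ ∀ x, α ⬝ᵥ x = 0 → eval x P = 0 := by
  constructor
  · rintro ⟨Q, rfl⟩ x hx; simp [hx]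
  · intro H
    obtain ⟨w, hw⟩ := exists_dual h
    rw [lin_dvd_iff_proj hw]
    apply MvPolynomial.funext
    intro x
    rw [eval_proj, map_zero]
    apply H
    simp [dotProduct_sub, hw]

lemma prime_lin {α : V3} (h : α ≠ 0) : Prime (lin α) := by
  obtain ⟨w, hw⟩ := exists_dual h
  refine ⟨lin_ne_zero h, ?_, ?_⟩
  · intro hu
    have := hu.map (eval (0 : V3))
    rw [eval_lin, dotProduct_zero] at this
    exact not_isUnit_zero this
  · intro P Q hPQ
    rw [lin_dvd_iff_proj hw, map_mul, mul_eq_zero] at hPQ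
    rwa [lin_dvd_iff_proj hw, lin_dvd_iff_proj hw]

/-- The substitution `X i ↦ T X i`, which turns the grading into the degree in `T`. -/
noncomputable def gradeHom : S3 →ₐ[ℂ] Polynomial S3 :=
  aeval (fun i => Polynomial.C (X i) * Polynomial.X)

lemma gradeHom_monomial (s : Fin 3 →₀ ℕ) (a : ℂ) : gradeHom (monomial s a) =
    Polynomial.C (monomial s a) * Polynomial.X ^ s.degree := by
  simp only [gradeHom, aeval_monomial]
  rw [Finsupp.prod_fintype _ _ (by simp)]
  simp only [mul_pow, Finset.prod_mul_distrib, Finset.prod_pow_eq_pow_sum]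
  rw [Finsupp.degree_eq_sum, ← mul_assoc]
  congr 1
  rw [monomial_eq, Finsupp.prod_fintype _ _ (by simp)]
  simp only [map_mul, map_prod, map_pow]
  rfl

lemma gradeHom_coeff (R : S3) (n : ℕ) : (gradeHom R).coeff n = homogeneousComponent n R := by
  induction R using MvPolynomial.induction_on' with
  | monomial s a =>
    rw [gradeHom_monomial, Polynomial.coeff_C_mul_X_pow,
      homogeneousComponent_of_mem ((mem_homogeneousSubmodule s.degree _).2
        (isHomogeneous_monomial a rfl))]
  | add p q hp hq => simp [hp, hq]

lemma gradeHom_ne_zero {R : S3} (h : R ≠ 0) : gradeHom R ≠ 0 := by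
  intro hR
  apply h
  rw [← sum_homogeneousComponent R]
  apply Finset.sum_eq_zero
  intro i _
  rw [← gradeHom_coeff, hR]; simp

lemma hom_of_gradeHom {R : S3} (hR0 : R ≠ 0)
    (hR : (gradeHom R).natTrailingDegree = (gradeHom R).natDegree) :
    R.IsHomogeneous R.totalDegree := by
  have h1 : homogeneousComponent (gradeHom R).natDegree R = R := by
    conv_rhs => rw [← sum_homogeneousComponent R]
    symm
    apply Finset.sum_eq_single
    · intro b _ hb
      rw [← gradeHom_coeff]
      rcases lt_or_gt_of_ne hb with hb | hb
      · exact Polynomial.coeff_eq_zero_of_lt_natTrailingDegree (by omega)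
      · exact Polynomial.coeff_eq_zero_of_natDegree_lt hb
    · intro hd
      refine homogeneousComponent_eq_zero _ _ ?_
      simp at hd; omega
  have : R.IsHomogeneous (gradeHom R).natDegree := by
    have := homogeneousComponent_isHomogeneous (gradeHom R).natDegree R
    rwa [h1] at this
  rwa [this.totalDegree hR0]

/-- Divisors of nonzero homogeneous polynomials are homogeneous. -/
lemma hom_of_mul {P Q : S3} {c : ℕ} (h : (P * Q).IsHomogeneous c) (h0 : P * Q ≠ 0) :
    P.IsHomogeneous P.totalDegree ∧ Q.IsHomogeneous Q.totalDegree ∧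
      P.totalDegree + Q.totalDegree = c := by
  have hP0 := left_ne_zero_of_mul h0
  have hQ0 := right_ne_zero_of_mul h0
  have hφ : gradeHom P * gradeHom Q = Polynomial.monomial c (P * Q) := by
    rw [← map_mul]
    ext1 n
    rw [gradeHom_coeff, Polynomial.coeff_monomial, homogeneousComponent_of_mem
      ((mem_homogeneousSubmodule c _).2 h)]
    simp only [eq_comm]
  have hP1 := gradeHom_ne_zero hP0
  have hQ1 := gradeHom_ne_zero hQ0
  have e1 : (gradeHom P).natDegree + (gradeHom Q).natDegree = c := by
    rw [← Polynomial.natDegree_mul hP1 hQ1, hφ, Polynomial.natDegree_monomial, if_neg h0]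
  have e2 : (gradeHom P).natTrailingDegree + (gradeHom Q).natTrailingDegree = c := by
    rw [← Polynomial.natTrailingDegree_mul hP1 hQ1, hφ, Polynomial.natTrailingDegree_monomial h0]
  have e3 := Polynomial.natTrailingDegree_le_natDegree (gradeHom P)
  have e4 := Polynomial.natTrailingDegree_le_natDegree (gradeHom Q)
  refine ⟨hom_of_gradeHom hP0 (by omega), hom_of_gradeHom hQ0 (by omega), ?_⟩
  rw [← h.totalDegree h0, totalDegree_mul_of_isDomain hP0 hQ0]

lemma hom_quot {P Q : S3} {b c : ℕ} (h : (P * Q).IsHomogeneous c) (hP : P.IsHomogeneous b)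
    (h0 : P ≠ 0) : Q = 0 ∨ b ≤ c ∧ Q.IsHomogeneous (c - b) := by
  by_cases hQ : Q = 0
  · exact Or.inl hQ
  · obtain ⟨_, h2, h3⟩ := hom_of_mul h (mul_ne_zero h0 hQ)
    rw [hP.totalDegree h0] at h3
    refine Or.inr ⟨by omega, ?_⟩
    have : c - b = Q.totalDegree := by omega
    rwa [this]

/-- `shift a P = P(x + T a)` as a polynomial in `T`. For `P` homogeneous of degree `c`, the
multiplicity of `P` at the projective point `a` is `c - natDegree (shift a P)`. -/
noncomputable def shift (a : V3) : S3 →ₐ[ℂ] Polynomial S3 :=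
  aeval (fun i => Polynomial.C (X i) + Polynomial.C (C (a i)) * Polynomial.X)

lemma shift_coeff_zero (a : V3) (P : S3) : (shift a P).coeff 0 = P := by
  have : ((Polynomial.aeval (0 : S3)).restrictScalars ℂ).comp (shift a) = AlgHom.id ℂ S3 := by
    apply MvPolynomial.algHom_ext
    intro i
    simp [shift]
  have h := DFunLike.congr_fun this P
  simp only [AlgHom.comp_apply, AlgHom.restrictScalars_apply, Polynomial.coe_aeval_eq_eval,
    AlgHom.id_apply] at h
  rw [Polynomial.coeff_zero_eq_eval_zero]; exact h

lemma shift_ne_zero (a : V3) {P : S3} (h : P ≠ 0) : shift a P ≠ 0 := by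
  intro h0
  apply h
  rw [← shift_coeff_zero a P, h0]; simp

lemma exists_option_poly (a : V3) {P : S3} {c : ℕ} (h : P.IsHomogeneous c) :
    ∃ Q : MvPolynomial (Option (Fin 3)) ℂ, Q.IsHomogeneous c ∧
      shift a P = optionEquivLeft ℂ (Fin 3) Q := by
  refine ⟨aeval (fun i => X (some i) + C (a i) * X none) P, ?_, ?_⟩
  · have := h.aeval (S := ℂ) (fun i : Fin 3 => X (some i) + C (a i) * X none) (n := 1) (fun i =>
      (isHomogeneous_X _ _).add (isHomogeneous_C_mul_X _ _))
    rwa [one_mul] at this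
  · have : shift a = (optionEquivLeft ℂ (Fin 3)).toAlgHom.comp
        (aeval (fun i => X (some i) + C (a i) * X none)) := by
      apply MvPolynomial.algHom_ext
      intro i
      simp [shift, optionEquivLeft_X_some, optionEquivLeft_C, optionEquivLeft_X_none]
    rw [this]; rfl

lemma shift_coeff_hom (a : V3) {P : S3} {c : ℕ} (h : P.IsHomogeneous c) (i j : ℕ)
    (hij : i + j = c) : ((shift a P).coeff i).IsHomogeneous j := by
  obtain ⟨Q, hQ, hs⟩ := exists_option_poly a h
  rw [hs]
  apply IsHomogeneous.coeff_isHomogeneous_of_optionEquivLeft_symm (n := c) _ i j hij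
  simpa using hQ

lemma shift_natDegree_le (a : V3) {P : S3} {c : ℕ} (h : P.IsHomogeneous c) :
    (shift a P).natDegree ≤ c := by
  obtain ⟨Q, hQ, hs⟩ := exists_option_poly a h
  rw [hs, natDegree_optionEquivLeft]
  exact (degreeOf_le_totalDegree _ _).trans hQ.totalDegree_le

lemma shift_hom_X (a : V3) (s : ℂ) (P : S3) :
    (shift a P).comp (Polynomial.X + Polynomial.C (C s)) =
      (shift a P).map ((aeval (fun i => X i + C (s * a i)) : S3 →ₐ[ℂ] S3) : S3 →+* S3) := by
  induction P using MvPolynomial.induction_on with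
  | C b => simp [shift]
  | add p q hp hq => simp [hp, hq]
  | mul_X p i hp =>
    rw [map_mul, Polynomial.mul_comp, hp, Polynomial.map_mul]
    congr 1
    simp only [shift, aeval_X, Polynomial.add_comp, Polynomial.C_comp, Polynomial.mul_comp,
      Polynomial.X_comp, Polynomial.map_add, Polynomial.map_mul, Polynomial.map_C,
      Polynomial.map_X]
    simp
    ring

lemma eval_shift (a v : V3) (t : ℂ) (P : S3) :
    ((shift a P).map (eval v)).eval t = eval (v + t • a) P := by
  induction P using MvPolynomial.induction_on with
  | C b => simp [shift]
  | add p q hp hq => simp [hp, hq]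
  | mul_X p i hp =>
    rw [map_mul, Polynomial.map_mul, Polynomial.eval_mul, hp, map_mul]
    congr 1
    simp [shift]
    ring

lemma eval_smul_hom {P : S3} {c : ℕ} (h : P.IsHomogeneous c) (t : ℂ) (v : V3) :
    eval (t • v) P = t ^ c * eval v P := by
  rw [eval_eq', eval_eq', Finset.mul_sum]
  apply Finset.sum_congr rfl
  intro s hs
  have hd := h.degree_eq_sum_deg_support hs
  simp only [Pi.smul_apply, smul_eq_mul, mul_pow, Finset.prod_mul_distrib,
    Finset.prod_pow_eq_pow_sum]
  rw [hd, ← Finsupp.degree_apply, Finsupp.degree_eq_sum]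
  ring

/-- The degree of `P` along `a`. -/
noncomputable def dg (a : V3) (P : S3) : ℕ := (shift a P).natDegree

/-- The leading form (tangent cone) of `P` at the point `a`. -/
noncomputable def lead (a : V3) (P : S3) : S3 := (shift a P).leadingCoeff

lemma dg_le (a : V3) {P : S3} {c : ℕ} (h : P.IsHomogeneous c) : dg a P ≤ c :=
  shift_natDegree_le a h

lemma dg_mul (a : V3) {P Q : S3} (hP : P ≠ 0) (hQ : Q ≠ 0) : dg a (P * Q) = dg a P + dg a Q := by
  rw [dg, map_mul, Polynomial.natDegree_mul (shift_ne_zero a hP) (shift_ne_zero a hQ)]; rfl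

lemma lead_mul (a : V3) (P Q : S3) : lead a (P * Q) = lead a P * lead a Q := by
  rw [lead, map_mul, Polynomial.leadingCoeff_mul]; rfl

lemma lead_one (a : V3) : lead a 1 = 1 := by simp [lead]

lemma dg_one (a : V3) : dg a 1 = 0 := by simp [dg]

lemma lead_ne_zero (a : V3) {P : S3} (hP : P ≠ 0) : lead a P ≠ 0 := by
  rw [lead, Ne, Polynomial.leadingCoeff_eq_zero]; exact shift_ne_zero a hP

lemma lead_hom (a : V3) {P : S3} {c : ℕ} (h : P.IsHomogeneous c) :
    (lead a P).IsHomogeneous (c - dg a P) :=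
  shift_coeff_hom a h _ _ (by have := dg_le a h; unfold dg at *; omega)

lemma lead_prod (a : V3) {ι : Type*} (s : Finset ι) (f : ι → S3) :
    lead a (∏ i ∈ s, f i) = ∏ i ∈ s, lead a (f i) := by
  induction s using Finset.induction_on with
  | empty => simp [lead_one]
  | insert i s hi ih => rw [Finset.prod_insert hi, Finset.prod_insert hi, lead_mul, ih]

lemma lead_pow (a : V3) (f : S3) (n : ℕ) : lead a (f ^ n) = lead a f ^ n := by
  induction n with
  | zero => simp [lead_one]
  | succ n ih => rw [pow_succ, pow_succ, lead_mul, ih]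

lemma dg_pow (a : V3) {f : S3} (hf : f ≠ 0) (n : ℕ) : dg a (f ^ n) = n * dg a f := by
  induction n with
  | zero => simp [dg_one]
  | succ n ih => rw [pow_succ, dg_mul a (pow_ne_zero _ hf) hf, ih]; ring

lemma dg_prod (a : V3) {ι : Type*} (s : Finset ι) (f : ι → S3) (hf : ∀ i ∈ s, f i ≠ 0) :
    dg a (∏ i ∈ s, f i) = ∑ i ∈ s, dg a (f i) := by
  induction s using Finset.induction_on with
  | empty => simp [dg_one]
  | insert i s hi ih =>
    rw [Finset.prod_insert hi, Finset.sum_insert hi, dg_mul a (hf _ (by simp)), ih]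
    · exact fun j hj => hf j (by simp [hj])
    · exact Finset.prod_ne_zero_iff.2 fun j hj => hf j (by simp [hj])

lemma shift_lin (a α : V3) :
    shift a (lin α) = Polynomial.C (lin α) + Polynomial.C (C (α ⬝ᵥ a)) * Polynomial.X := by
  have : ∀ i, shift a (C (α i) * X i) = Polynomial.C (C (α i) * X i)
      + Polynomial.C (C (α i * a i)) * Polynomial.X := by
    intro i
    have : shift a (C (α i)) = Polynomial.C (C (α i)) := by simp [shift]
    rw [map_mul, this]; simp [shift]; ring
  conv_lhs => rw [lin]
  simp only [map_sum, this, Finset.sum_add_distrib, dotProduct, Finset.sum_mul]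
  simp [lin]

lemma dg_lin_of_mem {a α : V3} (h : α ⬝ᵥ a = 0) : dg a (lin α) = 0 := by
  simp [dg, shift_lin, h]

lemma lead_lin_of_mem {a α : V3} (h : α ⬝ᵥ a = 0) : lead a (lin α) = lin α := by
  simp [lead, shift_lin, h]

lemma dg_lin_of_notMem {a α : V3} (h : α ⬝ᵥ a ≠ 0) : dg a (lin α) = 1 := by
  rw [dg, shift_lin, add_comm, Polynomial.natDegree_linear]; simpa using h

lemma lead_lin_of_notMem {a α : V3} (h : α ⬝ᵥ a ≠ 0) : lead a (lin α) = C (α ⬝ᵥ a) := by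
  rw [lead, shift_lin, add_comm, Polynomial.leadingCoeff_linear]; simpa using h

lemma lead_invariant (a : V3) (P : S3) (v : V3) (s : ℂ) :
    eval (v + s • a) (lead a P) = eval v (lead a P) := by
  have h := shift_hom_X a s P
  have h1 := congrArg (fun p => p.coeff (shift a P).natDegree) h
  simp only [Polynomial.coeff_map] at h1
  have h2 : ((shift a P).comp (Polynomial.X + Polynomial.C (C s))).coeff (shift a P).natDegree
      = lead a P := by
    have hd : ((shift a P).comp (Polynomial.X + Polynomial.C (C s))).natDegree
        = (shift a P).natDegree := by
      rw [Polynomial.natDegree_comp, Polynomial.natDegree_X_add_C, mul_one]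
    have hl : ((shift a P).comp (Polynomial.X + Polynomial.C (C s))).leadingCoeff
        = lead a P := by
      rw [Polynomial.leadingCoeff_comp (by simp)]
      simp [lead]
    rw [Polynomial.leadingCoeff, hd] at hl
    exact hl
  rw [h2] at h1
  have h3 := congrArg (eval v) h1
  rw [h3]
  change _ = eval v (aeval _ (lead a P))
  rw [← coe_aeval_eq_eval, ← coe_aeval_eq_eval]
  have : (aeval v : S3 →ₐ[ℂ] ℂ).comp (aeval (fun i => X i + C (s * a i))) = aeval (v + s • a) := by
    apply MvPolynomial.algHom_ext
    intro i
    simp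
  exact (DFunLike.congr_fun this (lead a P)).symm

lemma shift_coeff_top (a : V3) {P : S3} {c : ℕ} (h : P.IsHomogeneous c) :
    (shift a P).coeff c = C (eval a P) := by
  have h0 := shift_coeff_hom a h c 0 (by simp)
  have h1 := (totalDegree_zero_iff_isHomogeneous _).2 h0
  rw [totalDegree_eq_zero_iff_eq_C] at h1
  rw [h1]
  congr 1
  have h2 : (shift a P).map (eval (0 : V3)) = Polynomial.C (eval a P) * Polynomial.X ^ c := by
    apply Polynomial.funext
    intro t
    rw [eval_shift, zero_add, eval_smul_hom h]
    simp only [Polynomial.eval_mul, Polynomial.eval_C, Polynomial.eval_pow, Polynomial.eval_X]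
    ring
  have h3 := congrArg (fun p => p.coeff c) h2
  simp only [Polynomial.coeff_map, Polynomial.coeff_C_mul_X_pow, if_true] at h3
  rw [← h3, eval_zero, constantCoeff_eq]

lemma dg_eq_of_eval_ne {a : V3} {P : S3} {c : ℕ} (h : P.IsHomogeneous c) (h0 : eval a P ≠ 0) :
    dg a P = c := by
  apply le_antisymm (dg_le a h)
  apply Polynomial.le_natDegree_of_ne_zero
  rw [shift_coeff_top a h]
  simpa using h0

lemma dg_lt_of_eval_eq {a : V3} {P : S3} {c : ℕ} (h : P.IsHomogeneous c) (hc : 0 < c)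
    (h0 : eval a P = 0) : dg a P < c := by
  apply lt_of_le_of_ne (dg_le a h)
  intro he
  have h1 := shift_coeff_top a h
  rw [h0, C_0] at h1
  have h2 : lead a P = 0 := by
    rw [lead, Polynomial.leadingCoeff]; unfold dg at he; rw [he, h1]
  rw [lead, Polynomial.leadingCoeff_eq_zero] at h2
  unfold dg at he
  rw [h2] at he
  simp at he
  omega
end Multinet

/-! ### Bézout's inequality for a curve and a line -/

namespace Multinet
open MvPolynomial

lemma plane_coords {α v : V3} (hα : α ≠ 0) (hv : v ≠ 0) (h : α ⬝ᵥ v = 0) :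
    ∃ u : V3, α ⬝ᵥ u = 0 ∧ u ≠ 0 ∧ (∀ c : ℂ, u ≠ c • v) ∧
      ∀ a : V3, α ⬝ᵥ a = 0 → ∃ x y : ℂ, a = x • u + y • v := by
  obtain ⟨β, hβ⟩ := exists_dual hv
  rw [dotProduct_comm] at hβ
  set u : V3 := crossProduct α β with hu
  have id3 : ∀ z a b : V3, crossProduct z (crossProduct a b) = (z ⬝ᵥ b) • a - (z ⬝ᵥ a) • b := by
    intro z a b
    rw [cross_cross_eq_smul_sub_smul', dotProduct_comm a z]
  have hu0 : u ≠ 0 := by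
    intro h0
    have := id3 v α β
    rw [← hu, h0, dotProduct_comm v β, hβ, dotProduct_comm v α, h] at this
    apply hα
    simpa using this.symm
  obtain ⟨δ, hδ⟩ := exists_dual hu0
  rw [dotProduct_comm] at hδ
  refine ⟨u, dot_self_cross _ _, hu0, ?_, ?_⟩
  · intro c hc
    have h1 : β ⬝ᵥ u = 0 := dot_cross_self _ _
    rw [hc, dotProduct_smul, hβ] at h1
    apply hu0
    rw [hc]
    have : c = 0 := by simpa using h1
    simp [this]
  intro a ha
  refine ⟨δ ⬝ᵥ (a - (β ⬝ᵥ a) • v), β ⬝ᵥ a, ?_⟩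
  set z := a - (β ⬝ᵥ a) • v with hz
  have hzα : z ⬝ᵥ α = 0 := by rw [dotProduct_comm]; simp [hz, dotProduct_sub, ha, h]
  have hzβ : z ⬝ᵥ β = 0 := by rw [dotProduct_comm]; simp [hz, dotProduct_sub, hβ]
  have h1 := id3 δ z u
  have h2 := id3 z α β
  rw [hzα, hzβ, ← hu] at h2
  rw [h2, hδ] at h1
  have h3 : z = (δ ⬝ᵥ z) • u := by
    have : (0 : V3) = z - (δ ⬝ᵥ z) • u := by simpa using h1
    exact (sub_eq_zero.1 this.symm)
  rw [← h3, hz]; simp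

/-- The univariate polynomial `s ↦ P(u + s v)`. -/
noncomputable def restr (u v : V3) (P : S3) : Polynomial ℂ := (shift v P).map (eval u)

lemma eval_restr (u v : V3) (s : ℂ) (P : S3) : (restr u v P).eval s = eval (u + s • v) P :=
  eval_shift v u s P

lemma restr_natDegree_le (u v : V3) {P : S3} {c : ℕ} (h : P.IsHomogeneous c) :
    (restr u v P).natDegree ≤ c :=
  Polynomial.natDegree_map_le.trans (shift_natDegree_le v h)

lemma restr_coeff_top (u v : V3) {P : S3} {c : ℕ} (h : P.IsHomogeneous c) :
    (restr u v P).coeff c = eval v P := by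
  rw [restr, Polynomial.coeff_map, shift_coeff_top v h, eval_C]

lemma restr_smul (a v : V3) (t : ℂ) {P : S3} {c : ℕ} (h : P.IsHomogeneous c) :
    restr (t • a) v P = ∑ j ∈ range (dg a P + 1),
      Polynomial.C (t ^ j * eval v ((shift a P).coeff j)) * Polynomial.X ^ (c - j) := by
  refine Polynomial.eq_of_infinite_eval_eq _ _ (Set.Infinite.mono (s := {s : ℂ | s ≠ 0}) ?_ ?_)
  · intro s hs
    have hs : s ≠ 0 := hs
    simp only [Set.mem_ofPred_eq]
    rw [eval_restr]
    have e1 : t • a + s • v = s • (v + (t / s) • a) := by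
      rw [smul_add, smul_smul, mul_div_cancel₀ _ hs, add_comm]
    rw [e1, eval_smul_hom h, ← eval_shift, Polynomial.eval_eq_sum_range'
      (lt_of_le_of_lt Polynomial.natDegree_map_le (Nat.lt_succ_self _)), Polynomial.eval_finsetSum,
      Finset.mul_sum]
    apply Finset.sum_congr rfl
    intro j hj
    have hj' : j ≤ c := by
      have := dg_le a h
      unfold dg at this
      simp at hj; omega
    simp only [Polynomial.coeff_map, Polynomial.eval_mul, Polynomial.eval_C, Polynomial.eval_pow,
      Polynomial.eval_X, div_pow]
    have : s ^ c = s ^ (c - j) * s ^ j := by rw [← pow_add]; congr 1; omega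
    rw [this]
    have := pow_ne_zero j hs
    field_simp
  · exact (Set.finite_singleton (0 : ℂ)).infinite_compl

lemma X_pow_dvd_restr (a v : V3) (t : ℂ) {P : S3} {c : ℕ} (h : P.IsHomogeneous c) :
    Polynomial.X ^ (c - dg a P) ∣ restr (t • a) v P := by
  rw [restr_smul a v t h]
  apply Finset.dvd_sum
  intro j hj
  apply Dvd.dvd.mul_left
  apply pow_dvd_pow
  simp at hj; omega

lemma not_X_pow_dvd_restr (a v : V3) {t : ℂ} (ht : t ≠ 0) {P : S3} {c : ℕ}
    (h : P.IsHomogeneous c) (hl : eval v (lead a P) ≠ 0) :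
    ¬ Polynomial.X ^ (c - dg a P + 1) ∣ restr (t • a) v P := by
  rw [Polynomial.X_pow_dvd_iff]
  push Not
  refine ⟨c - dg a P, by omega, ?_⟩
  rw [restr_smul a v t h, Polynomial.finsetSum_coeff]
  have hdg := dg_le a h
  rw [Finset.sum_eq_single_of_mem (dg a P) (by simp)]
  · rw [Polynomial.coeff_C_mul_X_pow, if_pos rfl]
    exact mul_ne_zero (pow_ne_zero _ ht) hl
  · intro j hj hne
    rw [Polynomial.coeff_C_mul_X_pow, if_neg]
    simp at hj; omega

lemma restr_comp (u v : V3) (s : ℂ) (P : S3) :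
    restr (u + s • v) v P = (restr u v P).comp (Polynomial.X + Polynomial.C s) := by
  apply Polynomial.funext
  intro t
  rw [eval_restr, Polynomial.eval_comp, eval_restr]
  congr 2
  simp [add_smul]; abel

lemma sub_pow_dvd_iff (f : Polynomial ℂ) (s : ℂ) (n : ℕ) :
    (Polynomial.X - Polynomial.C s) ^ n ∣ f ↔
      Polynomial.X ^ n ∣ f.comp (Polynomial.X + Polynomial.C s) := by
  constructor
  · rintro ⟨g, rfl⟩
    simp
  · rintro ⟨g, hg⟩
    have := congrArg (fun p => p.comp (Polynomial.X - Polynomial.C s)) hg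
    simp only [Polynomial.comp_assoc] at this
    refine ⟨g.comp (Polynomial.X - Polynomial.C s), ?_⟩
    simpa using this

/-- Bézout's inequality for a curve `P` and a line `α` not contained in it. -/
lemma bezout_line {π : Type*} (s : Finset π) (a : π → V3) {α : V3} (hα : α ≠ 0)
    (ha0 : ∀ p ∈ s, a p ≠ 0)
    (hon : ∀ p ∈ s, α ⬝ᵥ a p = 0) (hpair : ∀ p ∈ s, ∀ q ∈ s, p ≠ q → ∀ c : ℂ, a p ≠ c • a q)
    {P : S3} {c : ℕ} (h : P.IsHomogeneous c) (hP : ¬ lin α ∣ P) :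
    ∑ p ∈ s, (c - dg (a p) P) ≤ c := by
  rw [lin_dvd_iff hα] at hP
  push Not at hP
  obtain ⟨v, hv, hPv⟩ := hP
  by_cases hc : c = 0
  · subst hc; simp
  have hv0 : v ≠ 0 := by
    rintro rfl
    have := eval_smul_hom h 0 (0 : V3)
    rw [zero_smul, zero_pow hc, zero_mul] at this
    exact hPv this
  obtain ⟨u, hu, hu0, -, hco⟩ := plane_coords hα hv0 hv
  have hco' : ∀ p ∈ s, ∃ x y : ℂ, a p = x • u + y • v := fun p hp => hco _ (hon p hp)
  choose! x y hxy using hco'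
  have hf0 : restr u v P ≠ 0 := by
    intro h0
    have := restr_coeff_top u v h
    rw [h0] at this
    exact hPv (by simpa using this.symm)
  -- points where `x` vanishes are proportional to `v`, where `P` does not vanish
  let s' := s.filter (fun p => x p ≠ 0)
  have hs' : ∑ p ∈ s, (c - dg (a p) P) = ∑ p ∈ s', (c - dg (a p) P) := by
    symm
    apply Finset.sum_subset (Finset.filter_subset _ _)
    intro p hp hps
    have hx : x p = 0 := by
      by_contra hx; exact hps (by simp [hp, hx])
    have e := hxy p hp
    rw [hx, zero_smul, zero_add] at e
    have hy : y p ≠ 0 := by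
      intro hy; rw [hy, zero_smul] at e; exact ha0 p hp e
    rw [dg_eq_of_eval_ne h, Nat.sub_self]
    rw [e, eval_smul_hom h]
    exact mul_ne_zero (pow_ne_zero _ hy) hPv
  rw [hs']
  let r : π → ℂ := fun p => y p / x p
  have hdvd : ∀ p ∈ s', (Polynomial.X - Polynomial.C (r p)) ^ (c - dg (a p) P) ∣ restr u v P := by
    intro p hp
    simp only [s', Finset.mem_filter] at hp
    rw [sub_pow_dvd_iff, ← restr_comp]
    have e := hxy p hp.1
    have : u + r p • v = (x p)⁻¹ • a p := by
      conv_rhs => rw [e]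
      rw [smul_add, smul_smul, smul_smul, inv_mul_cancel₀ hp.2, one_smul]
      congr 2
      simp only [r]; field_simp
    rw [this]
    exact X_pow_dvd_restr _ _ _ h
  have hinj : ∀ p ∈ s', ∀ q ∈ s', p ≠ q → r p ≠ r q := by
    intro p hp q hq hpq hr
    simp only [s', Finset.mem_filter] at hp hq
    apply hpair p hp.1 q hq.1 hpq (x p / x q)
    conv_lhs => rw [hxy p hp.1]
    conv_rhs => rw [hxy q hq.1]
    rw [smul_add, smul_smul, smul_smul]
    have hq2 := hq.2
    have hp2 := hp.2
    congr 2
    · field_simp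
    · simp only [r] at hr
      field_simp at hr
      field_simp
      linear_combination hr
  have hprod : ∏ p ∈ s', (Polynomial.X - Polynomial.C (r p)) ^ (c - dg (a p) P) ∣ restr u v P := by
    apply Finset.prod_dvd_of_coprime _ hdvd
    intro p hp q hq hpq
    apply IsCoprime.pow
    exact Polynomial.isCoprime_X_sub_C_of_isUnit_sub
      (sub_ne_zero.2 (hinj p hp q hq hpq)).isUnit
  have := Polynomial.natDegree_le_of_dvd hprod hf0
  rw [Polynomial.natDegree_prod _ _ (fun i _ => pow_ne_zero _ (Polynomial.X_sub_C_ne_zero _))] at this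
  simp only [Polynomial.natDegree_pow, Polynomial.natDegree_X_sub_C, mul_one] at this
  exact this.trans (restr_natDegree_le u v h)

end Multinet

/-! ### Dimensions of spaces of forms with prescribed multiplicities -/

namespace Multinet
open MvPolynomial

/-- Homogeneous forms of degree `c`. -/
noncomputable abbrev Sd (c : ℕ) : Submodule ℂ S3 := homogeneousSubmodule (Fin 3) ℂ c

/-- The basis of monomials of degree `c`. -/
noncomputable def sdBasis (c : ℕ) : Module.Basis {d : Fin 3 →₀ ℕ // d.degree = c} ℂ (Sd c) :=
  (basisRestrictSupport ℂ {d : Fin 3 →₀ ℕ | d.degree = c}).map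
    (LinearEquiv.ofEq _ _ (homogeneousSubmodule_eq_finsupp_supported (Fin 3) ℂ c).symm)

noncomputable instance (c : ℕ) : Fintype {d : Fin 3 →₀ ℕ // d.degree = c} :=
  Fintype.subtype (Finset.finsuppAntidiag univ c) (by
    intro x; simp [Finset.mem_finsuppAntidiag, Finsupp.degree_eq_sum])

instance (c : ℕ) : FiniteDimensional ℂ (Sd c) := Module.Basis.finiteDimensional_of_finite (sdBasis c)

lemma finrank_Sd (c : ℕ) : Module.finrank ℂ (Sd c) = (c + 2).choose 2 := by
  rw [Module.finrank_eq_card_basis (sdBasis c), Fintype.card_of_subtype (Finset.finsuppAntidiag univ c),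
    Finset.card_finsuppAntidiag_nat_eq_choose]
  · rw [Finset.card_fin, show 3 + c - 1 = c + 2 by omega]
    exact Nat.choose_symm_add
  · intro x; simp [Finset.mem_finsuppAntidiag, Finsupp.degree_eq_sum]

lemma finrank_le_ker_add {E E' : Type*} [AddCommGroup E] [Module ℂ E] [AddCommGroup E']
    [Module ℂ E'] (U : Submodule ℂ E) [FiniteDimensional ℂ U] (f : E →ₗ[ℂ] E')
    (U' : Submodule ℂ E') [FiniteDimensional ℂ U'] (h : ∀ x ∈ U, f x ∈ U') :
    Module.finrank ℂ U ≤ Module.finrank ℂ (U ⊓ LinearMap.ker f : Submodule ℂ E)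
      + Module.finrank ℂ U' := by
  have h1 := LinearMap.finrank_range_add_finrank_ker (f.domRestrict U)
  have h2 : Module.finrank ℂ (LinearMap.range (f.domRestrict U)) ≤ Module.finrank ℂ U' := by
    apply Submodule.finrank_mono
    rintro _ ⟨x, rfl⟩
    exact h _ x.2
  have h3 : Module.finrank ℂ (LinearMap.ker (f.domRestrict U)) =
      Module.finrank ℂ (U ⊓ LinearMap.ker f : Submodule ℂ E) := by
    rw [LinearMap.ker_domRestrict, ← Submodule.finrank_map_subtype_eq, Submodule.map_comap_subtype]
  omega

lemma finrank_map_add_ker {E E' : Type*} [AddCommGroup E] [Module ℂ E] [AddCommGroup E']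
    [Module ℂ E'] (U : Submodule ℂ E) [FiniteDimensional ℂ U] (f : E →ₗ[ℂ] E') :
    Module.finrank ℂ (U.map f) + Module.finrank ℂ (U ⊓ LinearMap.ker f : Submodule ℂ E)
      = Module.finrank ℂ U := by
  have h1 := LinearMap.finrank_range_add_finrank_ker (f.domRestrict U)
  rw [LinearMap.ker_domRestrict, ← Submodule.finrank_map_subtype_eq, Submodule.map_comap_subtype,
    LinearMap.range_domRestrict] at h1
  exact h1

lemma finrank_map_mulLeft {P : S3} (hP : P ≠ 0) (U : Submodule ℂ S3) :
    Module.finrank ℂ (U.map (LinearMap.mulLeft ℂ P)) = Module.finrank ℂ U :=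
  (LinearEquiv.finrank_eq (Submodule.equivMapOfInjective _
    (fun _ _ h => mul_left_cancel₀ hP h) U)).symm

lemma finrank_proj_Sd_le {α w : V3} (h : α ⬝ᵥ w = 1) (c : ℕ) :
    Module.finrank ℂ ((Sd c).map (proj α w).toLinearMap) ≤ c + 1 := by
  have hα : α ≠ 0 := by rintro rfl; simp at h
  have h1 := finrank_map_add_ker (Sd c) (proj α w).toLinearMap
  rw [finrank_Sd] at h1
  rcases c with _ | c
  · simp at h1 ⊢; omega
  have h2 : Module.finrank ℂ ((Sd c).map (LinearMap.mulLeft ℂ (lin α))) ≤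
      Module.finrank ℂ (Sd (c + 1) ⊓ LinearMap.ker (proj α w).toLinearMap : Submodule ℂ S3) := by
    apply Submodule.finrank_mono
    rintro _ ⟨Q, hQ, rfl⟩
    refine ⟨?_, ?_⟩
    · have := (lin_hom α).mul hQ
      rwa [add_comm] at this
    · simp [proj_lin h]
  rw [finrank_map_mulLeft (lin_ne_zero hα), finrank_Sd] at h2
  have h3 : (c + 1 + 2).choose 2 = (c + 2).choose 2 + (c + 2) := by
    rw [Nat.choose_succ_succ' (c + 2) 1, Nat.choose_one_right]; ring
  omega

/-- Forms of degree `c` whose multiplicity at the point `a p` is at least `f p`, for all `p`. -/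
noncomputable def W {π : Type*} (a : π → V3) (c : ℕ) (f : π → ℤ) : Submodule ℂ S3 where
  carrier := {P | P.IsHomogeneous c ∧ ∀ p (j : ℕ), (c : ℤ) < j + f p → (shift (a p) P).coeff j = 0}
  zero_mem' := ⟨isHomogeneous_zero _ _ _, by simp⟩
  add_mem' := by
    rintro P Q ⟨h1, h2⟩ ⟨h3, h4⟩
    refine ⟨h1.add h3, fun p j hj => ?_⟩
    rw [map_add, Polynomial.coeff_add, h2 p j hj, h4 p j hj, add_zero]
  smul_mem' := by
    rintro r P ⟨h1, h2⟩
    refine ⟨(Sd c).smul_mem r h1, fun p j hj => ?_⟩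
    rw [map_smul, Polynomial.coeff_smul, h2 p j hj, smul_zero]

lemma W_le {π : Type*} (a : π → V3) (c : ℕ) (f : π → ℤ) : W a c f ≤ Sd c := fun _ h => h.1

instance {π : Type*} (a : π → V3) (c : ℕ) (f : π → ℤ) : FiniteDimensional ℂ (W a c f) :=
  Submodule.finiteDimensional_of_le (W_le a c f)

lemma mem_W {π : Type*} {a : π → V3} {c : ℕ} {f : π → ℤ} {P : S3} (hP : P ≠ 0) :
    P ∈ W a c f ↔ P.IsHomogeneous c ∧ ∀ p, (dg (a p) P : ℤ) + f p ≤ c := by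
  constructor
  · rintro ⟨h1, h2⟩
    refine ⟨h1, fun p => ?_⟩
    by_contra hlt
    push Not at hlt
    exact lead_ne_zero (a p) hP (h2 p _ hlt)
  · rintro ⟨h1, h2⟩
    refine ⟨h1, fun p j hj => ?_⟩
    apply Polynomial.coeff_eq_zero_of_natDegree_lt
    have := h2 p
    unfold dg at this
    omega

/-- Multiplicity at least `e` at one point imposes at most `e (e + 1) / 2` conditions. -/
lemma finrank_point_cond {a : V3} (ha : a ≠ 0) (c e : ℕ) (he : e ≤ c) (U : Submodule ℂ S3)
    (hU : U ≤ Sd c) :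
    Module.finrank ℂ U ≤ Module.finrank ℂ (U ⊓ W (fun _ : Unit => a) c (fun _ => e) :
      Submodule ℂ S3) + (e + 1).choose 2 := by
  obtain ⟨β, hβ⟩ := exists_dual ha
  rw [dotProduct_comm] at hβ
  induction e with
  | zero =>
    have : U ⊓ W (fun _ : Unit => a) c (fun _ => ((0 : ℕ) : ℤ)) = U := by
      apply inf_eq_left.2
      intro P hP
      refine ⟨hU hP, fun p j hj => ?_⟩
      apply Polynomial.coeff_eq_zero_of_natDegree_lt
      have := shift_natDegree_le a (hU hP)
      simp at hj
      dsimp only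
      omega
    rw [this]; simp
  | succ e ih =>
    have ih := ih (by omega)
    set U1 := U ⊓ W (fun _ : Unit => a) c (fun _ => (e : ℤ)) with hU1
    have : FiniteDimensional ℂ U1 :=
      Submodule.finiteDimensional_of_le (inf_le_left.trans hU)
    let φ : S3 →ₗ[ℂ] S3 :=
      ((Polynomial.lcoeff S3 (c - e)).restrictScalars ℂ).comp (shift a).toLinearMap
    have hφ : ∀ P, φ P = (shift a P).coeff (c - e) := fun P => rfl
    have h1 := finrank_le_ker_add U1 φ ((Sd e).map (proj β a).toLinearMap) (by
      rintro P ⟨hP1, hP2⟩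
      rw [hφ]
      by_cases h0 : (shift a P).coeff (c - e) = 0
      · rw [h0]; exact Submodule.zero_mem _
      have hd : (shift a P).natDegree = c - e := by
        apply le_antisymm
        · rw [Polynomial.natDegree_le_iff_coeff_eq_zero]
          intro N hN
          exact hP2.2 () N (by dsimp only; omega)
        · exact Polynomial.le_natDegree_of_ne_zero h0
      have hl : (shift a P).coeff (c - e) = lead a P := by
        rw [lead, Polynomial.leadingCoeff, hd]
      refine ⟨(shift a P).coeff (c - e), shift_coeff_hom a hP2.1 _ _ (by omega), ?_⟩
      rw [hl]
      apply MvPolynomial.funext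
      intro x
      have := lead_invariant a P x (-(β ⬝ᵥ x))
      rw [AlgHom.toLinearMap_apply, eval_proj, sub_eq_add_neg, ← neg_smul, this])
    have h2 : U1 ⊓ LinearMap.ker φ = U ⊓ W (fun _ : Unit => a) c (fun _ => ((e + 1 : ℕ) : ℤ)) := by
      ext P
      simp only [hU1, Submodule.mem_inf, LinearMap.mem_ker, hφ]
      constructor
      · rintro ⟨⟨h1, h2⟩, h3⟩
        refine ⟨h1, h2.1, fun p j hj => ?_⟩
        by_cases hje : j = c - e
        · rw [hje]; exact h3
        · exact h2.2 () j (by push_cast at hj; dsimp only; omega)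
      · rintro ⟨h1, h2⟩
        exact ⟨⟨h1, h2.1, fun p j hj => h2.2 () j (by dsimp only at hj; push_cast; omega)⟩,
          h2.2 () (c - e) (by push_cast; omega)⟩
    rw [h2] at h1
    have h3 := finrank_proj_Sd_le hβ e
    have h4 : (e + 1 + 1).choose 2 = (e + 1).choose 2 + (e + 1) := by
      rw [Nat.choose_succ_succ' (e + 1) 1, Nat.choose_one_right]; ring
    omega

/-- The expected dimension is a lower bound for the dimension of `W`. -/
lemma finrank_W_ge {π : Type*} [Fintype π] {a : π → V3} (ha : ∀ p, a p ≠ 0) (c : ℕ) (e : π → ℕ)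
    (he : ∀ p, e p ≤ c) :
    (c + 2).choose 2 ≤ Module.finrank ℂ (W a c (fun p => (e p : ℤ))) + ∑ p, (e p + 1).choose 2 := by
  have key : ∀ s : Finset π, (c + 2).choose 2 ≤ Module.finrank ℂ
      (W (fun p : s => a p) c (fun p => (e p : ℤ))) + ∑ p ∈ s, (e p + 1).choose 2 := by
    intro s
    induction s using Finset.induction_on with
    | empty =>
      have : W (fun p : (∅ : Finset π) => a p) c (fun p => (e p : ℤ)) = Sd c :=
        le_antisymm (W_le _ _ _) fun P hP => ⟨hP, fun p => absurd p.2 (Finset.notMem_empty _)⟩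
      rw [this, finrank_Sd]; simp
    | insert p s hp ih =>
      have h1 := finrank_point_cond (ha p) c (e p) (he p) _
        (W_le (fun p : s => a p) c (fun p => (e p : ℤ)))
      have h2 : W (fun p : s => a p) c (fun p => (e p : ℤ)) ⊓
          W (fun _ : Unit => a p) c (fun _ => (e p : ℤ)) ≤
          W (fun q : (insert p s : Finset π) => a q) c (fun q => (e q : ℤ)) := by
        rintro P ⟨hP1, hP2⟩
        refine ⟨hP1.1, fun q j hj => ?_⟩
        obtain ⟨q, hq⟩ := q
        rcases Finset.mem_insert.1 hq with rfl | hq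
        · exact hP2.2 () j hj
        · exact hP1.2 ⟨q, hq⟩ j hj
      have h3 := Submodule.finrank_mono h2
      rw [Finset.sum_insert hp]
      omega
  have h1 := key univ
  have h2 : W (fun p : (univ : Finset π) => a p) c (fun p => (e p : ℤ)) ≤
      W a c (fun p => (e p : ℤ)) :=
    fun P hP => ⟨hP.1, fun p j hj => hP.2 ⟨p, Finset.mem_univ _⟩ j hj⟩
  have h3 := Submodule.finrank_mono h2
  omega

end Multinet

/-! ### Vector fields tangent to lines -/

namespace Multinet
open MvPolynomial

lemma proj_lin_eq (α w β : V3) : proj α w (lin β) = lin (β - (β ⬝ᵥ w) • α) := by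
  apply MvPolynomial.funext
  intro x
  simp only [eval_proj, eval_lin, dotProduct_sub, sub_dotProduct, smul_dotProduct, dotProduct_smul,
    smul_eq_mul]
  ring

lemma proj_proj {α w : V3} (h : α ⬝ᵥ w = 1) (P : S3) : proj α w (proj α w P) = proj α w P := by
  apply MvPolynomial.funext
  intro x
  simp [eval_proj, dotProduct_sub, h]

lemma lin_injective {α β : V3} (h : lin α = lin β) : α = β := by
  ext i
  simpa using congrArg (eval (Pi.single i 1)) h

lemma lin_add (α β : V3) : lin (α + β) = lin α + lin β := by
  simp [lin, add_mul, Finset.sum_add_distrib]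

lemma lin_dvd_lin {α β : V3} (hα : α ≠ 0) (h : lin α ∣ lin β) : ∃ c : ℂ, β = c • α := by
  obtain ⟨w, hw⟩ := exists_dual hα
  rw [lin_dvd_iff_proj hw, proj_lin_eq] at h
  refine ⟨β ⬝ᵥ w, ?_⟩
  have : lin (β - (β ⬝ᵥ w) • α) = lin 0 := by rw [h]; simp [lin]
  exact sub_eq_zero.1 (lin_injective this)

lemma span_two {b α β : V3} (hb : b ≠ 0) (hβ0 : β ≠ 0) (hαb : α ⬝ᵥ b = 0) (hβb : β ⬝ᵥ b = 0)
    (hne : ∀ c : ℂ, α ≠ c • β) (γ : V3) (hγ : γ ⬝ᵥ b = 0) : ∃ x y : ℂ, γ = x • α + y • β := by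
  rw [dotProduct_comm] at hαb hβb hγ
  obtain ⟨u, -, -, -, hco⟩ := plane_coords hb hβ0 hβb
  obtain ⟨x0, y0, h0⟩ := hco α hαb
  obtain ⟨x1, y1, h1⟩ := hco γ hγ
  have hx0 : x0 ≠ 0 := by
    rintro rfl
    exact hne y0 (by simpa using h0)
  refine ⟨x1 / x0, y1 - x1 / x0 * y0, ?_⟩
  rw [h1, h0, smul_add, smul_smul, smul_smul, div_mul_cancel₀ _ hx0, sub_smul]
  abel

/-- Products of powers of pairwise non-proportional linear forms divide as soon as each factor
does. -/
lemma prod_pow_lin_dvd {ι : Type*} (s : Finset ι) (α : ι → V3) (h0 : ∀ i ∈ s, α i ≠ 0)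
    (hne : ∀ i ∈ s, ∀ j ∈ s, i ≠ j → ∀ c : ℂ, α i ≠ c • α j) (e : ι → ℕ) {P : S3}
    (h : ∀ i ∈ s, lin (α i) ^ e i ∣ P) : ∏ i ∈ s, lin (α i) ^ e i ∣ P := by
  apply Finset.prod_dvd_of_isRelPrime _ h
  intro i hi j hj hij
  apply IsRelPrime.pow
  rw [(prime_lin (h0 i hi)).irreducible.isRelPrime_iff_not_dvd]
  intro hd
  obtain ⟨c, hc⟩ := lin_dvd_lin (h0 i hi) hd
  exact hne j hj i hi (Ne.symm hij) c hc

/-- Value of the vector field `θ` on the linear form `α`. -/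
noncomputable def der (θ : Fin 3 → S3) (α : V3) : S3 := ∑ i, C (α i) * θ i

lemma der_comb (θ : Fin 3 → S3) (x y : ℂ) (α β : V3) :
    der θ (x • α + y • β) = C x * der θ α + C y * der θ β := by
  simp only [der, Pi.add_apply, Pi.smul_apply, smul_eq_mul, map_add, map_mul, add_mul,
    Finset.sum_add_distrib, Finset.mul_sum, mul_assoc]

lemma lin_comb (x y : ℂ) (α β : V3) : lin (x • α + y • β) = C x * lin α + C y * lin β := by
  rw [lin_add, lin_smul, lin_smul]

/-- Vector fields with coefficients of degree `m`, tangent to the lines indexed by `A`. -/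
noncomputable def tangent {ι : Type*} (α : ι → V3) (m : ℕ) (A : Finset ι) :
    Submodule ℂ (Fin 3 → S3) where
  carrier := {θ | (∀ i, (θ i).IsHomogeneous m) ∧ ∀ l ∈ A, lin (α l) ∣ der θ (α l)}
  zero_mem' := ⟨fun i => isHomogeneous_zero _ _ _, fun l _ => by simp [der]⟩
  add_mem' := by
    rintro θ η ⟨h1, h2⟩ ⟨h3, h4⟩
    refine ⟨fun i => (h1 i).add (h3 i), fun l hl => ?_⟩
    have : der (θ + η) (α l) = der θ (α l) + der η (α l) := by
      simp [der, mul_add, Finset.sum_add_distrib]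
    rw [this]; exact dvd_add (h2 l hl) (h4 l hl)
  smul_mem' := by
    rintro r θ ⟨h1, h2⟩
    refine ⟨fun i => (Sd m).smul_mem r (h1 i), fun l hl => ?_⟩
    have : der (r • θ) (α l) = r • der θ (α l) := by
      simp [der, Finset.smul_sum]
    rw [this, smul_eq_C_mul]; exact (h2 l hl).mul_left _

/-- Without tangency conditions, a field is a triple of forms. -/
noncomputable def fieldsEquiv (m : ℕ) {ι : Type*} (α : ι → V3) :
    tangent α m ∅ ≃ₗ[ℂ] (Fin 3 → Sd m) where
  toFun θ := fun i => ⟨θ.1 i, θ.2.1 i⟩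
  invFun θ := ⟨fun i => θ i, fun i => (θ i).2, fun _ hl => absurd hl (Finset.notMem_empty _)⟩
  map_add' _ _ := rfl
  map_smul' _ _ := rfl
  left_inv _ := rfl
  right_inv _ := rfl

lemma tangent_mono {ι : Type*} (α : ι → V3) (m : ℕ) {A B : Finset ι} (h : A ⊆ B) :
    tangent α m B ≤ tangent α m A := fun _ hθ => ⟨hθ.1, fun l hl => hθ.2 l (h hl)⟩

lemma finrank_tangent_empty {ι : Type*} (α : ι → V3) (m : ℕ) :
    Module.finrank ℂ (tangent α m ∅) = 3 * (m + 2).choose 2 := by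
  rw [LinearEquiv.finrank_eq (fieldsEquiv m α), Module.finrank_pi_fintype]
  simp [finrank_Sd]

instance {ι : Type*} (α : ι → V3) (m : ℕ) (A : Finset ι) :
    FiniteDimensional ℂ (tangent α m A) := by
  have : FiniteDimensional ℂ (tangent α m ∅) :=
    Module.Finite.equiv (fieldsEquiv m α).symm
  exact Submodule.finiteDimensional_of_le (tangent_mono α m (Finset.empty_subset A))

/-- If a field is tangent to the lines of `B`, all passing through the point `b` of a further line
`l`, then the restriction to `l` of its value on `l` vanishes at `b` to order at least `|B| - 1`. -/
lemma tangent_local {ι : Type*} (α : ι → V3) (h0 : ∀ i, α i ≠ 0)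
    (hne : ∀ i j, i ≠ j → ∀ c : ℂ, α i ≠ c • α j) {b : V3} (hb : b ≠ 0) (B : Finset ι) {l : ι}
    (hlB : l ∉ B) (hlb : α l ⬝ᵥ b = 0) (hB : ∀ i ∈ B, α i ⬝ᵥ b = 0) {l1 : ι} (hl1 : l1 ∈ B)
    {θ : Fin 3 → S3} (hθ : ∀ i ∈ B, lin (α i) ∣ der θ (α i)) {w : V3} (hw : α l ⬝ᵥ w = 1) :
    proj (α l) w (lin (α l1)) ^ (B.card - 1) ∣ proj (α l) w (der θ (α l)) := by
  have hl1l : l1 ≠ l := fun h => hlB (h ▸ hl1)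
  have hexp : ∀ i ∈ B, ∃ x y : ℂ, α i = x • α l + y • α l1 := fun i hi =>
    span_two hb (h0 l1) hlb (hB l1 hl1) (hne l l1 (Ne.symm hl1l)) _ (hB i hi)
  choose! x y hxy using hexp
  have hy : ∀ i ∈ B, y i ≠ 0 := by
    intro i hi h
    apply hne i l (fun h => hlB (h ▸ hi)) (x i)
    have := hxy i hi
    rw [h] at this
    simpa using this
  have hdvd : ∀ i ∈ B, lin (α i) ^ 1 ∣ lin (α l1) * der θ (α l) - lin (α l) * der θ (α l1) := by
    intro i hi
    have h1 := hθ i hi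
    have h2 := hxy i hi
    have e1 : der θ (α i) = C (x i) * der θ (α l) + C (y i) * der θ (α l1) := by
      conv_lhs => rw [h2]
      rw [der_comb]
    have e2 : lin (α i) = C (x i) * lin (α l) + C (y i) * lin (α l1) := by
      conv_lhs => rw [h2]
      rw [lin_comb]
    have e3 : C (y i) * (lin (α l1) * der θ (α l) - lin (α l) * der θ (α l1))
        = lin (α i) * der θ (α l) - lin (α l) * der θ (α i) := by
      rw [e1, e2]; ring
    have hu : IsUnit (C (y i) : S3) := (hy i hi).isUnit.map C
    rw [pow_one, ← hu.dvd_mul_left, e3]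
    exact dvd_sub (Dvd.intro _ rfl) (h1.mul_left _)
  have h3 := prod_pow_lin_dvd B α (fun i _ => h0 i) (fun i _ j _ => hne i j) (fun _ => 1) hdvd
  have h4 := map_dvd (proj (α l) w) h3
  rw [map_sub, map_mul, map_mul, proj_lin hw, zero_mul, sub_zero, map_prod] at h4
  have h5 : ∀ i ∈ B, proj (α l) w (lin (α i) ^ 1) = C (y i) * proj (α l) w (lin (α l1)) := by
    intro i hi
    have e2 : lin (α i) = C (x i) * lin (α l) + C (y i) * lin (α l1) := by
      conv_lhs => rw [hxy i hi]
      rw [lin_comb]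
    rw [pow_one, e2, map_add, map_mul, map_mul, proj_lin hw, mul_zero, zero_add]
    congr 1
    simp [proj]
  rw [Finset.prod_congr rfl h5, Finset.prod_mul_distrib, Finset.prod_const] at h4
  have hu : IsUnit (∏ i ∈ B, (C (y i) : S3)) := by
    rw [← map_prod]
    exact (Finset.prod_ne_zero_iff.2 hy).isUnit.map C
  rw [hu.mul_left_dvd] at h4
  have hcard : B.card = B.card - 1 + 1 := by
    have := Finset.card_pos.2 ⟨l1, hl1⟩; omega
  rw [hcard, pow_succ'] at h4
  refine (mul_dvd_mul_iff_left ?_).1 h4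
  intro h6
  rw [← lin_dvd_iff_proj hw] at h6
  obtain ⟨c, hc⟩ := lin_dvd_lin (h0 l) h6
  exact hne _ _ hl1l c hc

end Multinet

/-! ### A lower bound for the dimension of the tangent fields -/

namespace Multinet
open MvPolynomial

/-- Two distinct lines have only one common point. -/
lemma meet_unique {α β b b' : V3} (hβ : β ≠ 0) (hne : ∀ c : ℂ, α ≠ c • β) (hb' : b' ≠ 0)
    (h1 : α ⬝ᵥ b = 0) (h2 : β ⬝ᵥ b = 0) (h3 : α ⬝ᵥ b' = 0) (h4 : β ⬝ᵥ b' = 0) :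
    ∃ c : ℂ, b = c • b' := by
  apply lin_dvd_lin hb'
  rw [lin_dvd_iff hb']
  intro x hx
  rw [dotProduct_comm] at hx
  obtain ⟨s, t, rfl⟩ := span_two hb' hβ h3 h4 hne x hx
  simp [eval_lin, dotProduct_comm b, add_dotProduct, h1, h2]

lemma choose_two_succ (n : ℕ) : (n + 1).choose 2 = n.choose 2 + n := by
  rw [Nat.choose_succ_succ' n 1, Nat.choose_one_right]; ring

/-- Lower bound for the dimension of the space of tangent vector fields of a given degree: each
line imposes at most `m + 1` conditions, and the conditions at a point where `r` lines meet are
dependent, with at least `(r - 1)(r - 2) / 2` relations. -/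
lemma tangent_lower {ι π : Type*} (α : ι → V3) (h0 : ∀ i, α i ≠ 0)
    (hne : ∀ i j, i ≠ j → ∀ c : ℂ, α i ≠ c • α j) (b : π → V3) (hb : ∀ p, b p ≠ 0)
    (hbne : ∀ p q, p ≠ q → ∀ c : ℂ, b p ≠ c • b q) (P : Finset π) (m : ℕ) (A : Finset ι)
    (hA : A.card ≤ m + 1) :
    3 * (m + 2).choose 2 + ∑ p ∈ P, ((A.filter (fun i => α i ⬝ᵥ b p = 0)).card - 1).choose 2
      ≤ Module.finrank ℂ (tangent α m A) + A.card * (m + 1) := by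
  induction A using Finset.induction_on with
  | empty => simp [finrank_tangent_empty]
  | insert l A hl ih =>
    rw [Finset.card_insert_of_notMem hl] at hA ⊢
    have ih := ih (by omega)
    obtain ⟨w, hw⟩ := exists_dual (h0 l)
    set Bp : π → Finset ι := fun p => A.filter (fun i => α i ⬝ᵥ b p = 0) with hBp
    set P0 := P.filter (fun p => α l ⬝ᵥ b p = 0 ∧ (Bp p).Nonempty) with hP0
    have hmem : ∀ p ∈ P0, α l ⬝ᵥ b p = 0 ∧ (Bp p).Nonempty := fun p hp => (Finset.mem_filter.1 hp).2
    have : Nonempty ι := ⟨l⟩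
    choose! l1 hl1 using fun p hp => (hmem p hp).2
    have hBmem : ∀ p i, i ∈ Bp p ↔ i ∈ A ∧ α i ⬝ᵥ b p = 0 := fun p i => Finset.mem_filter
    set β : π → V3 := fun p => α (l1 p) - (α (l1 p) ⬝ᵥ w) • α l with hβ
    have hl1l : ∀ p ∈ P0, l1 p ≠ l := fun p hp h => hl (h ▸ ((hBmem _ _).1 (hl1 p hp)).1)
    have hβl : ∀ p ∈ P0, ∀ c : ℂ, β p ≠ c • α l := by
      intro p hp c h
      apply hne _ _ (hl1l p hp) (c + α (l1 p) ⬝ᵥ w)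
      rw [add_smul, ← h, hβ]; simp
    have hβ0 : ∀ p ∈ P0, β p ≠ 0 := fun p hp h => hβl p hp 0 (by simpa using h)
    have hβb : ∀ p ∈ P0, β p ⬝ᵥ b p = 0 := by
      intro p hp
      simp [hβ, sub_dotProduct, (hmem p hp).1, ((hBmem _ _).1 (hl1 p hp)).2]
    have hββ : ∀ p ∈ P0, ∀ q ∈ P0, p ≠ q → ∀ c : ℂ, β p ≠ c • β q := by
      intro p hp q hq hpq c hc
      have : β p ⬝ᵥ b q = 0 := by rw [hc, smul_dotProduct, hβb q hq, smul_zero]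
      obtain ⟨c', hc'⟩ := meet_unique (h0 l) (hβl p hp) (hb q) (hβb p hp) (hmem p hp).1 this
        (hmem q hq).1
      exact hbne p q hpq c' hc'
    set δ := ∑ p ∈ P0, ((Bp p).card - 1) with hδ
    have hδle : δ ≤ A.card := by
      calc δ ≤ ∑ p ∈ P0, (Bp p).card := Finset.sum_le_sum fun p _ => Nat.sub_le _ _
        _ = (P0.biUnion Bp).card := by
          rw [Finset.card_biUnion]
          intro p hp q hq hpq
          rw [Function.onFun, Finset.disjoint_left]
          intro i hi hi'
          rw [hBmem] at hi hi'
          have hil : i ≠ l := fun h => hl (h ▸ hi.1)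
          obtain ⟨c', hc'⟩ := meet_unique (h0 l) (hne i l hil) (hb q) hi.2 (hmem p hp).1 hi'.2
            (hmem q hq).1
          exact hbne p q hpq c' hc'
        _ ≤ A.card := Finset.card_le_card (by
          intro i hi
          obtain ⟨p, -, hp⟩ := Finset.mem_biUnion.1 hi
          exact ((hBmem _ _).1 hp).1)
    have hcount : ∑ p ∈ P, (((insert l A).filter (fun i => α i ⬝ᵥ b p = 0)).card - 1).choose 2
        = ∑ p ∈ P, ((Bp p).card - 1).choose 2 + δ := by
      rw [hδ, hP0, Finset.sum_filter, ← Finset.sum_add_distrib]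
      apply Finset.sum_congr rfl
      intro p _
      rw [Finset.filter_insert]
      by_cases h : α l ⬝ᵥ b p = 0
      · rw [if_pos h, Finset.card_insert_of_notMem (fun h' => hl (Finset.mem_filter.1 h').1)]
        by_cases h' : (Bp p).Nonempty
        · rw [if_pos ⟨h, h'⟩]
          obtain ⟨x, hx⟩ : ∃ x, (Bp p).card = x + 1 := ⟨(Bp p).card - 1, by
            have := Finset.card_pos.2 h'; omega⟩
          change ((Bp p).card + 1 - 1).choose 2 = _
          rw [hx]
          exact choose_two_succ x
        · rw [if_neg (fun h'' => h' h''.2)]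
          rw [Finset.not_nonempty_iff_eq_empty] at h'
          change ((Bp p).card + 1 - 1).choose 2 = _
          rw [h']; simp
      · rw [if_neg h, if_neg (fun h'' => h h''.1), add_zero]
    rw [hcount]
    set D : S3 := ∏ p ∈ P0, lin (β p) ^ ((Bp p).card - 1) with hD
    have hD0 : D ≠ 0 := Finset.prod_ne_zero_iff.2 fun p hp => pow_ne_zero _ (lin_ne_zero (hβ0 p hp))
    have hDhom : D.IsHomogeneous δ := by
      rw [hD, hδ]
      apply IsHomogeneous.prod
      intro p hp
      simpa using (lin_hom (β p)).pow ((Bp p).card - 1)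
    have hDproj : proj (α l) w D = D := by
      rw [hD, map_prod]
      apply Finset.prod_congr rfl
      intro p hp
      rw [map_pow, hβ, ← proj_lin_eq, proj_proj hw]
    let φ : (Fin 3 → S3) →ₗ[ℂ] S3 :=
      { toFun := fun θ => proj (α l) w (der θ (α l))
        map_add' := by
          intro θ η
          simp [der, mul_add, Finset.sum_add_distrib]
        map_smul' := by
          intro r θ
          simp [der, Finset.smul_sum] }
    have hφ : ∀ θ, φ θ = proj (α l) w (der θ (α l)) := fun θ => rfl
    have h1 := finrank_le_ker_add (tangent α m A) φ
      (((Sd (m - δ)).map (proj (α l) w).toLinearMap).map (LinearMap.mulLeft ℂ D)) (by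
      intro θ hθ
      have hdvd : D ∣ φ θ := by
        apply prod_pow_lin_dvd P0 β hβ0 hββ
        intro p hp
        rw [hβ, ← proj_lin_eq]
        apply tangent_local α h0 hne (hb p) (Bp p) (fun h => hl ((hBmem _ _).1 h).1)
          (hmem p hp).1 (fun i hi => ((hBmem _ _).1 hi).2) (hl1 p hp)
          (fun i hi => hθ.2 i ((hBmem _ _).1 hi).1) hw
      obtain ⟨E, hE⟩ := hdvd
      have hhom : (φ θ).IsHomogeneous m := by
        apply proj_hom
        apply IsHomogeneous.sum
        intro i _
        exact (Sd m).smul_mem (α l i) (hθ.1 i) |> fun h => by rwa [smul_eq_C_mul] at h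
      rw [hE] at hhom ⊢
      rcases hom_quot hhom hDhom hD0 with h | ⟨h, h'⟩
      · rw [h, mul_zero]; exact Submodule.zero_mem _
      · refine ⟨E, ⟨E, h', ?_⟩, rfl⟩
        apply mul_left_cancel₀ hD0
        have : proj (α l) w (φ θ) = φ θ := proj_proj hw _
        rw [hE, map_mul, hDproj] at this
        exact this)
    have h2 : tangent α m A ⊓ LinearMap.ker φ ≤ tangent α m (insert l A) := by
      rintro θ ⟨hθ, hker⟩
      refine ⟨hθ.1, fun i hi => ?_⟩
      rcases Finset.mem_insert.1 hi with rfl | hi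
      · rw [lin_dvd_iff_proj hw]; exact hker
      · exact hθ.2 i hi
    have h3 := Submodule.finrank_mono h2
    rw [finrank_map_mulLeft hD0] at h1
    have h4 := finrank_proj_Sd_le hw (m - δ)
    have h5 : (A.card + 1) * (m + 1) = A.card * (m + 1) + (m + 1) := by ring
    change 3 * (m + 2).choose 2 + ∑ p ∈ P, ((Bp p).card - 1).choose 2 ≤ _ at ih
    omega

end Multinet

/-! ### Multinets in coordinates and their combinatorics -/

namespace Multinet
open MvPolynomial

/-- A multinet in coordinates: lines are given by covectors `α l`, the points of the base locus by
vectors `a p`, and the partition into `k` classes by the map `cls`. The fields `αne` and `ane` say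
that distinct indices give distinct lines and points; `h1`, `h2`, `h3`, `h4` are the axioms of a
multinet, and `hgcd` says that the multiplicities have no common factor. -/
structure MNet (ι π : Type*) [Fintype ι] [Fintype π] where
  α : ι → V3
  α0 : ∀ l, α l ≠ 0
  αne : ∀ l l', l ≠ l' → ∀ c : ℂ, α l ≠ c • α l'
  a : π → V3
  a0 : ∀ p, a p ≠ 0
  ane : ∀ p q, p ≠ q → ∀ c : ℂ, a p ≠ c • a q
  k : ℕ
  hk : 3 ≤ k
  d : ℕ
  cls : ι → Fin k
  surj : ∀ i, ∃ l, cls l = i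
  m : ι → ℕ
  mpos : ∀ l, 0 < m l
  n : π → ℕ
  h1 : ∀ i, ∑ l with cls l = i, m l = d
  h2 : ∀ l l', cls l ≠ cls l' → ∃ p, α l ⬝ᵥ a p = 0 ∧ α l' ⬝ᵥ a p = 0
  h3 : ∀ p i, ∑ l with cls l = i ∧ α l ⬝ᵥ a p = 0, m l = n p
  hex : ∀ p, ∃ l, α l ⬝ᵥ a p = 0
  h4 : ∀ l l', cls l = cls l' → Relation.ReflTransGen
    (fun x y => cls x = cls y ∧ x ≠ y ∧ ¬ ∃ p, α x ⬝ᵥ a p = 0 ∧ α y ⬝ᵥ a p = 0) l l'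
  hgcd : (univ : Finset ι).gcd m = 1

namespace MNet

variable {ι π : Type*} [Fintype ι] [Fintype π] (N : MNet ι π)

/-- The point `p` lies on the line `l`. -/
def on (l : ι) (p : π) : Prop := N.α l ⬝ᵥ N.a p = 0

/-- The number of lines through `p`. -/
noncomputable def r (p : π) : ℕ := #{l | N.on l p}

lemma npos (p : π) : 1 ≤ N.n p := by
  obtain ⟨l, hl⟩ := N.hex p
  rw [← N.h3 p (N.cls l)]
  calc 1 ≤ N.m l := N.mpos l
    _ ≤ _ := Finset.single_le_sum (f := N.m) (fun _ _ => Nat.zero_le _) (by simp [hl])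

lemma other (i : Fin N.k) : ∃ j, j ≠ i := by
  have := N.hk
  have : Nontrivial (Fin N.k) := Fin.nontrivial_iff_two_le.2 (by omega)
  exact exists_ne i

lemma dpos : 1 ≤ N.d := by
  obtain ⟨l, hl⟩ := N.surj ⟨0, by have := N.hk; omega⟩
  rw [← N.h1 (N.cls l)]
  calc 1 ≤ N.m l := N.mpos l
    _ ≤ _ := Finset.single_le_sum (f := N.m) (fun _ _ => Nat.zero_le _) (by simp)

lemma on_unique {l l' : ι} (h : l ≠ l') {p q : π} (h1 : N.on l p) (h2 : N.on l' p) (h3 : N.on l q)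
    (h4 : N.on l' q) : p = q := by
  by_contra hpq
  obtain ⟨c, hc⟩ := meet_unique (N.α0 l') (N.αne l l' h) (N.a0 q) h1 h2 h3 h4
  exact N.ane p q hpq c hc

/-- Number of base points common to `l` and `l'`. -/
noncomputable def com (l l' : ι) : ℕ := #{p | N.on l p ∧ N.on l' p}

lemma com_le {l l' : ι} (h : l ≠ l') : N.com l l' ≤ 1 := by
  rw [com, Finset.card_le_one]
  intro p hp q hq
  simp only [Finset.mem_filter, Finset.mem_univ, true_and] at hp hq
  exact N.on_unique h hp.1 hp.2 hq.1 hq.2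

lemma com_eq_one {l l' : ι} (h : N.cls l ≠ N.cls l') : N.com l l' = 1 := by
  apply le_antisymm (N.com_le (fun e => h (congrArg N.cls e)))
  obtain ⟨p, hp⟩ := N.h2 l l' h
  exact Finset.card_pos.2 ⟨p, Finset.mem_filter.2 ⟨Finset.mem_univ _, hp⟩⟩

lemma com_eq_zero {l l' : ι} (h : ¬ ∃ p, N.on l p ∧ N.on l' p) : N.com l l' = 0 := by
  rw [com, Finset.card_eq_zero, Finset.filter_eq_empty_iff]
  intro p _ hp
  exact h ⟨p, hp⟩

lemma com_comm (l l' : ι) : N.com l l' = N.com l' l := by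
  simp [com, and_comm]

lemma sum_m_com (l : ι) (i : Fin N.k) :
    ∑ l' with N.cls l' = i, N.m l' * N.com l l' = ∑ p with N.on l p, N.n p := by
  have : ∀ l', N.m l' * N.com l l' = ∑ p with N.on l p, if N.on l' p then N.m l' else 0 := by
    intro l'
    rw [com, Finset.card_eq_sum_ones, Finset.mul_sum, ← Finset.filter_filter, Finset.sum_filter]
    simp
  rw [Finset.sum_congr rfl (fun l' _ => this l'), Finset.sum_comm]
  apply Finset.sum_congr rfl
  intro p _
  rw [← N.h3 p i, ← Finset.sum_filter, Finset.filter_filter]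
  rfl

/-- The multiplicities `n` add up to `d` on each line. -/
lemma sum_n (l : ι) : ∑ p with N.on l p, N.n p = N.d := by
  obtain ⟨j, hj⟩ := N.other (N.cls l)
  rw [← N.sum_m_com l j, ← N.h1 j]
  apply Finset.sum_congr rfl
  intro l' hl'
  rw [N.com_eq_one, mul_one]
  intro h
  exact hj (by rw [h]; exact (Finset.mem_filter.1 hl').2.symm)

/-- Pairs `(c, e)` of a degree and multiplicities whose sum along every line equals the degree. -/
def Bal (c : ℤ) (e : π → ℤ) : Prop := ∀ l, ∑ p with N.on l p, e p = c

lemma bal_n : N.Bal N.d (fun p => N.n p) := fun l => by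
  have := N.sum_n l
  dsimp only
  exact_mod_cast this

variable {N}

lemma Bal.add {c c' : ℤ} {e e' : π → ℤ} (h : N.Bal c e) (h' : N.Bal c' e') :
    N.Bal (c + c') (fun p => e p + e' p) := fun l => by
  rw [Finset.sum_add_distrib, h l, h' l]

lemma Bal.smul {c : ℤ} {e : π → ℤ} (h : N.Bal c e) (x : ℤ) :
    N.Bal (x * c) (fun p => x * e p) := fun l => by
  rw [← Finset.mul_sum, h l]

lemma Bal.sub {c c' : ℤ} {e e' : π → ℤ} (h : N.Bal c e) (h' : N.Bal c' e') :
    N.Bal (c - c') (fun p => e p - e' p) := fun l => by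
  rw [Finset.sum_sub_distrib, h l, h' l]

lemma Bal.sum_mul_n {c : ℤ} {e : π → ℤ} (h : N.Bal c e) : ∑ p, N.n p * e p = N.d * c := by
  obtain ⟨i, -⟩ := N.other ⟨0, by have := N.hk; omega⟩
  have h3 : ∀ p, (N.n p : ℤ) * e p = ∑ l with N.cls l = i, if N.on l p then N.m l * e p else 0 := by
    intro p
    rw [← N.h3 p i, ← Finset.sum_filter, Finset.filter_filter, Nat.cast_sum, Finset.sum_mul]
    rfl
  rw [Finset.sum_congr rfl (fun p _ => h3 p), Finset.sum_comm, ← N.h1 i, Nat.cast_sum,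
    Finset.sum_mul]
  apply Finset.sum_congr rfl
  intro l _
  rw [← Finset.sum_filter, ← Finset.mul_sum, h l]

lemma Bal.sum_mul_r {c : ℤ} {e : π → ℤ} (h : N.Bal c e) :
    ∑ p, N.r p * e p = Fintype.card ι * c := by
  have h3 : ∀ p, (N.r p : ℤ) * e p = ∑ l, if N.on l p then e p else 0 := by
    intro p
    rw [← Finset.sum_filter, Finset.sum_const, r]
    simp
  rw [Finset.sum_congr rfl (fun p _ => h3 p), Finset.sum_comm, Finset.sum_congr rfl
    (fun l _ => by rw [← Finset.sum_filter, h l]), Finset.sum_const, Finset.card_univ, nsmul_eq_mul]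

variable (N)

lemma sum_m_b (l : ι) (i : Fin N.k) :
    ∑ l' with N.cls l' = i, (N.m l' : ℚ) * (1 - N.com l l') = 0 := by
  have h1 := N.sum_m_com l i
  rw [N.sum_n, ← N.h1 i] at h1
  have h2 : (∑ l' with N.cls l' = i, (N.m l' : ℚ) * N.com l l')
    = ∑ l' with N.cls l' = i, (N.m l' : ℚ) := by exact_mod_cast h1
  simp only [mul_sub, mul_one, Finset.sum_sub_distrib, h2, sub_self]

/-- A Perron–Frobenius argument: up to scaling, `m` is the only solution of the inequalities
attached to the intersection pattern of a class. -/
lemma perron (i : Fin N.k) (c : ι → ℚ)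
    (h : ∀ l, N.cls l = i → ∑ l' with N.cls l' = i, c l' * (1 - N.com l l') ≤ 0) :
    (∀ l, N.cls l = i → ∑ l' with N.cls l' = i, c l' * (1 - N.com l l') = 0) ∧
    ∀ l l', N.cls l = i → N.cls l' = i → c l * N.m l' = c l' * N.m l := by
  have hz : ∀ l, N.cls l = i → ∑ l' with N.cls l' = i, c l' * (1 - (N.com l l' : ℚ)) = 0 := by
    have h0 : ∑ l with N.cls l = i, (N.m l : ℚ) *
        ∑ l' with N.cls l' = i, c l' * (1 - (N.com l l' : ℚ)) = 0 := by
      simp only [Finset.mul_sum]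
      rw [Finset.sum_comm]
      apply Finset.sum_eq_zero
      intro l' hl'
      have := N.sum_m_b l' i
      calc _ = c l' * ∑ l with N.cls l = i, (N.m l : ℚ) * (1 - N.com l' l) := by
            rw [Finset.mul_sum]
            apply Finset.sum_congr rfl
            intro l _
            rw [N.com_comm]; ring
        _ = 0 := by rw [this, mul_zero]
    have h0' := (Finset.sum_eq_zero_iff_of_nonpos (fun l hl =>
      mul_nonpos_of_nonneg_of_nonpos (Nat.cast_nonneg _) (h l (Finset.mem_filter.1 hl).2))).1 h0
    intro l hl
    have h1 := h0' l (by simp [hl])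
    have h2 : (N.m l : ℚ) ≠ 0 := by exact_mod_cast (N.mpos l).ne'
    exact (mul_eq_zero.1 h1).resolve_left h2
  refine ⟨hz, ?_⟩
  obtain ⟨l0, hl0, hmax⟩ := Finset.exists_max_image (univ.filter (fun l => N.cls l = i))
    (fun l => c l / N.m l) (by obtain ⟨l, hl⟩ := N.surj i; exact ⟨l, by simp [hl]⟩)
  have hl0 : N.cls l0 = i := by simpa using hl0
  have mpos : ∀ l, (0 : ℚ) < N.m l := fun l => by exact_mod_cast N.mpos l
  let u : ι → ℚ := fun l => c l0 * N.m l - c l * N.m l0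
  have hu : ∀ l, N.cls l = i → 0 ≤ u l := by
    intro l hl
    have := hmax l (by simp [hl])
    rw [div_le_div_iff₀ (mpos _) (mpos _)] at this
    simp only [u]; linarith
  have hsum : ∀ l, N.cls l = i → ∑ l' with N.cls l' = i, u l' * (1 - (N.com l l' : ℚ)) = 0 := by
    intro l hl
    have e : ∀ l', u l' * (1 - (N.com l l' : ℚ)) = c l0 * (N.m l' * (1 - (N.com l l' : ℚ)))
        - N.m l0 * (c l' * (1 - (N.com l l' : ℚ))) := fun l' => by simp only [u]; ring
    simp only [e, Finset.sum_sub_distrib, ← Finset.mul_sum, N.sum_m_b, hz l hl]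
    simp
  have hstep : ∀ x y, N.cls x = i → N.cls y = i → u x = 0 → x ≠ y →
      (¬ ∃ p, N.on x p ∧ N.on y p) → u y = 0 := by
    intro x y hx hy hux hxy hp
    have h1 := (Finset.sum_eq_zero_iff_of_nonneg (fun l' hl' => ?_)).1 (hsum x hx) y (by simp [hy])
    · rw [N.com_eq_zero hp] at h1
      simpa using h1
    · by_cases e : x = l'
      · rw [← e, hux, zero_mul]
      · apply mul_nonneg (hu _ (Finset.mem_filter.1 hl').2)
        have : (N.com x l' : ℚ) ≤ 1 := by exact_mod_cast N.com_le e
        linarith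
  have hall : ∀ l, N.cls l = i → u l = 0 := by
    intro l hl
    have hch := N.h4 l0 l (by rw [hl, hl0])
    have : N.cls l = i ∧ u l = 0 := by
      induction hch with
      | refl => exact ⟨hl0, by simp [u]⟩
      | tail _ hbc ih =>
        have hb := ih (by rw [hbc.1, hl])
        exact ⟨hl, hstep _ _ hb.1 hl hb.2 hbc.2.1 hbc.2.2⟩
    exact this.2
  intro l l' hl hl'
  have e1 := hall l hl
  have e2 := hall l' hl'
  simp only [u] at e1 e2
  have := (mpos l0).ne'
  apply mul_left_cancel₀ this
  linear_combination (-(N.m l' : ℚ)) * e1 + (N.m l : ℚ) * e2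

/-- The lines impose enough relations to bound their number by `#X + k - 1`. -/
lemma rank_bound : Fintype.card ι + 1 ≤ Fintype.card π + N.k := by
  let T : (ι → ℚ) →ₗ[ℚ] (ℚ × (π → ℚ)) :=
    { toFun := fun c => (∑ l, c l, fun p => ∑ l with N.on l p, c l)
      map_add' := by
        intro c c'
        ext <;> simp [Finset.sum_add_distrib]
      map_smul' := by
        intro x c
        ext <;> simp [Finset.mul_sum] }
  let F : (ℚ × (π → ℚ)) →ₗ[ℚ] ℚ :=
    { toFun := fun x => N.d * x.1 - ∑ p, N.n p * x.2 p
      map_add' := by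
        intro x y
        simp only [Prod.fst_add, Prod.snd_add, Pi.add_apply, mul_add, Finset.sum_add_distrib]; ring
      map_smul' := by
        intro t x
        simp only [Prod.smul_fst, Prod.smul_snd, Pi.smul_apply, smul_eq_mul, RingHom.id_apply,
          mul_sub, Finset.mul_sum]
        congr 1
        · ring
        · exact Finset.sum_congr rfl fun p _ => by ring }
  have hd : (N.d : ℚ) ≠ 0 := by have := N.dpos; exact_mod_cast (by omega : N.d ≠ 0)
  have hF : F ≠ 0 := by
    intro h
    have := congrArg (fun f => f (1, 0)) h
    simp [F, hd] at this
  have hFT : LinearMap.range T ≤ LinearMap.ker F := by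
    rintro _ ⟨c, rfl⟩
    rw [LinearMap.mem_ker]
    simp only [T, F, LinearMap.coe_mk, AddHom.coe_mk, Finset.mul_sum]
    rw [sub_eq_zero]
    simp only [Finset.sum_filter]
    rw [Finset.sum_comm]
    apply Finset.sum_congr rfl
    intro l _
    rw [← Finset.sum_filter, ← Finset.sum_mul]
    congr 1
    exact_mod_cast (N.sum_n l).symm
  choose rep hrep using N.surj
  let Λ : (ι → ℚ) →ₗ[ℚ] (Fin N.k → ℚ) :=
    { toFun := fun c i => c (rep i) / N.m (rep i)
      map_add' := by intro c c'; ext; simp [add_div]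
      map_smul' := by intro t c; ext; simp [mul_div_assoc] }
  let sm : (Fin N.k → ℚ) →ₗ[ℚ] ℚ := ∑ i, LinearMap.proj i
  have hsm : sm ≠ 0 := by
    intro h
    have := congrArg (fun f => f (Pi.single ⟨0, by have := N.hk; omega⟩ 1)) h
    simp [sm] at this
  have hker : ∀ c ∈ LinearMap.ker T, ∀ l, c l = Λ c (N.cls l) * N.m l := by
    intro c hc l
    rw [LinearMap.mem_ker] at hc
    have hc1 : ∑ l, c l = 0 := congrArg Prod.fst hc
    have hc2 : ∀ p, ∑ l with N.on l p, c l = 0 := fun p => congrFun (congrArg Prod.snd hc) p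
    have h3 : ∀ l, ∑ l', c l' * (1 - (N.com l l' : ℚ)) = 0 := by
      intro l
      simp only [mul_sub, mul_one, Finset.sum_sub_distrib, hc1, zero_sub, neg_eq_zero]
      have : ∀ l', c l' * (N.com l l' : ℚ) = ∑ p with N.on l p, if N.on l' p then c l' else 0 := by
        intro l'
        rw [com, ← Finset.filter_filter, ← Finset.sum_filter, Finset.sum_const, nsmul_eq_mul,
          mul_comm]
      rw [Finset.sum_congr rfl (fun l' _ => this l'), Finset.sum_comm]
      apply Finset.sum_eq_zero
      intro p _
      rw [← Finset.sum_filter]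
      exact hc2 p
    have h4 := (N.perron (N.cls l) c (by
      intro l1 hl1
      apply le_of_eq
      rw [← h3 l1, Finset.sum_filter]
      apply Finset.sum_congr rfl
      intro l' _
      split_ifs with e
      · rfl
      · rw [N.com_eq_one (by rw [hl1]; exact fun h => e h.symm)]; simp)).2 l (rep (N.cls l)) rfl
        (hrep _)
    have mpos : ∀ l, (N.m l : ℚ) ≠ 0 := fun l => by exact_mod_cast (N.mpos l).ne'
    simp only [Λ, LinearMap.coe_mk, AddHom.coe_mk]
    field_simp [mpos]
    exact h4
  have e1 : Module.finrank ℚ (LinearMap.ker T) + 1 ≤ N.k := by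
    have h5 : ∀ c ∈ LinearMap.ker T, Λ c ∈ LinearMap.ker sm := by
      intro c hc
      have hc1 : ∑ l, c l = 0 := congrArg Prod.fst (LinearMap.mem_ker.1 hc)
      rw [LinearMap.mem_ker]
      have h6 : ∑ l, c l = ∑ i, Λ c i * N.d := by
        rw [← Finset.sum_fiberwise univ N.cls c]
        apply Finset.sum_congr rfl
        intro i _
        rw [← N.h1 i, Nat.cast_sum, Finset.mul_sum]
        apply Finset.sum_congr rfl
        intro l hl
        rw [hker c hc l, (Finset.mem_filter.1 hl).2]
      rw [hc1, ← Finset.sum_mul] at h6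
      have := (mul_eq_zero.1 h6.symm).resolve_right hd
      simpa [sm] using this
    have h6 := LinearMap.finrank_le_finrank_of_injective
      (f := Λ.restrict (p := LinearMap.ker T) (q := LinearMap.ker sm) h5) (by
      intro x y hxy
      apply Subtype.ext
      funext l
      have := congrArg Subtype.val hxy
      simp only [LinearMap.coe_restrict_apply] at this
      rw [hker _ x.2 l, hker _ y.2 l, this])
    have h7 := Module.Dual.finrank_ker_add_one_of_ne_zero (f := sm) hsm
    simp at h7
    omega
  have e2 := LinearMap.finrank_range_add_finrank_ker T
  have e3 := Submodule.finrank_mono hFT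
  have e4 := Module.Dual.finrank_ker_add_one_of_ne_zero (f := F) hF
  simp at e2 e4
  omega

end MNet
end Multinet

/-! ### Forms with balanced multiplicities and the forms attached to the classes -/

namespace Multinet
open MvPolynomial

lemma W_mul {π : Type*} {a : π → V3} {c c' : ℕ} {f f' : π → ℤ} {P P' : S3}
    (hP : P ∈ W a c f) (hP' : P' ∈ W a c' f') : P * P' ∈ W a (c + c') (fun p => f p + f' p) := by
  by_cases h0 : P = 0
  · rw [h0, zero_mul]; exact Submodule.zero_mem _
  by_cases h0' : P' = 0
  · rw [h0', mul_zero]; exact Submodule.zero_mem _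
  rw [mem_W h0] at hP
  rw [mem_W h0'] at hP'
  rw [mem_W (mul_ne_zero h0 h0')]
  refine ⟨hP.1.mul hP'.1, fun p => ?_⟩
  rw [dg_mul _ h0 h0']
  have := hP.2 p
  have := hP'.2 p
  push_cast; omega

lemma W_congr {π : Type*} {a : π → V3} {c c' : ℕ} {f f' : π → ℤ} (hc : c = c')
    (hf : ∀ p, f p = f' p) {P : S3} (hP : P ∈ W a c f) : P ∈ W a c' f' := by
  subst hc
  rwa [show f' = f from funext fun p => (hf p).symm]

lemma W_pow {π : Type*} {a : π → V3} {c : ℕ} {f : π → ℤ} {P : S3}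
    (hP : P ∈ W a c f) (k : ℕ) : P ^ k ∈ W a (k * c) (fun p => k * f p) := by
  induction k with
  | zero =>
    rw [pow_zero, mem_W one_ne_zero]
    exact ⟨by simpa using isHomogeneous_one _ _, fun p => by simp [dg_one]⟩
  | succ k ih =>
    rw [pow_succ]
    exact W_congr (by ring) (fun p => by push_cast; ring) (W_mul ih hP)

lemma W_quot {π : Type*} {a : π → V3} {c b : ℕ} {f e : π → ℤ} {A B : S3}
    (h : A * B ∈ W a c f) (hA : A.IsHomogeneous b) (hA0 : A ≠ 0)
    (hdg : ∀ p, (dg (a p) A : ℤ) + e p = b) :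
    B = 0 ∨ b ≤ c ∧ B ∈ W a (c - b) (fun p => f p - e p) := by
  by_cases hB : B = 0
  · exact Or.inl hB
  right
  rw [mem_W (mul_ne_zero hA0 hB)] at h
  rcases hom_quot h.1 hA hA0 with h1 | ⟨h1, h2⟩
  · exact absurd h1 hB
  refine ⟨h1, (mem_W hB).2 ⟨h2, fun p => ?_⟩⟩
  have h3 := h.2 p
  rw [dg_mul _ hA0 hB] at h3
  have := hdg p
  push_cast at h3 ⊢
  rw [Nat.cast_sub h1]
  omega

lemma exists_common (α β : V3) : ∃ b : V3, b ≠ 0 ∧ α ⬝ᵥ b = 0 ∧ β ⬝ᵥ b = 0 := by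
  let f : V3 →ₗ[ℂ] (Fin 2 → ℂ) :=
    { toFun := fun b => ![α ⬝ᵥ b, β ⬝ᵥ b]
      map_add' := by intro x y; simp [dotProduct_add]
      map_smul' := by intro x y; simp [dotProduct_smul] }
  have h1 := LinearMap.ker_ne_bot_of_finrank_lt (f := f) (by simp)
  obtain ⟨b, hb, hb0⟩ := Submodule.exists_mem_ne_zero_of_ne_bot h1
  rw [LinearMap.mem_ker] at hb
  exact ⟨b, hb0, by simpa [f] using congrFun hb 0, by simpa [f] using congrFun hb 1⟩

/-- A line contains a point different from finitely many given ones. -/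
lemma exists_generic {π : Type*} [Fintype π] (a : π → V3) {α : V3} (hα : α ≠ 0) :
    ∃ y : V3, y ≠ 0 ∧ α ⬝ᵥ y = 0 ∧ ∀ p (c : ℂ), y ≠ c • a p := by
  obtain ⟨v, hv0, hv, -⟩ := exists_common α α
  obtain ⟨u, hu, hu0, huv, -⟩ := plane_coords hα hv0 hv
  have hfin : (⋃ p, {s : ℂ | ∃ c : ℂ, u + s • v = c • a p}).Finite := by
    apply Set.finite_iUnion
    intro p
    apply Set.Subsingleton.finite
    rintro s ⟨c, hc⟩ t ⟨e, he⟩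
    have hne : ∀ s, u + s • v ≠ 0 := fun s h => huv (-s) (by
      rw [neg_smul]; exact eq_neg_of_add_eq_zero_left h)
    by_contra hst
    have h1 : (s - t) • v = (c - e) • a p := by
      rw [sub_smul, sub_smul, ← hc, ← he]; abel
    have h2 : v = ((s - t)⁻¹ * (c - e)) • a p := by
      rw [mul_smul, ← h1, smul_smul, inv_mul_cancel₀ (sub_ne_zero.2 hst), one_smul]
    have h3 : c - e ≠ 0 := by
      intro h
      rw [h, mul_zero, zero_smul] at h2
      exact hv0 h2
    have h4 : a p = ((c - e)⁻¹ * (s - t)) • v := by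
      rw [mul_smul, h1, smul_smul, inv_mul_cancel₀ h3, one_smul]
    apply huv (c * ((c - e)⁻¹ * (s - t)) - s)
    rw [sub_smul, mul_smul, ← h4, ← hc]; abel
  obtain ⟨s, hs⟩ := hfin.infinite_compl.nonempty
  refine ⟨u + s • v, ?_, ?_, ?_⟩
  · intro h
    exact huv (-s) (by rw [neg_smul]; exact eq_neg_of_add_eq_zero_left h)
  · simp [dotProduct_add, hu, hv]
  · intro p c h
    apply hs
    rw [Set.mem_iUnion]
    exact ⟨p, c, h⟩

namespace MNet

variable {ι π : Type*} [Fintype ι] [Fintype π] (N : MNet ι π)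

/-- If a form satisfying a balanced system of multiplicities vanishes at a further point of a
line, then it vanishes on the line. -/
lemma dvd_of_eval {c : ℕ} {f : π → ℤ} (hb : N.Bal c f) {P : S3} (hP : P ∈ W N.a c f) {l : ι}
    {y : V3} (hy0 : y ≠ 0) (hy : N.α l ⬝ᵥ y = 0) (hyX : ∀ p (t : ℂ), y ≠ t • N.a p)
    (h : eval y P = 0) : lin (N.α l) ∣ P := by
  by_contra hnd
  have hP0 : P ≠ 0 := fun h0 => hnd (h0 ▸ dvd_zero _)
  rw [mem_W hP0] at hP
  have hc : 0 < c := by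
    rcases Nat.eq_zero_or_pos c with rfl | hc
    · exfalso
      have h1 := (totalDegree_zero_iff_isHomogeneous _).2 hP.1
      rw [totalDegree_eq_zero_iff_eq_C] at h1
      rw [h1, eval_C] at h
      rw [h, C_0] at h1
      exact hP0 h1
    · exact hc
  have h1 := bezout_line (insertNone (univ.filter (fun p => N.on l p)))
    (fun o : Option π => o.elim y N.a) (N.α0 l) ?_ ?_ ?_ hP.1 hnd
  · rw [Finset.sum_insertNone] at h1
    have h2 := dg_lt_of_eval_eq hP.1 hc h
    have h3 : ∑ p with N.on l p, f p ≤ ((∑ p with N.on l p, (c - dg (N.a p) P) : ℕ) : ℤ) := by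
      push_cast
      apply Finset.sum_le_sum
      intro p _
      have := hP.2 p
      omega
    rw [hb l] at h3
    simp only [Option.elim] at h1
    omega
  · rintro (_ | p) _
    · exact hy0
    · exact N.a0 p
  · rintro (_ | p) hp
    · exact hy
    · exact (Finset.mem_filter.1 (Finset.some_mem_insertNone.1 hp)).2
  · rintro (_ | p) hp (_ | q) hq hpq t
    · exact absurd rfl hpq
    · exact hyX q t
    · intro h
      have h : N.a p = t • y := h
      have ht : t ≠ 0 := by rintro rfl; rw [zero_smul] at h; exact N.a0 p h
      exact hyX p t⁻¹ (by rw [h, smul_smul, inv_mul_cancel₀ ht, one_smul])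
    · exact N.ane p q (fun h => hpq (by rw [h])) t

/-- Product of powers of the lines in the class `i`. -/
noncomputable def pr (i : Fin N.k) (e : ι → ℕ) : S3 := ∏ l with N.cls l = i, lin (N.α l) ^ e l

lemma pr_ne_zero (i : Fin N.k) (e : ι → ℕ) : N.pr i e ≠ 0 :=
  Finset.prod_ne_zero_iff.2 fun l _ => pow_ne_zero _ (lin_ne_zero (N.α0 l))

lemma pr_hom (i : Fin N.k) (e : ι → ℕ) :
    (N.pr i e).IsHomogeneous (∑ l with N.cls l = i, e l) := by
  apply IsHomogeneous.prod
  intro l _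
  simpa using (lin_hom (N.α l)).pow (e l)

lemma pr_dg (i : Fin N.k) (e : ι → ℕ) (p : π) :
    dg (N.a p) (N.pr i e) + ∑ l with N.cls l = i ∧ N.on l p, e l = ∑ l with N.cls l = i, e l := by
  rw [pr, dg_prod _ _ _ (fun l _ => pow_ne_zero _ (lin_ne_zero (N.α0 l))), ← Finset.filter_filter,
    Finset.sum_filter _ e, ← Finset.sum_add_distrib]
  apply Finset.sum_congr rfl
  intro l _
  rw [dg_pow _ (lin_ne_zero (N.α0 l))]
  split_ifs with h
  · rw [dg_lin_of_mem h]; simp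
  · rw [dg_lin_of_notMem h]; simp

/-- The gcd of the multiplicities in a class. -/
noncomputable def g (i : Fin N.k) : ℕ := (univ.filter (fun l => N.cls l = i)).gcd N.m

/-- Multiplicities divided by the gcd of their class. -/
noncomputable def mt (l : ι) : ℕ := N.m l / N.g (N.cls l)

lemma g_mul_mt (l : ι) : N.g (N.cls l) * N.mt l = N.m l :=
  Nat.mul_div_cancel' (Finset.gcd_dvd (by simp))

lemma g_pos (i : Fin N.k) : 0 < N.g i := by
  obtain ⟨l, rfl⟩ := N.surj i
  have := N.mpos l
  rw [← N.g_mul_mt l] at this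
  exact Nat.pos_of_mul_pos_right this

lemma mt_pos (l : ι) : 0 < N.mt l := by
  have := N.mpos l
  rw [← N.g_mul_mt l] at this
  exact Nat.pos_of_mul_pos_left this

lemma gcd_mt (i : Fin N.k) : (univ.filter (fun l => N.cls l = i)).gcd N.mt = 1 := by
  have h : (univ.filter (fun l => N.cls l = i)).gcd (fun l => N.g i * N.mt l) = N.g i := by
    conv_rhs => rw [g]
    apply Finset.gcd_congr rfl
    intro l hl
    rw [← N.g_mul_mt l, (Finset.mem_filter.1 hl).2]
  rw [Finset.gcd_mul_left] at h
  have := N.g_pos i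
  simp only [normalize_eq] at h
  exact (Nat.mul_eq_left (by omega)).1 h

/-- The primitive root of the form attached to the class `i`. -/
noncomputable def R (i : Fin N.k) : S3 := N.pr i N.mt

/-- The form attached to the class `i`. -/
noncomputable def Q (i : Fin N.k) : S3 := N.pr i N.m

/-- The degree of `R i`. -/
noncomputable def rho (i : Fin N.k) : ℕ := ∑ l with N.cls l = i, N.mt l

/-- The multiplicity of `R i` at the base point `p`. -/
noncomputable def nt (i : Fin N.k) (p : π) : ℕ := ∑ l with N.cls l = i ∧ N.on l p, N.mt l

lemma R_pow (i : Fin N.k) : N.R i ^ N.g i = N.Q i := by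
  rw [R, Q, pr, pr, ← Finset.prod_pow]
  apply Finset.prod_congr rfl
  intro l hl
  rw [← pow_mul, ← N.g_mul_mt l, (Finset.mem_filter.1 hl).2, mul_comm]

lemma R_ne_zero (i : Fin N.k) : N.R i ≠ 0 := N.pr_ne_zero _ _
lemma Q_ne_zero (i : Fin N.k) : N.Q i ≠ 0 := N.pr_ne_zero _ _
lemma R_hom (i : Fin N.k) : (N.R i).IsHomogeneous (N.rho i) := N.pr_hom _ _
lemma Q_hom (i : Fin N.k) : (N.Q i).IsHomogeneous N.d := by rw [← N.h1 i]; exact N.pr_hom _ _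
lemma R_dg (i : Fin N.k) (p : π) : (dg (N.a p) (N.R i) : ℤ) + N.nt i p = N.rho i := by
  exact_mod_cast N.pr_dg i N.mt p
lemma Q_dg (i : Fin N.k) (p : π) : (dg (N.a p) (N.Q i) : ℤ) + N.n p = N.d := by
  have h := N.pr_dg i N.m p
  rw [N.h1] at h
  have h' : ∑ l with N.cls l = i ∧ N.on l p, N.m l = N.n p := N.h3 p i
  rw [h'] at h
  exact_mod_cast h

lemma Q_mem (i : Fin N.k) : N.Q i ∈ W N.a N.d (fun p => N.n p) :=
  (mem_W (N.Q_ne_zero i)).2 ⟨N.Q_hom i, fun p => (N.Q_dg i p).le⟩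

lemma g_mul_rho (i : Fin N.k) : N.g i * N.rho i = N.d := by
  rw [rho, Finset.mul_sum, ← N.h1 i]
  apply Finset.sum_congr rfl
  intro l hl
  rw [← N.g_mul_mt l, (Finset.mem_filter.1 hl).2]

lemma rho_pos (i : Fin N.k) : 0 < N.rho i := by
  have := N.dpos
  rw [← N.g_mul_rho i] at this
  exact Nat.pos_of_mul_pos_left this

lemma g_mul_nt (i : Fin N.k) (p : π) : N.g i * N.nt i p = N.n p := by
  rw [nt, Finset.mul_sum, ← N.h3 p i]
  apply Finset.sum_congr rfl
  intro l hl
  rw [← N.g_mul_mt l, (Finset.mem_filter.1 hl).2.1]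

lemma bal_nt (i : Fin N.k) : N.Bal (N.rho i) (fun p => N.nt i p) := by
  intro l
  have h := N.sum_n l
  rw [← N.g_mul_rho i, Finset.sum_congr rfl (fun p _ => (N.g_mul_nt i p).symm),
    ← Finset.mul_sum] at h
  have := Nat.eq_of_mul_eq_mul_left (N.g_pos i) h
  dsimp only
  exact_mod_cast this

/-- A natural vector proportional to `m` on a class is a multiple of the primitive one. -/
lemma proportional (i : Fin N.k) (e : ι → ℕ)
    (h : ∀ l l', N.cls l = i → N.cls l' = i → e l * N.m l' = e l' * N.m l) :
    ∃ o, ∀ l, N.cls l = i → e l = o * N.mt l := by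
  have h' : ∀ l l', N.cls l = i → N.cls l' = i → e l * N.mt l' = e l' * N.mt l := by
    intro l l' hl hl'
    have := h l l' hl hl'
    rw [← N.g_mul_mt l, ← N.g_mul_mt l', hl, hl'] at this
    apply Nat.eq_of_mul_eq_mul_left (N.g_pos i)
    linarith
  have hd : ∀ l, N.cls l = i → N.mt l ∣ e l := by
    intro l hl
    have h1 : N.mt l ∣ (univ.filter (fun l => N.cls l = i)).gcd (fun l' => e l * N.mt l') := by
      apply Finset.dvd_gcd
      intro l' hl'
      rw [h' l l' hl (Finset.mem_filter.1 hl').2]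
      exact Dvd.intro_left _ rfl
    rw [Finset.gcd_mul_left, N.gcd_mt] at h1
    simpa using h1
  obtain ⟨l0, hl0⟩ := N.surj i
  obtain ⟨o, ho⟩ := hd l0 hl0
  refine ⟨o, fun l hl => ?_⟩
  have h1 := h' l l0 hl hl0
  apply Nat.eq_of_mul_eq_mul_right (N.mt_pos l0)
  rw [h1, ho]; ring

/-- If one line of a class divides a form satisfying a balanced system of multiplicities, then so
does the primitive form `R i` of the class. -/
lemma R_dvd {c : ℕ} {f : π → ℤ} (hb : N.Bal c f) {P : S3} (hP : P ∈ W N.a c f) {l : ι}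
    (hl : lin (N.α l) ∣ P) : N.R (N.cls l) ∣ P := by
  by_cases hP0 : P = 0
  · rw [hP0]; exact dvd_zero _
  set i := N.cls l with hi
  have hfin : ∀ l, FiniteMultiplicity (lin (N.α l)) P := fun l =>
    FiniteMultiplicity.of_prime_left (prime_lin (N.α0 l)) hP0
  let e : ι → ℕ := fun l => multiplicity (lin (N.α l)) P
  have hdvd : N.pr i e ∣ P := by
    apply prod_pow_lin_dvd _ N.α (fun l _ => N.α0 l) (fun l _ l' _ => N.αne l l')
    intro l _
    exact pow_multiplicity_dvd _ _
  obtain ⟨P', hP'⟩ := hdvd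
  have hnd : ∀ l', N.cls l' = i → ¬ lin (N.α l') ∣ P' := by
    intro l' hl' hd
    have h1 : lin (N.α l') ^ (e l' + 1) ∣ P := by
      rw [hP', pow_succ]
      exact mul_dvd_mul (Finset.dvd_prod_of_mem (fun l => lin (N.α l) ^ e l) (by simp [hl'])) hd
    have := (hfin l').multiplicity_lt_iff_not_dvd.1 (Nat.lt_succ_self _)
    exact this h1
  have hbz : ∀ l', N.cls l' = i → ∑ l'' with N.cls l'' = i, (e l'' : ℚ) * (1 - N.com l' l'') ≤ 0 := by
    intro l' hl'
    have hP'0 : P' ≠ 0 := by rintro rfl; exact hP0 (by rw [hP', mul_zero])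
    rw [hP'] at hP
    rcases W_quot (e := fun p => ((∑ l with N.cls l = i ∧ N.on l p, e l : ℕ) : ℤ)) hP
      (N.pr_hom i e) (N.pr_ne_zero i e) (fun p => by exact_mod_cast N.pr_dg i e p) with h | ⟨hle, h⟩
    · exact absurd h hP'0
    rw [mem_W hP'0] at h
    have h1 := bezout_line (univ.filter (fun p => N.on l' p)) N.a (N.α0 l') (fun p _ => N.a0 p)
      (fun p hp => (Finset.mem_filter.1 hp).2) (fun p _ q _ => N.ane p q) h.1 (hnd l' hl')
    set E := ∑ l with N.cls l = i, e l with hE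
    have h2 : ∑ p with N.on l' p, (f p - ((∑ l with N.cls l = i ∧ N.on l p, e l : ℕ) : ℤ)) ≤
        ((∑ p with N.on l' p, (c - E - dg (N.a p) P') : ℕ) : ℤ) := by
      rw [Nat.cast_sum]
      apply Finset.sum_le_sum
      intro p _
      have := h.2 p
      have := dg_le (N.a p) h.1
      omega
    rw [Finset.sum_sub_distrib, hb l'] at h2
    have h3 : ∑ p with N.on l' p, ∑ l with N.cls l = i ∧ N.on l p, e l
        = ∑ l with N.cls l = i, e l * N.com l' l := by
      have : ∀ l, e l * N.com l' l = ∑ p with N.on l' p, if N.on l p then e l else 0 := by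
        intro l
        rw [com, ← Finset.filter_filter, ← Finset.sum_filter, Finset.sum_const, smul_eq_mul,
          mul_comm]
      rw [Finset.sum_congr rfl (fun l _ => this l), Finset.sum_comm]
      apply Finset.sum_congr rfl
      intro p _
      rw [← Finset.sum_filter, Finset.filter_filter]
    rw [← Nat.cast_sum, h3] at h2
    have h4 : E ≤ ∑ l with N.cls l = i, e l * N.com l' l := by omega
    have h5 : (∑ l with N.cls l = i, (e l : ℚ)) ≤ ∑ l with N.cls l = i, (e l : ℚ) * N.com l' l := by
      exact_mod_cast h4
    simp only [mul_sub, mul_one, Finset.sum_sub_distrib]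
    linarith
  have hprop := (N.perron i (fun l => e l) hbz).2
  obtain ⟨o, ho⟩ := N.proportional i e (fun l l' h h' => by exact_mod_cast hprop l l' h h')
  have hel : 1 ≤ e l := by
    by_contra h
    have h0 : e l < 1 := by omega
    exact (hfin l).multiplicity_lt_iff_not_dvd.1 h0 (by simpa using hl)
  have ho1 : 1 ≤ o := by
    rcases Nat.eq_zero_or_pos o with h | h
    · rw [ho l rfl, h] at hel; simp at hel
    · exact h
  refine dvd_trans ?_ (Dvd.intro _ hP'.symm)
  apply Finset.prod_dvd_prod_of_dvd
  intro l' hl'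
  apply pow_dvd_pow
  rw [ho l' (Finset.mem_filter.1 hl').2]
  exact Nat.le_mul_of_pos_left _ ho1

end MNet
end Multinet

/-! ### The order of a form along a class -/

namespace Multinet
open MvPolynomial

namespace MNet

variable {ι π : Type*} [Fintype ι] [Fintype π] (N : MNet ι π)

/-- A line of the class `i`. -/
noncomputable def rep (i : Fin N.k) : ι := (N.surj i).choose

lemma cls_rep (i : Fin N.k) : N.cls (N.rep i) = i := (N.surj i).choose_spec

/-- A point of the line `rep i` outside the base locus. -/
noncomputable def y (i : Fin N.k) : V3 := (exists_generic N.a (N.α0 (N.rep i))).choose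

lemma y_ne (i : Fin N.k) : N.y i ≠ 0 := (exists_generic N.a (N.α0 (N.rep i))).choose_spec.1
lemma y_on (i : Fin N.k) : N.α (N.rep i) ⬝ᵥ N.y i = 0 :=
  (exists_generic N.a (N.α0 (N.rep i))).choose_spec.2.1
lemma y_notX (i : Fin N.k) : ∀ p (c : ℂ), N.y i ≠ c • N.a p :=
  (exists_generic N.a (N.α0 (N.rep i))).choose_spec.2.2

/-- Two lines through a point outside the base locus lie in the same class. -/
lemma cls_eq_of_notX {l l' : ι} {v : V3} (h : N.α l ⬝ᵥ v = 0)
    (h' : N.α l' ⬝ᵥ v = 0) (hX : ∀ p (c : ℂ), v ≠ c • N.a p) : N.cls l = N.cls l' := by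
  by_contra hne
  obtain ⟨p, hp, hp'⟩ := N.h2 l l' hne
  obtain ⟨c, hc⟩ := meet_unique (N.α0 l') (N.αne l l' (fun e => hne (congrArg N.cls e))) (N.a0 p)
    h h' hp hp'
  exact hX p c hc

lemma eval_pr_ne {i : Fin N.k} {v : V3} (h : ∀ l, N.cls l = i → N.α l ⬝ᵥ v ≠ 0) (e : ι → ℕ) :
    eval v (N.pr i e) ≠ 0 := by
  rw [pr, map_prod, Finset.prod_ne_zero_iff]
  intro l hl
  rw [map_pow, eval_lin]
  exact pow_ne_zero _ (h l (Finset.mem_filter.1 hl).2)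

lemma eval_Q_ne {i j : Fin N.k} (h : i ≠ j) : eval (N.y i) (N.Q j) ≠ 0 := by
  apply N.eval_pr_ne
  intro l hl h0
  apply h
  rw [← N.cls_rep i, ← hl]
  exact N.cls_eq_of_notX (N.y_on i) h0 (N.y_notX i)

lemma eval_R (i : Fin N.k) : eval (N.y i) (N.R i) = 0 := by
  rw [R, pr, map_prod]
  apply Finset.prod_eq_zero (i := N.rep i) (by simp [N.cls_rep])
  rw [map_pow, eval_lin, N.y_on, zero_pow (N.mt_pos _).ne']

lemma eval_Q (i : Fin N.k) : eval (N.y i) (N.Q i) = 0 := by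
  rw [← N.R_pow, map_pow, N.eval_R, zero_pow (N.g_pos i).ne']

lemma R_dvd_of_eval {c : ℕ} {f : π → ℤ} (hb : N.Bal c f) {P : S3} (hP : P ∈ W N.a c f)
    {i : Fin N.k} (h : eval (N.y i) P = 0) : N.R i ∣ P := by
  have h1 := N.R_dvd hb hP (N.dvd_of_eval hb hP (N.y_ne i) (N.y_on i) (N.y_notX i) h)
  rwa [N.cls_rep] at h1

/-- `P` is exactly divisible by the `o`-th power of `R i`, in the strong sense that the quotient
does not vanish at the point `y i`. -/
def IsOrd (i : Fin N.k) (o : ℕ) (P : S3) : Prop :=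
  ∃ P1, P = N.R i ^ o * P1 ∧ eval (N.y i) P1 ≠ 0

variable {N}

lemma IsOrd.mul {i : Fin N.k} {o o' : ℕ} {P P' : S3} (h : N.IsOrd i o P) (h' : N.IsOrd i o' P') :
    N.IsOrd i (o + o') (P * P') := by
  obtain ⟨A, rfl, hA⟩ := h
  obtain ⟨B, rfl, hB⟩ := h'
  exact ⟨A * B, by ring, by rw [map_mul]; exact mul_ne_zero hA hB⟩

lemma IsOrd.of_eval {i : Fin N.k} {P : S3} (h : eval (N.y i) P ≠ 0) : N.IsOrd i 0 P :=
  ⟨P, by simp, h⟩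

lemma IsOrd.ne_zero {i : Fin N.k} {o : ℕ} {P : S3} (h : N.IsOrd i o P) : P ≠ 0 := by
  obtain ⟨A, rfl, hA⟩ := h
  exact mul_ne_zero (pow_ne_zero _ (N.R_ne_zero i)) (by rintro rfl; simp at hA)

lemma IsOrd.not_dvd {i : Fin N.k} {o n : ℕ} {P : S3} (h : N.IsOrd i o P) :
    N.R i ^ n ∣ P → n ≤ o := by
  intro hd
  by_contra hlt
  push Not at hlt
  obtain ⟨A, rfl, hA⟩ := h
  have h1 : N.R i ^ (o + 1) ∣ N.R i ^ o * A := (pow_dvd_pow _ hlt).trans hd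
  rw [pow_succ, mul_dvd_mul_iff_left (pow_ne_zero _ (N.R_ne_zero i))] at h1
  obtain ⟨B, rfl⟩ := h1
  rw [map_mul, N.eval_R, zero_mul] at hA
  exact hA rfl

lemma IsOrd.pow_g {i : Fin N.k} (j : ℕ) : N.IsOrd i (j * N.g i) (N.Q i ^ j) :=
  ⟨1, by rw [← N.R_pow, ← pow_mul, mul_one, mul_comm], by simp⟩

lemma exists_ord (i : Fin N.k) {c : ℕ} : ∀ {f : π → ℤ} (_ : N.Bal c f) {P : S3}
    (_ : P ∈ W N.a c f) (_ : P ≠ 0), ∃ o, N.IsOrd i o P ∧ o * N.rho i ≤ c := by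
  induction c using Nat.strong_induction_on with
  | _ c ih =>
    intro f hb P hP hP0
    by_cases h : eval (N.y i) P = 0
    · obtain ⟨P1, rfl⟩ := N.R_dvd_of_eval hb hP h
      have h1 : P1 ≠ 0 := right_ne_zero_of_mul hP0
      rcases W_quot hP (N.R_hom i) (N.R_ne_zero i) (N.R_dg i) with h2 | ⟨h2, h3⟩
      · exact absurd h2 h1
      have hr := N.rho_pos i
      have hb' := hb.sub (N.bal_nt i)
      rw [← Nat.cast_sub h2] at hb'
      obtain ⟨o, ⟨A, rfl, hA⟩, ho'⟩ := ih (c - N.rho i) (by omega) hb' h3 h1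
      refine ⟨o + 1, ⟨A, by ring, hA⟩, ?_⟩
      rw [add_mul, one_mul]; omega
    · exact ⟨0, IsOrd.of_eval h, by simp⟩

variable (N)

/-- Elements of `W` divisible by the `n`-th power of `R i`. -/
noncomputable def filt (i : Fin N.k) (c : ℕ) (f : π → ℤ) (n : ℕ) : Submodule ℂ S3 where
  carrier := {P | P ∈ W N.a c f ∧ N.R i ^ n ∣ P}
  zero_mem' := ⟨Submodule.zero_mem _, dvd_zero _⟩
  add_mem' := fun h h' => ⟨Submodule.add_mem _ h.1 h'.1, dvd_add h.2 h'.2⟩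
  smul_mem' := fun t P h => ⟨Submodule.smul_mem _ t h.1, by
    rw [smul_eq_C_mul]; exact h.2.mul_left _⟩

instance (i : Fin N.k) (c : ℕ) (f : π → ℤ) (n : ℕ) : FiniteDimensional ℂ (N.filt i c f n) :=
  Submodule.finiteDimensional_of_le (fun _ h => h.1 : N.filt i c f n ≤ W N.a c f)

lemma filt_zero (i : Fin N.k) (c : ℕ) (f : π → ℤ) : N.filt i c f 0 = W N.a c f :=
  le_antisymm (fun _ h => h.1) (fun _ h => ⟨h, by simp⟩)

lemma filt_succ_le (i : Fin N.k) (c : ℕ) (f : π → ℤ) (n : ℕ) :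
    N.filt i c f (n + 1) ≤ N.filt i c f n :=
  fun _ h => ⟨h.1, (pow_dvd_pow _ (Nat.le_succ n)).trans h.2⟩

/-- Passing to the next step of the filtration costs at most one dimension, evaluation of the
quotient at `y i` being the only obstruction. -/
lemma filt_step (i : Fin N.k) {c : ℕ} {f : π → ℤ} (hb : N.Bal c f) (n : ℕ) :
    Module.finrank ℂ (N.filt i c f n) ≤ Module.finrank ℂ (N.filt i c f (n + 1)) + 1 := by
  by_cases hle : N.filt i c f n ≤ N.filt i c f (n + 1)
  · have := Submodule.finrank_mono hle
    omega
  obtain ⟨P0, hP0, hP0'⟩ := SetLike.not_le_iff_exists.1 hle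
  obtain ⟨A, hA⟩ := hP0.2
  have hRhom : (N.R i ^ n).IsHomogeneous (n * N.rho i) := by
    have := (N.R_hom i).pow n
    rwa [mul_comm] at this
  have hRdg : ∀ p, (dg (N.a p) (N.R i ^ n) : ℤ) + (n * N.nt i p : ℤ) = (n * N.rho i : ℕ) := by
    intro p
    rw [dg_pow _ (N.R_ne_zero i)]
    push_cast
    rw [← N.R_dg i p]; ring
  have hkey : ∀ B : S3, N.R i ^ n * B ∈ W N.a c f → eval (N.y i) B = 0 →
      N.R i ^ (n + 1) ∣ N.R i ^ n * B := by
    intro B hB h0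
    rw [pow_succ]
    apply mul_dvd_mul_left
    rcases W_quot hB hRhom (pow_ne_zero _ (N.R_ne_zero i)) hRdg with h2 | ⟨h2, h3⟩
    · rw [h2]; exact dvd_zero _
    · have hb' := hb.sub ((N.bal_nt i).smul n)
      rw [← Nat.cast_mul, ← Nat.cast_sub h2] at hb'
      exact N.R_dvd_of_eval hb' h3 h0
  have hA0 : eval (N.y i) A ≠ 0 := by
    intro h0
    apply hP0'
    refine ⟨hP0.1, ?_⟩
    rw [hA]
    exact hkey A (hA ▸ hP0.1) h0
  have h1 : N.filt i c f n ≤ N.filt i c f (n + 1) ⊔ Submodule.span ℂ {P0} := by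
    intro P hP
    obtain ⟨B, hB⟩ := hP.2
    set t := eval (N.y i) B / eval (N.y i) A with ht
    rw [Submodule.mem_sup]
    refine ⟨P - t • P0, ?_, t • P0, Submodule.smul_mem _ _ (Submodule.mem_span_singleton_self _),
      by simp⟩
    have hmem : P - t • P0 ∈ W N.a c f := Submodule.sub_mem _ hP.1 (Submodule.smul_mem _ _ hP0.1)
    have he : P - t • P0 = N.R i ^ n * (B - t • A) := by rw [hB, hA]; simp [mul_sub]
    refine ⟨hmem, ?_⟩
    rw [he] at hmem ⊢
    apply hkey _ hmem
    rw [map_sub, smul_eval, ht, div_mul_cancel₀ _ hA0, sub_self]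
  have h2 := Submodule.finrank_mono h1
  have h3 := Submodule.finrank_add_le_finrank_add_finrank (N.filt i c f (n + 1))
    (Submodule.span ℂ {P0})
  have h4 := finrank_span_singleton (K := ℂ) (show P0 ≠ 0 by
    rintro rfl; exact hP0' (Submodule.zero_mem _))
  omega

/-- The dimension of `W` is at most the number of possible orders along a class. -/
lemma finrank_le_card_ord (i : Fin N.k) {c : ℕ} {f : π → ℤ} (hb : N.Bal c f) (s : Finset ℕ)
    (hs : ∀ P ∈ W N.a c f, P ≠ 0 → ∀ o, N.IsOrd i o P → o * N.rho i ≤ c → o ∈ s) :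
    Module.finrank ℂ (W N.a c f) ≤ s.card := by
  have key : ∀ k n, c < n + k → Module.finrank ℂ (N.filt i c f n) ≤ #{o ∈ s | n ≤ o} := by
    intro k
    induction k with
    | zero =>
      intro n hn
      have : N.filt i c f n = ⊥ := by
        rw [eq_bot_iff]
        intro P hP
        by_contra hP0
        obtain ⟨o, ho, hoc⟩ := exists_ord i hb hP.1 hP0
        have h1 := ho.not_dvd hP.2
        have h2 : o ≤ o * N.rho i := Nat.le_mul_of_pos_right _ (N.rho_pos i)
        omega
      rw [this]; simp
    | succ k ih =>
      intro n hn
      have ih := ih (n + 1) (by omega)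
      by_cases hns : n ∈ s
      · have h1 := N.filt_step i hb n
        have h2 : #{o ∈ s | n + 1 ≤ o} + 1 ≤ #{o ∈ s | n ≤ o} := by
          rw [← Finset.card_insert_of_notMem (a := n) (by simp)]
          apply Finset.card_le_card
          intro o ho
          simp only [Finset.mem_insert, Finset.mem_filter] at ho ⊢
          rcases ho with rfl | ho
          · exact ⟨hns, le_rfl⟩
          · exact ⟨ho.1, by omega⟩
        omega
      · have h1 : N.filt i c f n ≤ N.filt i c f (n + 1) := by
          intro P hP
          by_cases hP0 : P = 0
          · rw [hP0]; exact Submodule.zero_mem _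
          obtain ⟨o, ho, hoc⟩ := exists_ord i hb hP.1 hP0
          have h1 := ho.not_dvd hP.2
          have h2 := hs P hP.1 hP0 o ho hoc
          have h3 : n + 1 ≤ o := by
            rcases Nat.lt_or_ge n o with h | h
            · exact h
            · exact absurd ((le_antisymm h1 h) ▸ h2) hns
          obtain ⟨A, rfl, -⟩ := ho
          exact ⟨hP.1, (pow_dvd_pow _ h3).mul_right _⟩
        have h2 := Submodule.finrank_mono h1
        have h3 : #{o ∈ s | n + 1 ≤ o} ≤ #{o ∈ s | n ≤ o} :=
          Finset.card_le_card fun o ho => by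
            simp only [Finset.mem_filter] at ho ⊢
            exact ⟨ho.1, by omega⟩
        omega
  have h := key (c + 1) 0 (by omega)
  rw [filt_zero] at h
  simpa using h

lemma card_ord_le_finrank (i : Fin N.k) {c : ℕ} {f : π → ℤ} (s : Finset ℕ)
    (hs : ∀ o ∈ s, ∃ P ∈ W N.a c f, N.IsOrd i o P) :
    s.card ≤ Module.finrank ℂ (W N.a c f) := by
  have key : ∀ k n, (∀ o ∈ s, o < n + k) → #{o ∈ s | n ≤ o} ≤ Module.finrank ℂ (N.filt i c f n) := by
    intro k
    induction k with
    | zero =>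
      intro n hn
      rw [Finset.card_eq_zero.2]
      · exact Nat.zero_le _
      · rw [Finset.filter_eq_empty_iff]
        intro o ho
        have := hn o ho
        omega
    | succ k ih =>
      intro n hn
      have ih := ih (n + 1) (fun o ho => by have := hn o ho; omega)
      have hle := N.filt_succ_le i c f n
      by_cases hns : n ∈ s
      · obtain ⟨P, hP, ho⟩ := hs n hns
        have hlt : N.filt i c f (n + 1) < N.filt i c f n := by
          refine lt_of_le_not_ge hle fun h => ?_
          have hPn : P ∈ N.filt i c f n := by
            obtain ⟨A, rfl, -⟩ := ho
            exact ⟨hP, Dvd.intro _ rfl⟩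
          have := ho.not_dvd (h hPn).2
          omega
        have h1 := Submodule.finrank_lt_finrank_of_lt hlt
        have h2 : #{o ∈ s | n ≤ o} ≤ #{o ∈ s | n + 1 ≤ o} + 1 := by
          refine le_trans (Finset.card_le_card ?_) (Finset.card_insert_le n _)
          intro o ho
          simp only [Finset.mem_insert, Finset.mem_filter] at ho ⊢
          rcases Nat.lt_or_ge n o with h | h
          · exact Or.inr ⟨ho.1, h⟩
          · exact Or.inl (by omega)
        omega
      · have h1 := Submodule.finrank_mono hle
        have h3 : #{o ∈ s | n ≤ o} ≤ #{o ∈ s | n + 1 ≤ o} :=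
          Finset.card_le_card fun o ho => by
            simp only [Finset.mem_filter] at ho ⊢
            refine ⟨ho.1, ?_⟩
            rcases Nat.lt_or_ge n o with h | h
            · exact h
            · exact absurd ((le_antisymm ho.2 h) ▸ ho.1) hns
        omega
  have h := key (s.sup id + 1) 0 (fun o ho => by
    have := Finset.le_sup (f := id) ho
    simp at this ⊢; omega)
  rw [filt_zero] at h
  simpa using h

end MNet
end Multinet

/-! ### Orders are multiples of the gcd of the class; the pencil -/

namespace Multinet
open MvPolynomial

namespace MNet

variable {ι π : Type*} [Fintype ι] [Fintype π] (N : MNet ι π)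

/-- A balanced system of multiplicities realized by a form that vanishes at none of the reference
points `y i`. -/
structure Ref where
  γ : ℕ
  γp : π → ℤ
  bal : N.Bal γ γp
  G : S3
  mem : G ∈ W N.a γ γp
  ne : ∀ i, eval (N.y i) G ≠ 0

variable {N} (Z : N.Ref)

namespace Ref

/-- Forms with the degree and the multiplicities at the base points of `G ^ j * Q i ^ μ`. -/
noncomputable def WW (j μ : ℕ) : Submodule ℂ S3 :=
  W N.a (j * Z.γ + μ * N.d) (fun p => j * Z.γp p + μ * N.n p)

lemma balWW (j μ : ℕ) :
    N.Bal ((j * Z.γ + μ * N.d : ℕ) : ℤ) (fun p => j * Z.γp p + μ * N.n p) := by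
  have := (Z.bal.smul j).add (N.bal_n.smul μ)
  push_cast
  exact this

lemma mul_mem {j j' μ μ' : ℕ} {P P' : S3} (h : P ∈ Z.WW j μ) (h' : P' ∈ Z.WW j' μ') :
    P * P' ∈ Z.WW (j + j') (μ + μ') :=
  W_congr (by ring) (fun p => by push_cast; ring) (W_mul h h')

lemma one_mem : (1 : S3) ∈ Z.WW 0 0 := by
  refine W_congr (f := fun p => 0) (c := 0) (by ring) (fun p => by simp) ?_
  rw [mem_W one_ne_zero]
  exact ⟨isHomogeneous_one _ _, fun p => by simp [dg_one]⟩

lemma G_pow_mem (j : ℕ) : Z.G ^ j ∈ Z.WW j 0 :=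
  W_congr (by ring) (fun p => by simp) (W_pow Z.mem j)

lemma Q_pow_mem (i : Fin N.k) (μ : ℕ) : N.Q i ^ μ ∈ Z.WW 0 μ :=
  W_congr (by ring) (fun p => by simp) (W_pow (N.Q_mem i) μ)

instance (i : Fin N.k) : NeZero (N.g i) := ⟨Nat.pos_iff_ne_zero.1 (N.g_pos i)⟩

/-- Orders along the class `i` of the forms in all `WW j μ`, reduced modulo `g i`. -/
noncomputable def H (i : Fin N.k) : AddSubgroup (ZMod (N.g i)) :=
  let M : AddSubmonoid (ZMod (N.g i)) :=
    { carrier := {x | ∃ j μ P o, P ∈ Z.WW j μ ∧ N.IsOrd i o P ∧ (o : ZMod (N.g i)) = x}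
      zero_mem' := ⟨0, 0, 1, 0, Z.one_mem, IsOrd.of_eval (by simp), by simp⟩
      add_mem' := by
        rintro x x' ⟨j, μ, P, o, hP, ho, rfl⟩ ⟨j', μ', P', o', hP', ho', rfl⟩
        exact ⟨_, _, _, _, Z.mul_mem hP hP', ho.mul ho', by push_cast; rfl⟩ }
  { M with
    neg_mem' := by
      intro x hx
      have h1 : (N.g i - 1) • x ∈ M := M.nsmul_mem hx _
      have h2 : -x = (N.g i - 1) • x := by
        rw [neg_eq_iff_add_eq_zero, ← succ_nsmul', Nat.sub_add_cancel (N.g_pos i)]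
        simp
      rw [h2]; exact h1 }

lemma mem_H {i : Fin N.k} {x : ZMod (N.g i)} :
    x ∈ Z.H i ↔ ∃ j μ P o, P ∈ Z.WW j μ ∧ N.IsOrd i o P ∧ (o : ZMod (N.g i)) = x := Iff.rfl

lemma raise {i : Fin N.k} {j μ J M o : ℕ} {P : S3} (hP : P ∈ Z.WW j μ) (ho : N.IsOrd i o P)
    (hJ : j ≤ J) (hM : μ ≤ M) : ∃ P' ∈ Z.WW J M, N.IsOrd i o P' := by
  obtain ⟨i', hi'⟩ := N.other i
  refine ⟨P * (Z.G ^ (J - j) * N.Q i' ^ (M - μ)), ?_, ?_⟩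
  · have := Z.mul_mem hP (Z.mul_mem (Z.G_pow_mem (J - j)) (Z.Q_pow_mem i' (M - μ)))
    rwa [show j + (J - j + 0) = J by omega, show μ + (0 + (M - μ)) = M by omega] at this
  · have h0 : N.IsOrd i 0 (Z.G ^ (J - j) * N.Q i' ^ (M - μ)) := by
      apply IsOrd.of_eval
      rw [map_mul, map_pow, map_pow]
      exact mul_ne_zero (pow_ne_zero _ (Z.ne i)) (pow_ne_zero _ (N.eval_Q_ne hi'.symm))
    simpa using ho.mul h0

/-- All elements of all the finite groups `H i` are orders of forms in one and the same `WW T T`. -/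
lemma exists_uniform : ∃ T, ∀ i, ∀ x ∈ Z.H i, ∃ P ∈ Z.WW T T, ∃ o, N.IsOrd i o P ∧
    (o : ZMod (N.g i)) = x := by
  have : ∀ᶠ T in Filter.atTop, ∀ (ix : Σ i, Z.H i), ∃ P ∈ Z.WW T T, ∃ o, N.IsOrd ix.1 o P ∧
      (o : ZMod (N.g ix.1)) = ix.2 := by
    rw [Filter.eventually_all]
    rintro ⟨i, x, hx⟩
    obtain ⟨j, μ, P, o, hP, ho, rfl⟩ := hx
    filter_upwards [Filter.eventually_ge_atTop (max j μ)] with T hT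
    obtain ⟨P', hP', ho'⟩ := Z.raise hP ho (le_trans (le_max_left _ _) hT)
      (le_trans (le_max_right _ _) hT)
    exact ⟨P', hP', o, ho', rfl⟩
  obtain ⟨T, hT⟩ := this.exists
  exact ⟨T, fun i x hx => hT ⟨i, x, hx⟩⟩

/-- Multiplying forms that represent the elements of `H i` by monomials of degree `μ` in `Q i` and
another `Q i'` gives forms of pairwise distinct orders. -/
lemma lower {T : ℕ} (hT : ∀ i, ∀ x ∈ Z.H i, ∃ P ∈ Z.WW T T, ∃ o, N.IsOrd i o P ∧
    (o : ZMod (N.g i)) = x) (i : Fin N.k) (μ : ℕ) :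
    Nat.card (Z.H i) * (μ + 1) ≤ Module.finrank ℂ (Z.WW T (T + μ)) := by
  choose! P hP o ho hox using hT i
  obtain ⟨i', hi'⟩ := N.other i
  have hg := N.g_pos i
  let φ : Z.H i × ℕ → ℕ := fun xa => o xa.1 + xa.2 * N.g i
  have hinj : Function.Injective φ := by
    rintro ⟨⟨x, hx⟩, b⟩ ⟨⟨x', hx'⟩, b'⟩ h
    have h1 := congrArg (Nat.cast : ℕ → ZMod (N.g i)) h
    simp only [φ, Nat.cast_add, Nat.cast_mul, ZMod.natCast_self, mul_zero, add_zero,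
      hox _ hx, hox _ hx'] at h1
    subst h1
    simp only [φ, Nat.add_left_cancel_iff] at h
    have := Nat.eq_of_mul_eq_mul_right hg h
    rw [this]
  have h1 := N.card_ord_le_finrank i (c := T * Z.γ + (T + μ) * N.d)
    (f := fun p => T * Z.γp p + ((T + μ : ℕ) : ℤ) * N.n p)
    ((univ ×ˢ range (μ + 1)).image φ) (by
      intro o' ho'
      obtain ⟨⟨⟨x, hx⟩, b⟩, hxb, rfl⟩ := Finset.mem_image.1 ho'
      have hb : b ≤ μ := by
        simp at hxb; omega
      refine ⟨P x * (N.Q i ^ b * N.Q i' ^ (μ - b)), ?_, ?_⟩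
      · have := Z.mul_mem (hP x hx) (Z.mul_mem (Z.Q_pow_mem i b) (Z.Q_pow_mem i' (μ - b)))
        rwa [show T + (0 + 0) = T by omega, show T + (b + (μ - b)) = T + μ by omega] at this
      · have h0 : N.IsOrd i 0 (N.Q i' ^ (μ - b)) := by
          apply IsOrd.of_eval
          rw [map_pow]
          exact pow_ne_zero _ (N.eval_Q_ne hi'.symm)
        have h3 : N.IsOrd i (b * N.g i) (N.Q i ^ b) := IsOrd.pow_g b
        have h4 := (ho x hx).mul (h3.mul h0)
        rw [add_zero] at h4
        exact h4)
  rw [Finset.card_image_of_injective _ hinj, Finset.card_product, Finset.card_univ,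
    Finset.card_range, ← Nat.card_eq_fintype_card] at h1
  exact h1

/-- Only residues in `H i` occur as orders along `i`, and orders are bounded by the degree. -/
lemma upper (T : ℕ) (i : Fin N.k) (μ : ℕ) :
    Module.finrank ℂ (Z.WW T (T + μ)) ≤ Nat.card (Z.H i) * (μ + (T * Z.γ + T) + 1) := by
  have hg := N.g_pos i
  set K := μ + (T * Z.γ + T) + 1 with hK
  let s : Finset ℕ := {o ∈ range (N.g i * K) | (o : ZMod (N.g i)) ∈ Z.H i}
  have h1 := N.finrank_le_card_ord i (Z.balWW T (T + μ)) s (by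
    intro P hP hP0 o ho hoc
    simp only [s, Finset.mem_filter, Finset.mem_range]
    refine ⟨?_, T, T + μ, P, o, hP, ho, rfl⟩
    have hr := N.rho_pos i
    rw [← N.g_mul_rho i] at hoc
    have h2 : o * N.rho i ≤ (N.g i * (T * Z.γ + (T + μ))) * N.rho i := by
      calc o * N.rho i ≤ T * Z.γ + (T + μ) * (N.g i * N.rho i) := hoc
        _ ≤ (N.g i * N.rho i) * (T * Z.γ) + (T + μ) * (N.g i * N.rho i) := by
          exact Nat.add_le_add_right (Nat.le_mul_of_pos_left _ (Nat.mul_pos hg hr)) _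
        _ = _ := by ring
    have h3 := Nat.le_of_mul_le_mul_right h2 hr
    calc o ≤ N.g i * (T * Z.γ + (T + μ)) := h3
      _ < N.g i * K := by
        apply Nat.mul_lt_mul_of_pos_left _ hg
        omega)
  refine h1.trans ?_
  have h2 : s.card ≤ ((univ : Finset (Z.H i)) ×ˢ range K).card := by
    apply Finset.card_le_card_of_injOn
      (fun o : ℕ => ((if h : (o : ZMod (N.g i)) ∈ Z.H i then
        (⟨(o : ZMod (N.g i)), h⟩ : Z.H i) else 0), o / N.g i))
    · intro o ho
      simp only [s, Finset.coe_filter, Finset.mem_range, Set.mem_ofPred_eq] at ho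
      simp only [Finset.coe_product, Finset.coe_univ, Set.mem_prod, Set.mem_univ, true_and,
        Finset.coe_range, Set.mem_Iio]
      exact Nat.div_lt_of_lt_mul ho.1
    · intro o ho o' ho' h
      simp only [s, Finset.coe_filter, Finset.mem_range, Set.mem_ofPred_eq] at ho ho'
      simp only [dif_pos ho.2, dif_pos ho'.2, Prod.mk.injEq, Subtype.mk.injEq] at h
      have h3 := (ZMod.natCast_eq_natCast_iff _ _ _).1 h.1
      rw [← Nat.div_add_mod o (N.g i), ← Nat.div_add_mod o' (N.g i), h.2, h3]
  rw [Finset.card_product, Finset.card_univ, Finset.card_range, ← Nat.card_eq_fintype_card] at h2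
  exact h2

/-- The bounds `lower` and `upper` grow with slope `|H i|`, and the spaces `WW` do not depend on
`i`; so all the `|H i|` agree, and their common value divides every multiplicity. -/
lemma card_H (i : Fin N.k) : Nat.card (Z.H i) = 1 := by
  obtain ⟨T, hT⟩ := Z.exists_uniform
  have hle : ∀ i i', Nat.card (Z.H i) ≤ Nat.card (Z.H i') := by
    intro i i'
    by_contra hlt
    push Not at hlt
    set B := T * Z.γ + T
    set h' := Nat.card (Z.H i')
    have h1 := (Z.lower hT i (h' * B)).trans (Z.upper T i' (h' * B))
    have h2 : (h' + 1) * (h' * B + 1) ≤ h' * (h' * B + B + 1) :=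
      le_trans (Nat.mul_le_mul_right _ hlt) h1
    nlinarith
  have hall : ∀ l, Nat.card (Z.H i) ∣ N.m l := by
    intro l
    have h1 : Nat.card (Z.H (N.cls l)) ∣ N.g (N.cls l) := by
      have := AddSubgroup.card_addSubgroup_dvd_card (Z.H (N.cls l))
      rwa [Nat.card_zmod] at this
    rw [le_antisymm (hle i (N.cls l)) (hle (N.cls l) i), ← N.g_mul_mt l]
    exact h1.mul_right _
  have := Finset.dvd_gcd (s := univ) (fun l _ => hall l)
  rw [N.hgcd] at this
  exact Nat.dvd_one.1 this

/-- The order along a class is a multiple of the gcd of the class. -/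
lemma g_dvd_ord {j μ o : ℕ} {i : Fin N.k} {P : S3} (hP : P ∈ Z.WW j μ) (ho : N.IsOrd i o P) :
    N.g i ∣ o := by
  have h1 : (o : ZMod (N.g i)) ∈ Z.H i := ⟨j, μ, P, o, hP, ho, rfl⟩
  rw [AddSubgroup.card_eq_one.1 (Z.card_H i), AddSubgroup.mem_bot] at h1
  exact (ZMod.natCast_eq_zero_iff _ _).1 h1

lemma Q_dvd_of_eval {j μ : ℕ} {i : Fin N.k} {P : S3} (hP : P ∈ Z.WW j μ)
    (h : eval (N.y i) P = 0) : N.Q i ∣ P := by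
  by_cases hP0 : P = 0
  · rw [hP0]; exact dvd_zero _
  obtain ⟨o, ho, -⟩ := exists_ord i (Z.balWW j μ) hP hP0
  have h1 := Z.g_dvd_ord hP ho
  have h2 : o ≠ 0 := by
    rintro rfl
    obtain ⟨A, rfl, hA⟩ := ho
    simp at h
    exact hA h
  obtain ⟨A, rfl, hA⟩ := ho
  rw [← N.R_pow]
  exact (pow_dvd_pow _ (Nat.le_of_dvd (Nat.pos_of_ne_zero h2) h1)).mul_right _

end Ref

/-- The trivial reference. -/
noncomputable def Ref.triv : N.Ref where
  γ := 0
  γp := fun _ => 0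
  bal := fun l => by simp
  G := 1
  mem := (mem_W one_ne_zero).2 ⟨isHomogeneous_one _ _, fun p => by simp [dg_one]⟩
  ne := fun i => by simp

variable (N)

/-- The forms with the multiplicities of the `Q i` are linear combinations of two of the `Q i`. -/
lemma mem_pencil {i j : Fin N.k} (hij : i ≠ j) {P : S3} (hP : P ∈ W N.a N.d (fun p => N.n p)) :
    ∃ x y : ℂ, P = x • N.Q i + y • N.Q j := by
  set t := eval (N.y i) P / eval (N.y i) (N.Q j) with ht
  have hmem : P - t • N.Q j ∈ W N.a N.d (fun p => N.n p) :=
    Submodule.sub_mem _ hP (Submodule.smul_mem _ _ (N.Q_mem j))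
  have hmem' : P - t • N.Q j ∈ (Ref.triv : N.Ref).WW 0 1 :=
    W_congr (by ring) (fun p => by simp) hmem
  have hev : eval (N.y i) (P - t • N.Q j) = 0 := by
    rw [map_sub, smul_eval, ht, div_mul_cancel₀ _ (N.eval_Q_ne hij), sub_self]
  obtain ⟨A, hA⟩ := Ref.triv.Q_dvd_of_eval hmem' hev
  have hA' : ∃ x, A = C x := by
    rcases hom_quot (hA ▸ hmem.1) (N.Q_hom i) (N.Q_ne_zero i) with h | ⟨_, h⟩
    · exact ⟨0, by simp [h]⟩
    · rw [Nat.sub_self] at h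
      have h1 := (totalDegree_zero_iff_isHomogeneous _).2 h
      rw [totalDegree_eq_zero_iff_eq_C] at h1
      exact ⟨_, h1⟩
  obtain ⟨x, rfl⟩ := hA'
  refine ⟨x, t, ?_⟩
  rw [smul_eq_C_mul (a := x), mul_comm, ← hA, sub_add_cancel]

lemma finrank_pencil : Module.finrank ℂ (W N.a N.d (fun p => (N.n p : ℤ))) ≤ 2 := by
  obtain ⟨j, hj⟩ := N.other ⟨0, by have := N.hk; omega⟩
  set i : Fin N.k := ⟨0, by have := N.hk; omega⟩
  have hle : W N.a N.d (fun p => (N.n p : ℤ)) ≤ Submodule.span ℂ ({N.Q i, N.Q j} : Set S3) := by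
    intro P hP
    obtain ⟨x, y, rfl⟩ := N.mem_pencil hj.symm hP
    exact Submodule.mem_span_pair.2 ⟨x, y, rfl⟩
  have hfin : FiniteDimensional ℂ (Submodule.span ℂ ({N.Q i, N.Q j} : Set S3)) :=
    FiniteDimensional.span_of_finite ℂ (Set.toFinite _)
  refine (Submodule.finrank_mono hle).trans ?_
  have := finrank_span_finset_le_card (R := ℂ) ({N.Q i, N.Q j} : Finset S3)
  rw [Finset.coe_pair] at this
  exact this.trans Finset.card_le_two

/-- Numerical consequence of the dimension of the pencil. -/
lemma three_d_le : 3 * N.d ≤ ∑ p, N.n p + 2 := by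
  have hn : ∀ p, N.n p ≤ N.d := by
    intro p
    have := N.Q_dg ⟨0, by have := N.hk; omega⟩ p
    omega
  have h1 := finrank_W_ge N.a0 N.d N.n hn
  have h2 := N.finrank_pencil
  have h3 := N.bal_n.sum_mul_n
  have e1 : (N.d + 2).choose 2 * 2 = (N.d + 2) * (N.d + 1) := by
    rw [← Nat.add_one_mul_choose_eq (N.d + 1) 1]; simp
  have e2 : ∀ p, (N.n p + 1).choose 2 * 2 = (N.n p + 1) * N.n p := by
    intro p
    rw [← Nat.add_one_mul_choose_eq (N.n p) 1]; simp
  have e3 : (∑ p, (N.n p + 1).choose 2) * 2 = ∑ p, N.n p * N.n p + ∑ p, N.n p := by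
    rw [Finset.sum_mul, ← Finset.sum_add_distrib]
    exact Finset.sum_congr rfl fun p _ => by rw [e2]; ring
  have e4 : ∑ p, N.n p * N.n p = N.d * N.d := by exact_mod_cast h3
  nlinarith

end MNet
end Multinet

/-! ### The form `B dA - A dB` -/

namespace Multinet
open MvPolynomial

lemma shift_pderiv_coeff (a : V3) (s : Fin 3) (P : S3) (e : ℕ) :
    (shift a (pderiv s P)).coeff e = pderiv s ((shift a P).coeff e) := by
  induction P using MvPolynomial.induction_on generalizing e with
  | C b => simp [shift, Polynomial.coeff_C, apply_ite]
  | add p q hp hq => simp [hp, hq]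
  | mul_X p i hp =>
    have hX : shift a (X i) = Polynomial.C (X i) + Polynomial.C (C (a i)) * Polynomial.X := by
      simp [shift]
    have key : ∀ f : Polynomial S3, ∀ e, (f * shift a (X i)).coeff e =
        f.coeff e * X i + (if e = 0 then 0 else f.coeff (e - 1)) * C (a i) := by
      intro f e
      rw [hX, mul_add, Polynomial.coeff_add, Polynomial.coeff_mul_C, ← mul_assoc]
      congr 1
      cases e with
      | zero => simp
      | succ e => simp [Polynomial.coeff_mul_X]
    have hsingle : shift a (Pi.single (M := fun _ => S3) s 1 i) =
        Polynomial.C (Pi.single (M := fun _ => S3) s 1 i) := by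
      by_cases h : i = s
      · subst h; simp
      · simp [h]
    rw [Derivation.leibniz, map_add, smul_eq_mul, smul_eq_mul, pderiv_X, map_mul, map_mul,
      mul_comm (shift a (X i)), Polynomial.coeff_add, key, map_mul, key, map_add,
      Derivation.leibniz, pderiv_X, hsingle, Polynomial.coeff_mul_C, hp]
    have hz : pderiv s ((if e = 0 then 0 else (shift a p).coeff (e - 1)) * C (a i)) =
        (if e = 0 then 0 else (shift a (pderiv s p)).coeff (e - 1)) * C (a i) := by
      split_ifs
      · simp
      · rw [Derivation.leibniz, hp]; simp [mul_comm (C (a i))]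
    rw [hz, smul_eq_mul, smul_eq_mul]
    ring

/-- The pulled back `1`-form `B dA - A dB`. -/
noncomputable def wr (A B : S3) (s : Fin 3) : S3 := B * pderiv s A - A * pderiv s B

lemma shift_wr_natDegree_le (a : V3) (A B : S3) (s : Fin 3) :
    (shift a (wr A B s)).natDegree ≤ dg a A + dg a B := by
  have h : ∀ P : S3, (shift a (pderiv s P)).natDegree ≤ dg a P := by
    intro P
    rw [Polynomial.natDegree_le_iff_coeff_eq_zero]
    intro e he
    rw [shift_pderiv_coeff, Polynomial.coeff_eq_zero_of_natDegree_lt he, map_zero]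
  rw [wr, map_sub, map_mul, map_mul]
  refine (Polynomial.natDegree_sub_le _ _).trans (max_le ?_ ?_)
  · refine Polynomial.natDegree_mul_le.trans ?_
    rw [add_comm]
    exact Nat.add_le_add (h A) le_rfl
  · exact Polynomial.natDegree_mul_le.trans (Nat.add_le_add le_rfl (h B))

lemma shift_wr_coeff (a : V3) (A B : S3) (s : Fin 3) :
    (shift a (wr A B s)).coeff (dg a A + dg a B) = wr (lead a A) (lead a B) s := by
  have h : ∀ P : S3, (shift a (pderiv s P)).natDegree ≤ dg a P := by
    intro P
    rw [Polynomial.natDegree_le_iff_coeff_eq_zero]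
    intro e he
    rw [shift_pderiv_coeff, Polynomial.coeff_eq_zero_of_natDegree_lt he, map_zero]
  rw [wr, map_sub, map_mul, map_mul, Polynomial.coeff_sub,
    Polynomial.coeff_mul_add_eq_of_natDegree_le (df := dg a A) (dg := dg a B) le_rfl (h B),
    add_comm, Polynomial.coeff_mul_add_eq_of_natDegree_le (df := dg a B) (dg := dg a A) le_rfl (h A),
    shift_pderiv_coeff, shift_pderiv_coeff]
  rfl

/-- Leading forms of divisors of `B dA - A dB` divide the corresponding form of leading forms. -/
lemma lead_dvd_wr (a : V3) {A B D : S3} {s : Fin 3} (h : D ∣ wr A B s) :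
    lead a D ∣ wr (lead a A) (lead a B) s := by
  rw [← shift_wr_coeff]
  by_cases h0 : (shift a (wr A B s)).coeff (dg a A + dg a B) = 0
  · rw [h0]; exact dvd_zero _
  · have h1 := le_antisymm (shift_wr_natDegree_le a A B s) (Polynomial.le_natDegree_of_ne_zero h0)
    rw [← h1, Polynomial.coeff_natDegree]
    obtain ⟨E, hE⟩ := h
    rw [show (shift a (wr A B s)).leadingCoeff = lead a (wr A B s) from rfl, hE, lead_mul]
    exact dvd_mul_right _ _

lemma sum_X_wr {A B : S3} {c : ℕ} (hA : A.IsHomogeneous c) (hB : B.IsHomogeneous c) :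
    ∑ s, X s * wr A B s = 0 := by
  have h1 := hA.sum_X_mul_pderiv
  have h2 := hB.sum_X_mul_pderiv
  have : ∑ s, X s * wr A B s = B * ∑ s, X s * pderiv s A - A * ∑ s, X s * pderiv s B := by
    rw [Finset.mul_sum, Finset.mul_sum, ← Finset.sum_sub_distrib]
    exact Finset.sum_congr rfl fun s _ => by rw [wr]; ring
  rw [this, h1, h2]
  simp only [nsmul_eq_mul]
  ring

lemma wr_hom {A B : S3} {b c : ℕ} (hA : A.IsHomogeneous b) (hB : B.IsHomogeneous c) (s : Fin 3)
    (hb : 0 < b) (hc : 0 < c) : (wr A B s).IsHomogeneous (b + c - 1) := by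
  have h1 := hB.mul (hA.pderiv (i := s))
  have h2 := hA.mul (hB.pderiv (i := s))
  rw [show c + (b - 1) = b + c - 1 by omega] at h1
  rw [show b + (c - 1) = b + c - 1 by omega] at h2
  exact h1.sub h2

lemma wr_comb (A B : S3) (x y z w : ℂ) (s : Fin 3) :
    wr (x • A + y • B) (z • A + w • B) s = (x * w - y * z) • wr A B s := by
  have h : ∀ (t : ℂ) (P : S3), pderiv s (C t * P) = C t * pderiv s P := by
    intro t P
    rw [Derivation.leibniz, pderiv_C]; simp
  simp only [wr, map_add, smul_eq_C_mul, map_sub, map_mul, h]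
  ring

/-- A gradient does not vanish along a line to the order of the form itself. -/
lemma exact_gradient {α : V3} (hα : α ≠ 0) {q : S3} {m : ℕ} (hm : 0 < m) (hq : ¬ lin α ∣ q)
    (h : ∀ s, lin α ^ m ∣ pderiv s (lin α ^ m * q)) : False := by
  obtain ⟨s, hs⟩ := Function.ne_iff.1 hα
  obtain ⟨m, rfl⟩ : ∃ m', m = m' + 1 := ⟨m - 1, by omega⟩
  have hp : pderiv s (lin α) = C (α s) := by
    simp [lin, pderiv_X, Pi.single_apply]
  have h1 := h s
  rw [Derivation.leibniz, Derivation.leibniz_pow, hp, smul_eq_mul, smul_eq_mul, smul_eq_mul,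
    Nat.add_sub_cancel, nsmul_eq_mul] at h1
  have h2 := (dvd_add_right (dvd_mul_right _ _)).1 h1
  rw [show q * (((m + 1 : ℕ) : S3) * (lin α ^ m * C (α s))) =
    lin α ^ m * (C (((m + 1 : ℕ) : ℂ) * α s) * q) by simp; ring, pow_succ] at h2
  have h3 := (mul_dvd_mul_iff_left (pow_ne_zero _ (lin_ne_zero hα))).1 h2
  rcases (prime_lin hα).dvd_or_dvd h3 with h4 | h4
  · apply (prime_lin hα).not_isUnit
    apply isUnit_of_dvd_unit h4
    apply IsUnit.map C
    apply Ne.isUnit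
    apply mul_ne_zero _ (by simpa using hs)
    exact_mod_cast Nat.succ_ne_zero m
  · exact hq h4

/-- A nonconstant form `A` cannot divide all components of `B dA - A dB` if it is relatively prime
to `B`. -/
lemma not_dvd_wr {A B : S3} {c : ℕ} (hA : A.IsHomogeneous c) (hc : 0 < c) (hA0 : A ≠ 0)
    (hAB : IsRelPrime A B) (h : ∀ s, A ∣ wr A B s) : False := by
  have h0 : ∀ s, pderiv s A = 0 := by
    intro s
    have h1 : A ∣ B * pderiv s A := by
      have := (h s).add (dvd_mul_right A (pderiv s B))
      rwa [wr, sub_add_cancel] at this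
    obtain ⟨E, hE⟩ := hAB.dvd_of_dvd_mul_left h1
    have h2 := hA.pderiv (i := s)
    rw [hE] at h2
    rcases hom_quot h2 hA hA0 with h3 | ⟨h3, -⟩
    · rw [hE, h3, mul_zero]
    · omega
  have := hA.sum_X_mul_pderiv
  simp only [h0, mul_zero, Finset.sum_const_zero, nsmul_eq_mul] at this
  rcases mul_eq_zero.1 this.symm with h1 | h1
  · exact hc.ne' (by exact_mod_cast h1)
  · exact hA0 h1

/-- Bézout's equality for a curve `P` and a line `α`. -/
lemma bezout_line_eq {π : Type*} (s : Finset π) (a : π → V3) {α v : V3} (hα : α ≠ 0)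
    (hon : ∀ p ∈ s, α ⬝ᵥ a p = 0) (hpair : ∀ p ∈ s, ∀ q ∈ s, p ≠ q → ∀ c : ℂ, a p ≠ c • a q)
    (hv0 : v ≠ 0) (hv : α ⬝ᵥ v = 0) (hva : ∀ p ∈ s, ∀ c : ℂ, a p ≠ c • v)
    {P : S3} {c : ℕ} (h : P.IsHomogeneous c) (hPv : eval v P ≠ 0)
    (hz : ∀ x, x ≠ 0 → α ⬝ᵥ x = 0 → eval x P = 0 → ∃ p ∈ s, ∃ t : ℂ, x = t • a p)
    (hl : ∀ p ∈ s, eval v (lead (a p) P) ≠ 0) :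
    ∑ p ∈ s, (c - dg (a p) P) = c := by
  obtain ⟨u, hu, hu0, huv, hco⟩ := plane_coords hα hv0 hv
  have hco' : ∀ p ∈ s, ∃ x y : ℂ, a p = x • u + y • v := fun p hp => hco _ (hon p hp)
  choose! x y hxy using hco'
  have hx : ∀ p ∈ s, x p ≠ 0 := by
    intro p hp h0
    have := hxy p hp
    rw [h0, zero_smul, zero_add] at this
    exact hva p hp _ this
  set f := restr u v P with hf
  have hdeg : f.natDegree = c := by
    apply le_antisymm (restr_natDegree_le u v h)
    apply Polynomial.le_natDegree_of_ne_zero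
    rw [restr_coeff_top u v h]; exact hPv
  have hf0 : f ≠ 0 := by
    intro h0
    have := restr_coeff_top u v h
    rw [← hf, h0] at this
    exact hPv (by simpa using this.symm)
  let r : π → ℂ := fun p => y p / x p
  have hr : ∀ p ∈ s, u + r p • v = (x p)⁻¹ • a p := by
    intro p hp
    have hxp := hx p hp
    conv_rhs => rw [hxy p hp]
    rw [smul_add, smul_smul, smul_smul, inv_mul_cancel₀ hxp, one_smul]
    congr 2
    simp only [r]; field_simp
  have hmult : ∀ p ∈ s, f.rootMultiplicity (r p) = c - dg (a p) P := by
    intro p hp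
    apply le_antisymm
    · by_contra hlt
      push Not at hlt
      have h1 := (Polynomial.le_rootMultiplicity_iff hf0).1 hlt
      rw [sub_pow_dvd_iff, hf, ← restr_comp, hr p hp] at h1
      exact not_X_pow_dvd_restr _ _ (inv_ne_zero (hx p hp)) h (hl p hp) h1
    · rw [Polynomial.le_rootMultiplicity_iff hf0, sub_pow_dvd_iff, hf, ← restr_comp, hr p hp]
      exact X_pow_dvd_restr _ _ _ h
  have hinj : Set.InjOn r s := by
    intro p hp q hq hpq
    by_contra hne
    apply hpair p hp q hq hne (x p * (x q)⁻¹)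
    rw [mul_smul, ← hr q hq, ← hpq, hr p hp, smul_smul, mul_inv_cancel₀ (hx p hp), one_smul]
  have hsub : f.roots.toFinset ⊆ s.image r := by
    intro z hz'
    rw [Multiset.mem_toFinset, Polynomial.mem_roots hf0, Polynomial.IsRoot, hf, eval_restr] at hz'
    have hne : u + z • v ≠ 0 := by
      intro h0
      apply huv (-z)
      rw [neg_smul]; exact eq_neg_of_add_eq_zero_left h0
    obtain ⟨p, hp, t, ht⟩ := hz _ hne (by simp [dotProduct_add, hu, hv]) hz'
    refine Finset.mem_image.2 ⟨p, hp, ?_⟩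
    by_contra hrz
    have h1 : a p = x p • (u + r p • v) := by
      rw [hr p hp, smul_smul, mul_inv_cancel₀ (hx p hp), one_smul]
    rw [h1, smul_smul, smul_add, smul_smul] at ht
    have h2 : (1 - t * x p) • u = (t * x p * r p - z) • v := by
      rw [sub_smul, sub_smul, one_smul, sub_eq_sub_iff_add_eq_add, ht, add_comm]
    by_cases h3 : 1 - t * x p = 0
    · rw [h3, zero_smul] at h2
      have h4 := (smul_eq_zero.1 h2.symm).resolve_right hv0
      apply hrz
      have : t * x p = 1 := by linear_combination -h3
      rw [this] at h4
      linear_combination h4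
    · apply huv ((1 - t * x p)⁻¹ * (t * x p * r p - z))
      rw [mul_smul, ← h2, smul_smul, inv_mul_cancel₀ h3, one_smul]
  have hcard : Multiset.card f.roots = c := by
    rw [← hdeg]
    exact (IsAlgClosed.splits f).natDegree_eq_card_roots.symm
  rw [← Multiset.toFinset_sum_count_eq, Finset.sum_subset hsub, Finset.sum_image hinj] at hcard
  · refine Eq.trans (Finset.sum_congr rfl fun p hp => ?_) hcard
    rw [Polynomial.count_roots, hmult p hp]
  · intro z _ hz'
    rw [Multiset.count_eq_zero]
    simpa using hz'

end Multinet

/-! ### The 1-form of the pencil and its factorization -/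

namespace Multinet
open MvPolynomial

namespace MNet

variable {ι π : Type*} [Fintype ι] [Fintype π] (N : MNet ι π)

/-- The product over the lines of `s` of the powers with exponents `e`. -/
noncomputable def pp (s : Finset ι) (e : ι → ℕ) : S3 := ∏ l ∈ s, lin (N.α l) ^ e l

lemma pp_ne_zero (s : Finset ι) (e : ι → ℕ) : N.pp s e ≠ 0 :=
  Finset.prod_ne_zero_iff.2 fun l _ => pow_ne_zero _ (lin_ne_zero (N.α0 l))

lemma pp_hom (s : Finset ι) (e : ι → ℕ) : (N.pp s e).IsHomogeneous (∑ l ∈ s, e l) := by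
  apply IsHomogeneous.prod
  intro l _
  simpa using (lin_hom (N.α l)).pow (e l)

lemma lead_lin_not_dvd (b : V3) {l l' : ι} (h : l ≠ l') :
    ¬ lin (N.α l) ∣ lead b (lin (N.α l')) := by
  intro hd
  by_cases h0 : N.α l' ⬝ᵥ b = 0
  · rw [lead_lin_of_mem h0] at hd
    obtain ⟨c, hc⟩ := lin_dvd_lin (N.α0 l) hd
    exact N.αne l' l h.symm c hc
  · rw [lead_lin_of_notMem h0] at hd
    exact (prime_lin (N.α0 l)).not_isUnit (isUnit_of_dvd_unit hd ((Ne.isUnit h0).map C))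

lemma lead_pp_not_dvd (b : V3) {l : ι} {s : Finset ι} (h : l ∉ s) (e : ι → ℕ) :
    ¬ lin (N.α l) ∣ lead b (N.pp s e) := by
  rw [pp, lead_prod, (prime_lin (N.α0 l)).dvd_finsetProd_iff]
  rintro ⟨l', hl', hd⟩
  rw [lead_pow] at hd
  exact N.lead_lin_not_dvd b (by rintro rfl; exact h hl') ((prime_lin (N.α0 l)).dvd_of_dvd_pow hd)

lemma lead_pp_eq {b : V3} {l : ι} (h0 : N.α l ⬝ᵥ b = 0) {s : Finset ι} (h : l ∈ s) (e : ι → ℕ) :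
    ∃ q, lead b (N.pp s e) = lin (N.α l) ^ e l * q ∧ ¬ lin (N.α l) ∣ q := by
  refine ⟨lead b (N.pp (s.erase l) e), ?_, N.lead_pp_not_dvd b (by simp) e⟩
  rw [pp, ← Finset.mul_prod_erase _ _ h, lead_mul, lead_pow, lead_lin_of_mem h0]; rfl

lemma Q_eq_pp (i : Fin N.k) : N.Q i = N.pp {l | N.cls l = i} N.m := rfl

lemma Q_relPrime {i j : Fin N.k} (hij : i ≠ j) : IsRelPrime (N.Q i) (N.Q j) := by
  rw [Q_eq_pp, Q_eq_pp, pp, pp]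
  apply IsRelPrime.prod_left
  intro l hl
  apply IsRelPrime.prod_right
  intro l' hl'
  apply IsRelPrime.pow
  rw [(prime_lin (N.α0 l)).irreducible.isRelPrime_iff_not_dvd]
  intro hd
  obtain ⟨c, hc⟩ := lin_dvd_lin (N.α0 l) hd
  refine N.αne l' l ?_ c hc
  rintro rfl
  exact hij ((Finset.mem_filter.1 hl).2.symm.trans (Finset.mem_filter.1 hl').2)

/-- The first class. -/
def i0 : Fin N.k := ⟨0, by have := N.hk; omega⟩
/-- The second class. -/
def i1 : Fin N.k := ⟨1, by have := N.hk; omega⟩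

lemma i01 : N.i0 ≠ N.i1 := by simp [i0, i1]

/-- The `1`-form `Q₁ dQ₀ - Q₀ dQ₁` of the pencil. -/
noncomputable def om (s : Fin 3) : S3 := wr (N.Q N.i0) (N.Q N.i1) s

lemma om_ne_zero : ∃ s, N.om s ≠ 0 := by
  by_contra h
  push Not at h
  refine not_dvd_wr (N.Q_hom N.i0) N.dpos (N.Q_ne_zero _) (N.Q_relPrime N.i01) (fun s => ?_)
  change _ ∣ N.om s
  rw [h s]; exact dvd_zero _

lemma om_hom (s : Fin 3) : (N.om s).IsHomogeneous (2 * N.d - 1) := by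
  have := wr_hom (N.Q_hom N.i0) (N.Q_hom N.i1) s N.dpos N.dpos
  rwa [← two_mul] at this

lemma sum_X_om : ∑ s, X s * N.om s = 0 := sum_X_wr (N.Q_hom N.i0) (N.Q_hom N.i1)

/-- Up to a nonzero factor, the `1`-form of the pencil does not depend on the chosen members. -/
lemma om_eq {i j : Fin N.k} (hij : i ≠ j) :
    ∃ c : ℂ, c ≠ 0 ∧ ∀ s, N.om s = C c * wr (N.Q i) (N.Q j) s := by
  obtain ⟨x, y, h0⟩ := N.mem_pencil hij (N.Q_mem N.i0)
  obtain ⟨z, w, h1⟩ := N.mem_pencil hij (N.Q_mem N.i1)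
  have h : ∀ s, N.om s = C (x * w - y * z) * wr (N.Q i) (N.Q j) s := by
    intro s
    rw [om, h0, h1, wr_comb, smul_eq_C_mul]
  refine ⟨_, ?_, h⟩
  intro hc
  obtain ⟨s, hs⟩ := N.om_ne_zero
  apply hs
  rw [h s, hc]; simp

lemma dvd_om_iff {i j : Fin N.k} (hij : i ≠ j) (D : S3) (s : Fin 3) :
    D ∣ N.om s ↔ D ∣ wr (N.Q i) (N.Q j) s := by
  obtain ⟨c, hc, h⟩ := N.om_eq hij
  rw [h s]
  have : IsUnit (C c : S3) := (Ne.isUnit hc).map C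
  exact this.dvd_mul_left

/-- The product of the lines with exponents `m - 1`. -/
noncomputable def PiL : S3 := N.pp univ (fun l => N.m l - 1)

lemma PiL_dvd (s : Fin 3) : N.PiL ∣ N.om s := by
  apply prod_pow_lin_dvd _ _ (fun l _ => N.α0 l) (fun l _ l' _ h => N.αne l l' h)
  intro l _
  obtain ⟨j, hj⟩ := N.other (N.cls l)
  rw [N.dvd_om_iff hj.symm]
  have h1 : lin (N.α l) ^ N.m l ∣ N.Q (N.cls l) :=
    Finset.dvd_prod_of_mem (fun l => lin (N.α l) ^ N.m l) (by simp)
  have h2 : lin (N.α l) ^ (N.m l - 1) ∣ N.Q (N.cls l) := (pow_dvd_pow _ (by omega)).trans h1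
  have h3 : lin (N.α l) ^ (N.m l - 1) ∣ pderiv s (N.Q (N.cls l)) := by
    obtain ⟨E, hE⟩ := h1
    rw [hE, Derivation.leibniz, Derivation.leibniz_pow]
    apply dvd_add
    · rw [smul_eq_mul]
      exact ((pow_dvd_pow _ (by omega : N.m l - 1 ≤ N.m l))).mul_right _
    · rw [smul_eq_mul, smul_eq_mul, nsmul_eq_mul]
      exact ((dvd_mul_right _ _).mul_left _).mul_left _
  exact dvd_sub (h3.mul_left _) (h2.mul_right _)

lemma exists_factor : ∃ (G : S3) (w : Fin 3 → S3), (∀ s, N.om s = N.PiL * G * w s) ∧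
    ∀ u, (∀ s, u ∣ w s) → IsUnit u := by
  choose f hf using N.PiL_dvd
  let _ : NormalizedGCDMonoid S3 :=
    Classical.choice (inferInstance : Nonempty (NormalizedGCDMonoid S3))
  obtain ⟨w, hw, hw1⟩ := Finset.extract_gcd f (Finset.univ_nonempty (α := Fin 3))
  refine ⟨univ.gcd f, w, ?_, ?_⟩
  · intro s
    rw [hf s, hw s (mem_univ _)]; ring
  · intro u hu
    have : u ∣ univ.gcd w := Finset.dvd_gcd (fun s _ => hu s)
    rw [hw1] at this
    exact isUnit_of_dvd_one this

/-- The greatest common divisor of the components of the `1`-form of the pencil, once the product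
`PiL` of the lines is removed. -/
noncomputable def G : S3 := N.exists_factor.choose

/-- The primitive part of the `1`-form of the pencil. -/
noncomputable def wv : Fin 3 → S3 := N.exists_factor.choose_spec.choose

lemma om_factor (s : Fin 3) : N.om s = N.PiL * N.G * N.wv s :=
  N.exists_factor.choose_spec.choose_spec.1 s

lemma wv_prim {u : S3} (h : ∀ s, u ∣ N.wv s) : IsUnit u :=
  N.exists_factor.choose_spec.choose_spec.2 u h

lemma PiG_dvd (s : Fin 3) : N.PiL * N.G ∣ N.om s := ⟨_, N.om_factor s⟩

lemma G_ne_zero : N.G ≠ 0 := by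
  intro h
  obtain ⟨s, hs⟩ := N.om_ne_zero
  apply hs
  rw [N.om_factor, h]; ring

/-- The degree of `G`. -/
noncomputable def γ : ℕ := N.G.totalDegree

lemma G_hom : N.G.IsHomogeneous N.γ := by
  obtain ⟨s, hs⟩ := N.om_ne_zero
  have h1 := N.om_hom s
  rw [N.om_factor] at h1 hs
  obtain ⟨h2, -, -⟩ := hom_of_mul h1 hs
  exact (hom_of_mul h2 (left_ne_zero_of_mul hs)).2.1

/-- The sum of `m - 1` over all lines. -/
noncomputable def sm : ℕ := ∑ l, (N.m l - 1)

lemma wv_deg : ∃ w, (∀ s, (N.wv s).IsHomogeneous w) ∧ N.sm + N.γ + w = 2 * N.d - 1 := by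
  have h0 : N.PiL * N.G ≠ 0 := mul_ne_zero (N.pp_ne_zero _ _) N.G_ne_zero
  have h1 : (N.PiL * N.G).IsHomogeneous (N.sm + N.γ) := (N.pp_hom _ _).mul N.G_hom
  have h2 : ∀ s, N.wv s = 0 ∨ N.sm + N.γ ≤ 2 * N.d - 1 ∧
      (N.wv s).IsHomogeneous (2 * N.d - 1 - (N.sm + N.γ)) := by
    intro s
    have h3 := N.om_hom s
    rw [N.om_factor] at h3
    exact hom_quot h3 h1 h0
  refine ⟨2 * N.d - 1 - (N.sm + N.γ), ?_, ?_⟩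
  · intro s
    rcases h2 s with h | ⟨-, h⟩
    · rw [h]; exact isHomogeneous_zero _ _ _
    · exact h
  · obtain ⟨s, hs⟩ := N.om_ne_zero
    rcases h2 s with h | ⟨h, -⟩
    · rw [N.om_factor, h] at hs; simp at hs
    · omega

lemma lead_PiG_dvd (b : V3) {i j : Fin N.k} (hij : i ≠ j) (s : Fin 3) :
    lead b N.PiL * lead b N.G ∣ wr (lead b (N.Q i)) (lead b (N.Q j)) s := by
  rw [← lead_mul]
  exact lead_dvd_wr b ((N.dvd_om_iff hij _ s).1 (N.PiG_dvd s))

/-- A line of the arrangement through `b` does not divide to its full multiplicity all the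
components of the leading form of the `1`-form of the pencil. -/
lemma not_pow_dvd_wr {b : V3} {l : ι} (hb : N.α l ⬝ᵥ b = 0) {j : Fin N.k} (hj : N.cls l ≠ j) :
    ∃ s, ¬ lin (N.α l) ^ N.m l ∣ wr (lead b (N.Q (N.cls l))) (lead b (N.Q j)) s := by
  by_contra h
  push Not at h
  obtain ⟨q, hq, hlq⟩ := N.lead_pp_eq hb (s := {l' | N.cls l' = N.cls l}) (l := l)
    (by simp) N.m
  rw [← Q_eq_pp] at hq
  have hj' : ¬ lin (N.α l) ∣ lead b (N.Q j) := by
    rw [Q_eq_pp]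
    exact N.lead_pp_not_dvd b (by simpa using hj) _
  refine exact_gradient (N.α0 l) (N.mpos l) hlq (fun s => ?_)
  have h1 := h s
  rw [wr, hq] at h1
  have h2 := (dvd_sub_left ((dvd_mul_right _ _).mul_right _)).1 h1
  exact (prime_lin (N.α0 l)).pow_dvd_of_dvd_mul_left _ hj' h2

lemma not_dvd_lead_G {b : V3} {l : ι} (hb : N.α l ⬝ᵥ b = 0) : ¬ lin (N.α l) ∣ lead b N.G := by
  intro hd
  obtain ⟨j, hj⟩ := N.other (N.cls l)
  obtain ⟨s, hs⟩ := N.not_pow_dvd_wr hb hj.symm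
  apply hs
  refine dvd_trans ?_ (N.lead_PiG_dvd b hj.symm s)
  obtain ⟨q, hq, -⟩ := N.lead_pp_eq hb (mem_univ l) (fun l => N.m l - 1)
  rw [PiL, hq]
  have : lin (N.α l) ^ N.m l = lin (N.α l) ^ (N.m l - 1) * lin (N.α l) := by
    rw [← pow_succ]; congr 1; have := N.mpos l; omega
  rw [this]
  exact mul_dvd_mul (dvd_mul_right _ _) hd

lemma not_dvd_G (l : ι) : ¬ lin (N.α l) ∣ N.G := by
  obtain ⟨b, -, hb, -⟩ := exists_common (N.α l) (N.α l)
  rintro ⟨E, hE⟩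
  apply N.not_dvd_lead_G hb
  rw [hE, lead_mul, lead_lin_of_mem hb]
  exact dvd_mul_right _ _

/-- `G` vanishes on the arrangement only at points of the base locus. -/
lemma eval_G_ne {b : V3} {l : ι} (hb : N.α l ⬝ᵥ b = 0) (hX : ∀ p (c : ℂ), b ≠ c • N.a p) :
    eval b N.G ≠ 0 := by
  intro hG
  obtain ⟨j, hj⟩ := N.other (N.cls l)
  have hQj : eval b (N.Q j) ≠ 0 := by
    apply N.eval_pr_ne
    intro l' hl' h0
    exact hj (hl'.symm.trans (N.cls_eq_of_notX h0 hb hX))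
  have hQi : eval b (N.Q (N.cls l)) = 0 := by
    rw [Q_eq_pp, pp, map_prod]
    apply Finset.prod_eq_zero (i := l) (by simp)
    rw [map_pow, eval_lin, hb, zero_pow (N.mpos l).ne']
  have hlQj : lead b (N.Q j) = C (eval b (N.Q j)) := by
    rw [← shift_coeff_top b (N.Q_hom j), ← dg_eq_of_eval_ne (N.Q_hom j) hQj]; rfl
  set q := lead b (N.Q (N.cls l)) with hq
  have hdq := dg_lt_of_eval_eq (N.Q_hom _) N.dpos hQi
  have hhq := lead_hom b (N.Q_hom (N.cls l))
  rw [← hq] at hhq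
  -- Euler's relation turns divisibility of the gradient into divisibility of the form
  have h1 : lead b N.PiL * lead b N.G ∣ q := by
    have h2 : ∀ s, lead b N.PiL * lead b N.G ∣ pderiv s q := by
      intro s
      have h3 := N.lead_PiG_dvd b hj.symm s
      rw [hlQj, wr, pderiv_C, mul_zero, sub_zero] at h3
      exact ((Ne.isUnit hQj).map C).dvd_mul_left.1 h3
    have h4 := hhq.sum_X_mul_pderiv
    have h5 : lead b N.PiL * lead b N.G ∣ (N.d - dg b (N.Q (N.cls l))) • q := by
      rw [← h4]
      exact Finset.dvd_sum fun s _ => (h2 s).mul_left _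
    have h6 : IsUnit (((N.d - dg b (N.Q (N.cls l)) : ℕ) : S3)) := by
      rw [← map_natCast (C : ℂ →+* S3)]
      apply IsUnit.map
      apply Ne.isUnit
      exact_mod_cast (by omega : N.d - dg b (N.Q (N.cls l)) ≠ 0)
    rw [nsmul_eq_mul] at h5
    exact h6.dvd_mul_left.1 h5
  set T : Finset ι := {l' | N.cls l' = N.cls l}
  have h2 : N.PiL * N.pp T (fun _ => 1) = N.Q (N.cls l) * N.pp Tᶜ (fun l => N.m l - 1) := by
    rw [PiL, Q_eq_pp, pp, ← Finset.prod_mul_prod_compl T, pp, pp, pp, mul_right_comm,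
      ← Finset.prod_mul_distrib]
    congr 1
    apply Finset.prod_congr rfl
    intro l' _
    rw [← pow_add, Nat.sub_add_cancel (N.mpos l')]
  have h3 := congrArg (lead b) h2
  rw [lead_mul, lead_mul, ← hq] at h3
  have h4 : lead b N.PiL * lead b N.G ∣ lead b N.PiL * lead b (N.pp T (fun _ => 1)) := by
    rw [h3]; exact h1.mul_right _
  have h5 := (mul_dvd_mul_iff_left (lead_ne_zero b (N.pp_ne_zero _ _))).1 h4
  have h6 : IsRelPrime (lead b (N.pp T (fun _ => 1))) (lead b N.G) := by
    rw [pp, lead_prod]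
    apply IsRelPrime.prod_left
    intro l' _
    rw [pow_one]
    by_cases h0 : N.α l' ⬝ᵥ b = 0
    · rw [lead_lin_of_mem h0, (prime_lin (N.α0 l')).irreducible.isRelPrime_iff_not_dvd]
      exact N.not_dvd_lead_G h0
    · rw [lead_lin_of_notMem h0]
      intro u hu _
      exact isUnit_of_dvd_unit hu ((Ne.isUnit h0).map C)
  have h7 : IsUnit (lead b N.G) := h6 h5 dvd_rfl
  by_cases hγ : N.γ = 0
  · have hh := N.G_hom
    rw [hγ] at hh
    have h8 := (totalDegree_zero_iff_isHomogeneous _).2 hh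
    rw [totalDegree_eq_zero_iff_eq_C] at h8
    apply N.G_ne_zero
    rw [h8, eval_C] at hG
    rw [h8, hG, C_0]
  have h8 := dg_lt_of_eval_eq N.G_hom (Nat.pos_of_ne_zero hγ) hG
  have h9 := (lead_hom b N.G_hom).totalDegree h7.ne_zero
  obtain ⟨c, hc, hc'⟩ := isUnit_iff_eq_C_of_isReduced.1 h7
  rw [hc', totalDegree_C] at h9
  omega

end MNet
end Multinet

/-! ### Multiplicities and rigidity of `G` -/

namespace Multinet
open MvPolynomial

namespace MNet

variable {ι π : Type*} [Fintype ι] [Fintype π] (N : MNet ι π)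

/-- The multiplicity of `G` at the point `p` of the base locus. -/
noncomputable def γp (p : π) : ℕ := N.γ - dg (N.a p) N.G

lemma lead_Q_hom (i : Fin N.k) (p : π) : (lead (N.a p) (N.Q i)).IsHomogeneous (N.n p) := by
  have h := lead_hom (N.a p) (N.Q_hom i)
  have h1 := N.Q_dg i p
  rwa [show N.d - dg (N.a p) (N.Q i) = N.n p by omega] at h

lemma lead_PiL_hom (p : π) :
    (lead (N.a p) N.PiL).IsHomogeneous (∑ l with N.on l p, (N.m l - 1)) := by
  rw [PiL, pp, lead_prod, Finset.sum_filter]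
  apply IsHomogeneous.prod
  intro l _
  rw [lead_pow]
  by_cases h : N.on l p
  · rw [if_pos h, lead_lin_of_mem h]
    simpa using (lin_hom (N.α l)).pow (N.m l - 1)
  · rw [if_neg h, lead_lin_of_notMem h, ← C_pow]
    exact isHomogeneous_C _ _

/-- The multiplicity of `G` at a point of the base locus is at most the defect of the point. -/
lemma γp_le (p : π) : ∑ l with N.on l p, (N.m l - 1) + N.γp p + 2 ≤ 2 * N.n p := by
  by_contra hlt
  obtain ⟨l, hl⟩ := N.hex p
  obtain ⟨j, hj⟩ := N.other (N.cls l)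
  have hn := N.npos p
  choose u hu using N.lead_PiG_dvd (N.a p) hj.symm
  set D := lead (N.a p) N.PiL * lead (N.a p) N.G
  have hD0 : D ≠ 0 :=
    mul_ne_zero (lead_ne_zero _ (N.pp_ne_zero _ _)) (lead_ne_zero _ N.G_ne_zero)
  have hD : D.IsHomogeneous (∑ l with N.on l p, (N.m l - 1) + N.γp p) :=
    (N.lead_PiL_hom p).mul (lead_hom _ N.G_hom)
  have hC : ∀ s, ∃ e : ℂ, u s = C e := by
    intro s
    have h1 := wr_hom (N.lead_Q_hom (N.cls l) p) (N.lead_Q_hom j p) s hn hn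
    rw [hu s] at h1
    rcases hom_quot h1 hD hD0 with h | ⟨h2, h3⟩
    · exact ⟨0, by simp [h]⟩
    · have h4 := (totalDegree_zero_iff_isHomogeneous (p := u s)).2 (by
        convert h3 using 1; omega)
      rw [totalDegree_eq_zero_iff_eq_C] at h4
      exact ⟨_, h4⟩
  choose e he using hC
  have h1 := sum_X_wr (N.lead_Q_hom (N.cls l) p) (N.lead_Q_hom j p)
  have h2 : D * lin e = 0 := by
    rw [← h1, lin, Finset.mul_sum]
    exact Finset.sum_congr rfl fun s _ => by rw [hu s, he s]; ring
  have h3 : e = 0 := by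
    by_contra h
    exact mul_ne_zero hD0 (lin_ne_zero h) h2
  obtain ⟨s, hs⟩ := N.not_pow_dvd_wr hl hj.symm
  apply hs
  rw [hu s, he s, h3]
  simp

/-- The curve `G` meets each line of the arrangement only in the base locus, so that its
multiplicities are balanced. -/
lemma bal_γ : N.Bal N.γ (fun p => N.γp p) := by
  intro l
  obtain ⟨v, hv0, hv, hvX⟩ := exists_generic N.a (N.α0 l)
  have hm : ∀ {p}, p ∈ ({p | N.on l p} : Finset π) → N.α l ⬝ᵥ N.a p = 0 :=
    fun h => (Finset.mem_filter.1 h).2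
  have hva : ∀ p (c : ℂ), N.a p ≠ c • v := by
    intro p c hc
    have hc0 : c ≠ 0 := by
      rintro rfl; exact N.a0 p (by simpa using hc)
    apply hvX p c⁻¹
    rw [hc, smul_smul, inv_mul_cancel₀ hc0, one_smul]
  have h := bezout_line_eq {p | N.on l p} N.a (N.α0 l) (fun p hp => hm hp)
    (fun p _ q _ hpq => N.ane p q hpq) hv0 hv (fun p _ => hva p)
    N.G_hom (N.eval_G_ne hv hvX) (by
      intro x hx0 hx hGx
      by_contra hno
      push Not at hno
      refine N.eval_G_ne hx (fun p c hc => ?_) hGx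
      refine hno p (Finset.mem_filter.2 ⟨mem_univ _, ?_⟩) c hc
      have hc0 : c ≠ 0 := by
        rintro rfl; exact hx0 (by simpa using hc)
      rw [hc, dotProduct_smul, smul_eq_mul] at hx
      exact (mul_eq_zero.1 hx).resolve_left hc0) (by
      intro p hp h0
      apply N.not_dvd_lead_G (hm hp)
      rw [lin_dvd_iff (N.α0 l)]
      intro x hx
      obtain ⟨u, hu, hu0, huv, hco⟩ := plane_coords (N.α0 l) hv0 hv
      obtain ⟨x1, y1, e1⟩ := hco _ (hm hp)
      obtain ⟨x2, y2, e2⟩ := hco _ hx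
      have hx1 : x1 ≠ 0 := by
        rintro rfl
        exact hva p y1 (by simpa using e1)
      have e3 : x = (y2 - x2 / x1 * y1) • v + (x2 / x1) • N.a p := by
        rw [e1, e2, smul_add, smul_smul, smul_smul, div_mul_cancel₀ _ hx1, sub_smul]
        abel
      rw [e3, lead_invariant, eval_smul_hom (lead_hom _ N.G_hom), h0, mul_zero])
  have hsum : ∑ p with N.on l p, N.γp p = N.γ := h
  dsimp only
  exact_mod_cast hsum

/-- `G` as a reference form. -/
noncomputable def refG : N.Ref where
  γ := N.γ
  γp := fun p => N.γp p
  bal := N.bal_γ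
  G := N.G
  mem := (mem_W N.G_ne_zero).2 ⟨N.G_hom, fun p => by
    have := dg_le (N.a p) N.G_hom
    unfold γp
    omega⟩
  ne := fun i => N.eval_G_ne (N.y_on i) (N.y_notX i)

/-- No member of the pencil divides `G`. -/
lemma member_not_dvd_G {i j : Fin N.k} (hij : i ≠ j) (z : ℂ) : ¬ (N.Q i - z • N.Q j) ∣ N.G := by
  intro hd
  have hrel : IsRelPrime (N.Q i - z • N.Q j) (N.Q j) := by
    have := (N.Q_relPrime hij).add_mul_right_left (C (-z))
    rwa [← smul_eq_C_mul, neg_smul, ← sub_eq_add_neg] at this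
  have hwr : ∀ s, wr (N.Q i - z • N.Q j) (N.Q j) s = wr (N.Q i) (N.Q j) s := by
    intro s
    have := wr_comb (N.Q i) (N.Q j) 1 (-z) 0 1 s
    simpa [sub_eq_add_neg] using this
  have hh : (N.Q i - z • N.Q j).IsHomogeneous N.d :=
    (Submodule.sub_mem _ (N.Q_mem i) (Submodule.smul_mem _ _ (N.Q_mem j))
      : _ ∈ W N.a N.d (fun p => (N.n p : ℤ))).1
  have h0 : N.Q i - z • N.Q j ≠ 0 := by
    intro h
    apply N.eval_Q_ne hij.symm
    have := congrArg (eval (N.y j)) h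
    rw [map_sub, smul_eval, N.eval_Q, mul_zero, sub_zero, map_zero] at this
    exact this
  refine not_dvd_wr hh N.dpos h0 hrel (fun s => ?_)
  rw [hwr, ← N.dvd_om_iff hij]
  exact (hd.mul_left _).trans (N.PiG_dvd s)

/-- The forms with the multiplicities of `G`. -/
noncomputable def WG : Submodule ℂ S3 := W N.a N.γ (fun p => N.γp p)

lemma G_mem : N.G ∈ N.WG := N.refG.mem

lemma WG_dvd {i : Fin N.k} {P : S3} (hP : P ∈ N.WG) (h : eval (N.y i) P = 0) : N.Q i ∣ P :=
  N.refG.Q_dvd_of_eval (j := 1) (μ := 0) (W_congr (by simp [refG]) (fun p => by simp [refG]) hP) h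

/-- In a form with the multiplicities of `G`, one member of the pencil can be replaced by another
one. -/
lemma WG_exchange {i j : Fin N.k} {P : S3} (h : N.Q i * P ∈ N.WG) : N.Q j * P ∈ N.WG := by
  rcases W_quot h (N.Q_hom i) (N.Q_ne_zero i) (N.Q_dg i) with h0 | ⟨h1, h2⟩
  · rw [h0, mul_zero]; exact Submodule.zero_mem _
  · exact W_congr (by omega) (fun p => by ring) (W_mul (N.Q_mem j) h2)

lemma WG_exchange_pow {i j : Fin N.k} (e : ℕ) {P : S3} (h : N.Q i ^ e * P ∈ N.WG) :
    N.Q j ^ e * P ∈ N.WG := by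
  induction e generalizing P with
  | zero => simpa using h
  | succ e ih =>
    rw [pow_succ', mul_assoc] at h
    have h1 := N.WG_exchange (j := j) h
    rw [mul_left_comm] at h1
    have h2 := ih h1
    rwa [← mul_assoc, ← pow_succ] at h2

/-- If a form with the multiplicities of `G` is divisible by the highest possible power `e` of a
member of the pencil, then all forms with the multiplicities of `G` are multiples of the
cofactor by binary forms in two members. -/
lemma WG_binary {i j : Fin N.k} (hij : i ≠ j) {e : ℕ} {B : S3} (hB0 : B ≠ 0)
    (hB : N.Q i ^ e * B ∈ N.WG) (hmax : ∀ P, N.Q i ^ (e + 1) * P ∈ N.WG → P = 0)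
    (t : ℕ) (ht : t ≤ e) (P : S3) (hP : N.Q j ^ (e - t) * P ∈ N.WG) :
    ∃ c : ℕ → ℂ, P = B * ∑ x ∈ range (t + 1), C (c x) * (N.Q i ^ x * N.Q j ^ (t - x)) := by
  have hBj : N.Q j ^ e * B ∈ N.WG := N.WG_exchange_pow e hB
  have hBy : eval (N.y i) B ≠ 0 := by
    intro h0
    have h1 := N.WG_dvd (i := i) hBj (by rw [map_mul, h0, mul_zero])
    obtain ⟨B', rfl⟩ := (N.Q_relPrime hij).pow_right.dvd_of_dvd_mul_left h1
    apply hB0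
    rw [← mul_assoc, ← pow_succ] at hB
    rw [hmax _ hB, mul_zero]
  induction t generalizing P with
  | zero =>
    obtain ⟨P', hP'⟩ : N.Q i ∣ P - C (eval (N.y i) P / eval (N.y i) B) * B := by
      have h1 : N.Q j ^ e * (P - C (eval (N.y i) P / eval (N.y i) B) * B) ∈ N.WG := by
        rw [mul_sub, mul_left_comm, ← smul_eq_C_mul]
        exact Submodule.sub_mem _ hP (Submodule.smul_mem _ _ hBj)
      apply (N.Q_relPrime hij).pow_right.dvd_of_dvd_mul_left (N.WG_dvd h1 _)
      rw [map_mul, map_sub, map_mul, eval_C, div_mul_cancel₀ _ hBy, sub_self, mul_zero]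
    have h2 : P' = 0 := by
      apply hmax
      rw [pow_succ, mul_assoc, ← hP']
      apply N.WG_exchange_pow (i := j)
      rw [mul_sub, mul_left_comm, ← smul_eq_C_mul]
      exact Submodule.sub_mem _ hP (Submodule.smul_mem _ _ hBj)
    rw [h2, mul_zero, sub_eq_zero] at hP'
    refine ⟨fun _ => eval (N.y i) P / eval (N.y i) B, ?_⟩
    conv_lhs => rw [hP']
    simp only [zero_add, range_one, sum_singleton, pow_zero, Nat.sub_self, mul_one]
    rw [mul_comm]
  | succ t ih =>
    set z := eval (N.y i) P / eval (N.y i) (N.Q j ^ (t + 1) * B) with hz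
    have hy : eval (N.y i) (N.Q j ^ (t + 1) * B) ≠ 0 := by
      rw [map_mul, map_pow]
      exact mul_ne_zero (pow_ne_zero _ (N.eval_Q_ne hij)) hBy
    have h1 : N.Q j ^ (e - (t + 1)) * (P - C z * (N.Q j ^ (t + 1) * B)) ∈ N.WG := by
      rw [mul_sub, mul_left_comm, ← mul_assoc (N.Q j ^ _), ← pow_add, Nat.sub_add_cancel ht,
        ← smul_eq_C_mul]
      exact Submodule.sub_mem _ hP (Submodule.smul_mem _ _ hBj)
    obtain ⟨P', hP'⟩ : N.Q i ∣ P - C z * (N.Q j ^ (t + 1) * B) := by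
      apply (N.Q_relPrime hij).pow_right.dvd_of_dvd_mul_left (N.WG_dvd h1 _)
      rw [map_mul, map_sub, map_mul, eval_C, hz, div_mul_cancel₀ _ hy, sub_self, mul_zero]
    rw [hP', mul_left_comm] at h1
    have h2 := N.WG_exchange (j := j) h1
    rw [← mul_assoc, ← pow_succ', show e - (t + 1) + 1 = e - t by omega] at h2
    obtain ⟨c, hc⟩ := ih (by omega) P' h2
    refine ⟨fun x => if x = 0 then z else c (x - 1), ?_⟩
    rw [Finset.sum_range_succ', eq_add_of_sub_eq hP', hc, mul_add]
    congr 1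
    · rw [Finset.mul_sum, Finset.mul_sum, Finset.mul_sum]
      apply Finset.sum_congr rfl
      intro x _
      simp only [Nat.add_one_ne_zero, if_false, Nat.add_sub_cancel, Nat.add_sub_add_right]
      ring
    · simp only [if_true, pow_zero, Nat.sub_zero]
      ring

/-- Up to scalars, `G` is the only form with its multiplicities. -/
lemma WG_eq_smul {P : S3} (hP : P ∈ N.WG) : ∃ z : ℂ, P = z • N.G := by
  set i := N.i0
  set j := N.i1
  have hij : i ≠ j := N.i01
  by_contra hno
  push Not at hno
  have hGy : eval (N.y i) N.G ≠ 0 := N.refG.ne i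
  set z := eval (N.y i) P / eval (N.y i) N.G with hz
  have h1 : P - z • N.G ∈ N.WG := Submodule.sub_mem _ hP (Submodule.smul_mem _ _ N.G_mem)
  obtain ⟨B1, hB1⟩ := N.WG_dvd (i := i) h1 (by
    rw [map_sub, smul_eval, hz, div_mul_cancel₀ _ hGy, sub_self])
  let p : ℕ → Prop := fun e => ∃ B, B ≠ 0 ∧ N.Q i ^ e * B ∈ N.WG
  have hp1 : p 1 := by
    refine ⟨B1, ?_, ?_⟩
    · rintro rfl
      rw [mul_zero] at hB1
      exact hno z (sub_eq_zero.1 hB1)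
    · rw [pow_one, ← hB1]; exact h1
  have hbound : ∀ e, p e → e ≤ N.γ := by
    rintro e ⟨B, hB0, hB⟩
    have hh : (N.Q i ^ e * B).IsHomogeneous N.γ := hB.1
    rcases hom_quot hh ((N.Q_hom i).pow e) (pow_ne_zero _ (N.Q_ne_zero i)) with h | ⟨h, -⟩
    · exact absurd h hB0
    · have := N.dpos
      nlinarith
  obtain ⟨B, hB0, hB⟩ : p (Nat.findGreatest p N.γ) := Nat.findGreatest_spec (hbound 1 hp1) hp1
  have he1 : 1 ≤ Nat.findGreatest p N.γ := Nat.le_findGreatest (hbound 1 hp1) hp1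
  have hmax : ∀ P, N.Q i ^ (Nat.findGreatest p N.γ + 1) * P ∈ N.WG → P = 0 := by
    intro P hP
    by_contra hP0
    have h2 : p (Nat.findGreatest p N.γ + 1) := ⟨P, hP0, hP⟩
    have := Nat.le_findGreatest (hbound _ h2) h2
    omega
  generalize Nat.findGreatest p N.γ = e at *
  obtain ⟨c, hc⟩ := N.WG_binary hij hB0 hB hmax e le_rfl N.G (by simpa using N.G_mem)
  -- the top coefficient does not vanish because `Q j` does not divide `G`
  have hce : c e ≠ 0 := by
    intro h0
    have : N.Q j ∣ N.G := by
      rw [hc]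
      apply Dvd.dvd.mul_left
      apply Finset.dvd_sum
      intro x hx
      rcases Nat.lt_or_ge x e with h | h
      · exact ((dvd_pow_self _ (by omega)).mul_left _).mul_left _
      · have : x = e := by simp at hx; omega
        rw [this, h0]; simp
    refine N.not_dvd_G (N.rep j) (dvd_trans ?_ this)
    rw [Q_eq_pp, pp]
    exact (dvd_pow_self _ (N.mpos _).ne').trans (Finset.dvd_prod_of_mem
      (fun l => lin (N.α l) ^ N.m l) (by simp [N.cls_rep]))
  set f : Polynomial ℂ := ∑ x ∈ range (e + 1), Polynomial.C (c x) * Polynomial.X ^ x with hf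
  have hfe : f.coeff e = c e := by
    rw [hf, Polynomial.finsetSum_coeff]
    simp [Polynomial.coeff_X_pow]
  obtain ⟨ζ, hζ⟩ := IsAlgClosed.exists_root f (by
    apply ne_of_gt
    rw [← Polynomial.natDegree_pos_iff_degree_pos]
    exact lt_of_lt_of_le he1 (Polynomial.le_natDegree_of_ne_zero (by rw [hfe]; exact hce)))
  rw [Polynomial.IsRoot, hf, Polynomial.eval_finsetSum] at hζ
  simp only [Polynomial.eval_mul, Polynomial.eval_C, Polynomial.eval_pow, Polynomial.eval_X] at hζ
  apply N.member_not_dvd_G hij ζ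
  rw [hc]
  apply Dvd.dvd.mul_left
  have h2 : ∑ x ∈ range (e + 1), C (c x) * (N.Q i ^ x * N.Q j ^ (e - x)) =
      ∑ x ∈ range (e + 1), C (c x) * (N.Q j ^ (e - x) * (N.Q i ^ x - (ζ • N.Q j) ^ x)) := by
    rw [← sub_eq_zero, ← Finset.sum_sub_distrib]
    have h3 : ∀ x ∈ range (e + 1), C (c x) * (N.Q i ^ x * N.Q j ^ (e - x)) -
        C (c x) * (N.Q j ^ (e - x) * (N.Q i ^ x - (ζ • N.Q j) ^ x)) =
        C (c x * ζ ^ x) * N.Q j ^ e := by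
      intro x hx
      have h4 : N.Q j ^ e = N.Q j ^ (e - x) * N.Q j ^ x := by
        rw [← pow_add]; congr 1; simp at hx; omega
      rw [h4, smul_eq_C_mul, mul_pow, C_mul, C_pow]
      ring
    rw [Finset.sum_congr rfl h3, ← Finset.sum_mul, ← map_sum, hζ, C_0, zero_mul]
  rw [h2]
  apply Finset.dvd_sum
  intro x _
  exact ((sub_dvd_pow_sub_pow _ _ _).mul_left _).mul_left _

/-- Numerical consequence of the rigidity of `G`. -/
lemma γ_ineq : N.γ * N.γ + 3 * N.γ ≤ ∑ p, N.γp p * N.γp p + ∑ p, N.γp p := by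
  have h1 := finrank_W_ge N.a0 N.γ N.γp (fun p => Nat.sub_le _ _)
  have h2 : Module.finrank ℂ N.WG ≤ 1 := by
    apply finrank_le_one (⟨N.G, N.G_mem⟩ : N.WG)
    rintro ⟨P, hP⟩
    obtain ⟨z, hz⟩ := N.WG_eq_smul hP
    exact ⟨z, Subtype.ext hz.symm⟩
  unfold WG at h2
  have e1 : (N.γ + 2).choose 2 * 2 = (N.γ + 2) * (N.γ + 1) := by
    rw [← Nat.add_one_mul_choose_eq (N.γ + 1) 1]; simp
  have e3 : (∑ p, (N.γp p + 1).choose 2) * 2 = ∑ p, N.γp p * N.γp p + ∑ p, N.γp p := by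
    rw [Finset.sum_mul, ← Finset.sum_add_distrib]
    refine Finset.sum_congr rfl fun p _ => ?_
    rw [← Nat.add_one_mul_choose_eq (N.γp p) 1]; simp; ring
  nlinarith

end MNet
end Multinet

/-! ### An upper bound for the dimension of the tangent fields -/

namespace Multinet
open MvPolynomial

/-- A vector proportional to a primitive one is a multiple of it. -/
lemma primitive_mul {u w : Fin 3 → S3} {s : Fin 3} (hs : w s ≠ 0)
    (hw : ∀ v, (∀ j, v ∣ w j) → IsUnit v) (h : ∀ i j, u i * w j = u j * w i) :
    ∃ q, ∀ j, u j = q * w j := by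
  let _ : NormalizedGCDMonoid S3 :=
    Classical.choice (inferInstance : Nonempty (NormalizedGCDMonoid S3))
  have h1 : w s ∣ univ.gcd (fun j => u s * w j) :=
    Finset.dvd_gcd fun j _ => ⟨u j, by rw [h s j, mul_comm]⟩
  rw [(Finset.gcd_mul_left' univ w (u s)).dvd_iff_dvd_right] at h1
  have h2 : IsUnit (univ.gcd w) := hw _ fun j => Finset.gcd_dvd (mem_univ j)
  rw [h2.dvd_mul_right] at h1
  obtain ⟨q, hq⟩ := h1
  refine ⟨q, fun j => mul_right_cancel₀ hs ?_⟩
  rw [h j s, hq]; ring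

lemma X_primitive (v : S3) (h : ∀ j : Fin 3, v ∣ X j) : IsUnit v := by
  have h1 : IsRelPrime (X 0 : S3) (X 1) := by
    rw [(MvPolynomial.X_prime (R := ℂ) (i := (0 : Fin 3))).irreducible.isRelPrime_iff_not_dvd]
    rw [MvPolynomial.X_dvd_X]
    simp
  exact h1 (h 0) (h 1)

/-- A vector field tangent to a line preserves divisibility by powers of its equation. -/
lemma pow_dvd_apply {α : V3} {θ : Fin 3 → S3} (h : lin α ∣ der θ α) {e : ℕ} {B : S3}
    (hB : lin α ^ e ∣ B) : lin α ^ e ∣ ∑ s, θ s * pderiv s B := by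
  obtain ⟨q, rfl⟩ := hB
  rcases e with _ | e
  · simp
  have hp : ∀ s, pderiv s (lin α) = C (α s) := fun s => by
    simp [lin, pderiv_X, Pi.single_apply]
  obtain ⟨t, ht⟩ := h
  refine ⟨∑ s, θ s * pderiv s q + ((e + 1 : ℕ) : S3) * (t * q), ?_⟩
  have h1 : ∀ s, θ s * pderiv s (lin α ^ (e + 1) * q) = lin α ^ (e + 1) * (θ s * pderiv s q)
      + (((e + 1 : ℕ) : S3) * lin α ^ e * q) * (C (α s) * θ s) := by
    intro s
    rw [Derivation.leibniz, Derivation.leibniz_pow, hp]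
    simp only [smul_eq_mul, nsmul_eq_mul, Nat.add_sub_cancel]
    ring
  rw [Finset.sum_congr rfl (fun s _ => h1 s), Finset.sum_add_distrib, ← Finset.mul_sum,
    ← Finset.mul_sum]
  change _ + _ * der θ α = _
  rw [ht]; ring

/-- The contraction of a `1`-form with a vector field. -/
noncomputable def contract (w : Fin 3 → S3) : (Fin 3 → S3) →ₗ[ℂ] S3 where
  toFun θ := ∑ s, w s * θ s
  map_add' θ η := by simp [mul_add, Finset.sum_add_distrib]
  map_smul' c θ := by simp [Finset.smul_sum]

/-- The cross product of the Euler field `(x₀, x₁, x₂)` with a vector. -/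
noncomputable def crossX : (Fin 3 → S3) →ₗ[ℂ] (Fin 3 → S3) where
  toFun θ := ![X 1 * θ 2 - X 2 * θ 1, X 2 * θ 0 - X 0 * θ 2, X 0 * θ 1 - X 1 * θ 0]
  map_add' θ η := by
    ext1 i; fin_cases i <;> simp <;> ring
  map_smul' c θ := by
    ext1 i; fin_cases i <;> simp [smul_sub]

/-- Multiples of a fixed vector. -/
noncomputable def mulVec (w : Fin 3 → S3) : S3 →ₗ[ℂ] (Fin 3 → S3) where
  toFun q := fun s => q * w s
  map_add' p q := by ext1 s; simp [add_mul]
  map_smul' c q := by ext1 s; simp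

namespace MNet
variable {ι π : Type*} [Fintype ι] [Fintype π] (N : MNet ι π)

lemma sum_X_wv : ∑ s, X s * N.wv s = 0 := by
  have h := N.sum_X_om
  have h1 : ∑ s, X s * N.om s = N.PiL * N.G * ∑ s, X s * N.wv s := by
    rw [Finset.mul_sum]
    exact Finset.sum_congr rfl fun s _ => by rw [N.om_factor]; ring
  rw [h1] at h
  exact (mul_eq_zero.1 h).resolve_left (mul_ne_zero (N.pp_ne_zero _ _) N.G_ne_zero)

lemma wv_ne_zero : ∃ s, N.wv s ≠ 0 := by
  obtain ⟨s, hs⟩ := N.om_ne_zero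
  refine ⟨s, fun h => hs ?_⟩
  rw [N.om_factor, h, mul_zero]

lemma not_dvd_pp_erase (l : ι) (e : ι → ℕ) : ¬ lin (N.α l) ∣ N.pp (univ.erase l) e := by
  rw [pp, (prime_lin (N.α0 l)).dvd_finsetProd_iff]
  rintro ⟨l', hl', hd⟩
  obtain ⟨c, hc⟩ := lin_dvd_lin (N.α0 l) ((prime_lin (N.α0 l)).dvd_of_dvd_pow hd)
  exact N.αne l' l (Finset.ne_of_mem_erase hl') c hc

/-- The lines of the arrangement are invariant for the foliation `wv`. -/
lemma lin_dvd_contract {θ : Fin 3 → S3} (l : ι) (h : lin (N.α l) ∣ der θ (N.α l)) :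
    lin (N.α l) ∣ contract N.wv θ := by
  have hp := prime_lin (N.α0 l)
  obtain ⟨j, hj⟩ := N.other (N.cls l)
  obtain ⟨c, -, hc⟩ := N.om_eq hj.symm
  have h1 : lin (N.α l) ^ N.m l ∣ N.Q (N.cls l) :=
    Finset.dvd_prod_of_mem (fun l => lin (N.α l) ^ N.m l) (by simp)
  have h2 := pow_dvd_apply h h1
  have h3 : ∑ s, N.om s * θ s = C c * (N.Q j * ∑ s, θ s * pderiv s (N.Q (N.cls l))
      - N.Q (N.cls l) * ∑ s, θ s * pderiv s (N.Q j)) := by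
    rw [Finset.mul_sum, Finset.mul_sum, ← Finset.sum_sub_distrib, Finset.mul_sum]
    refine Finset.sum_congr rfl fun s _ => ?_
    rw [hc s, wr]; ring
  have h4 : lin (N.α l) ^ N.m l ∣ ∑ s, N.om s * θ s := by
    rw [h3]
    exact (dvd_sub (h2.mul_left _) (h1.mul_right _)).mul_left _
  have h5 : ∑ s, N.om s * θ s = lin (N.α l) ^ (N.m l - 1) *
      (N.pp (univ.erase l) (fun l => N.m l - 1) * N.G * contract N.wv θ) := by
    have : N.PiL = lin (N.α l) ^ (N.m l - 1) * N.pp (univ.erase l) (fun l => N.m l - 1) := by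
      rw [PiL, pp, pp, ← Finset.mul_prod_erase _ _ (mem_univ l)]
    rw [contract]
    simp only [LinearMap.coe_mk, AddHom.coe_mk]
    rw [Finset.mul_sum, Finset.mul_sum]
    refine Finset.sum_congr rfl fun s _ => ?_
    rw [N.om_factor, this]; ring
  obtain ⟨e, he⟩ : ∃ e, N.m l = e + 1 := ⟨N.m l - 1, by have := N.mpos l; omega⟩
  rw [h5, he, Nat.add_sub_cancel, pow_succ,
    mul_dvd_mul_iff_left (pow_ne_zero _ (lin_ne_zero (N.α0 l)))] at h4
  rcases hp.dvd_or_dvd h4 with h6 | h6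
  · rcases hp.dvd_or_dvd h6 with h7 | h7
    · exact absurd h7 (N.not_dvd_pp_erase l _)
    · exact absurd h7 (N.not_dvd_G l)
  · exact h6

/-- Upper bound for the space of tangent fields: contract with `wv`; the fields tangent to the
foliation are, up to multiples of the Euler field, multiples of one field. -/
lemma tangent_upper {w : ℕ} (hw : ∀ s, (N.wv s).IsHomogeneous w) {m : ℕ} (hm : 1 ≤ m) :
    Module.finrank ℂ (tangent N.α m univ) ≤ (m + 1).choose 2 + (m + 1 - w + 2).choose 2
      + (m + w - Fintype.card ι + 2).choose 2 := by
  obtain ⟨s0, hs0⟩ := N.wv_ne_zero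
  have h1 := finrank_le_ker_add (tangent N.α m univ) (contract N.wv)
    ((Sd (m + w - Fintype.card ι)).map (LinearMap.mulLeft ℂ (N.pp univ (fun _ => 1)))) (by
      intro θ hθ
      have hd : N.pp univ (fun _ => 1) ∣ contract N.wv θ := by
        apply prod_pow_lin_dvd _ _ (fun l _ => N.α0 l) (fun l _ l' _ h => N.αne l l' h)
        intro l _
        rw [pow_one]
        exact N.lin_dvd_contract l (hθ.2 l (mem_univ l))
      have hh : (contract N.wv θ).IsHomogeneous (m + w) := by
        apply IsHomogeneous.sum
        intro s _
        rw [add_comm]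
        exact (hw s).mul (hθ.1 s)
      obtain ⟨E, hE⟩ := hd
      rw [hE] at hh ⊢
      rcases hom_quot hh (N.pp_hom _ _) (N.pp_ne_zero _ _) with h | ⟨h, h'⟩
      · rw [h, mul_zero]; exact Submodule.zero_mem _
      · refine ⟨E, ?_, rfl⟩
        simpa using h')
  rw [finrank_map_mulLeft (N.pp_ne_zero _ _), finrank_Sd] at h1
  have h2 := finrank_le_ker_add (tangent N.α m univ ⊓ LinearMap.ker (contract N.wv)) crossX
    ((Sd (m + 1 - w)).map (mulVec N.wv)) (by
      rintro θ ⟨hθ, hk⟩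
      have hk' : ∑ s, N.wv s * θ s = 0 := hk
      have hx := N.sum_X_wv
      rw [Fin.sum_univ_three] at hk' hx
      obtain ⟨q, hq⟩ := primitive_mul (u := crossX θ) hs0 (fun v => N.wv_prim) (by
        intro i j
        fin_cases i <;> fin_cases j <;> simp [crossX]
        · linear_combination θ 2 * hx - X 2 * hk'
        · linear_combination -θ 1 * hx + X 1 * hk'
        · linear_combination -θ 2 * hx + X 2 * hk'
        · linear_combination θ 0 * hx - X 0 * hk'
        · linear_combination θ 1 * hx - X 1 * hk'
        · linear_combination -θ 0 * hx + X 0 * hk')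
      have hhom : ∀ s, (crossX θ s).IsHomogeneous (m + 1) := by
        have h : ∀ i j, (X i * θ j : S3).IsHomogeneous (m + 1) := by
          intro i j
          rw [add_comm]
          exact (isHomogeneous_X ℂ i).mul (hθ.1 j)
        intro s
        fin_cases s <;> exact (h _ _).sub (h _ _)
      refine ⟨q, ?_, (funext fun j => (hq j).symm)⟩
      have h := hhom s0
      rw [hq s0, mul_comm] at h
      rcases hom_quot h (hw s0) hs0 with h | ⟨-, h⟩
      · rw [h]; exact Submodule.zero_mem _
      · exact h)
  have h3 := Submodule.finrank_map_le (mulVec N.wv) (Sd (m + 1 - w))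
  have h4 : tangent N.α m univ ⊓ LinearMap.ker (contract N.wv) ⊓ LinearMap.ker crossX
      ≤ (Sd (m - 1)).map (mulVec X) := by
    rintro θ ⟨⟨hθ, -⟩, hk⟩
    have hc : ∀ s, crossX θ s = 0 := fun s => congrFun hk s
    have c0 := hc 0
    have c1 := hc 1
    have c2 := hc 2
    simp [crossX] at c0 c1 c2
    obtain ⟨q, hq⟩ := primitive_mul (u := θ) (w := X) (s := 0) (X_ne_zero 0) X_primitive (by
      intro i j
      fin_cases i <;> fin_cases j <;> simp
      · linear_combination -c2
      · linear_combination c1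
      · linear_combination c2
      · linear_combination -c0
      · linear_combination -c1
      · linear_combination c0)
    refine ⟨q, ?_, (funext fun j => (hq j).symm)⟩
    have h := hθ.1 0
    rw [hq 0, mul_comm] at h
    rcases hom_quot h (isHomogeneous_X ℂ _) (X_ne_zero 0) with h | ⟨-, h⟩
    · rw [h]; exact Submodule.zero_mem _
    · exact h
  have h5 := Submodule.finrank_mono h4
  have h6 := Submodule.finrank_map_le (mulVec X) (Sd (m - 1))
  rw [finrank_Sd] at h3 h6
  rw [show m - 1 + 2 = m + 1 by omega] at h6
  omega

end MNet
end Multinet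

/-! ### Comparison of the two bounds; the defect of a base point -/

namespace Multinet
open MvPolynomial

lemma two_mul_choose_two (x : ℕ) : 2 * ((x.choose 2 : ℕ) : ℤ) = (x : ℤ) * (x - 1) := by
  induction x with
  | zero => simp
  | succ x ih =>
    rw [choose_two_succ]; push_cast; linarith

/-- Counting pairs of lines by their intersection points. -/
lemma pair_count {ι ρ : Type*} [Fintype ι] [Fintype ρ] (R : ι → ρ → Prop)
    (h : ∀ l l', l ≠ l' → ∃! q, R l q ∧ R l' q) :
    ∑ q, (#{l | R l q} : ℤ) * ((#{l | R l q} : ℤ) - 1) = (Fintype.card ι : ℤ) ^ 2 - Fintype.card ι := by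
  have h1 := Finset.sum_card_bipartiteAbove_eq_sum_card_bipartiteBelow
    (s := (univ : Finset ι).offDiag) (t := (univ : Finset ρ)) (fun x q => R x.1 q ∧ R x.2 q)
  have h2 : ∀ x ∈ (univ : Finset ι).offDiag,
      #(Finset.bipartiteAbove (fun x q => R x.1 q ∧ R x.2 q) (univ : Finset ρ) x) = 1 := by
    intro x hx
    obtain ⟨q, hq, hu⟩ := h x.1 x.2 (Finset.mem_offDiag.1 hx).2.2
    rw [Finset.card_eq_one]
    refine ⟨q, Finset.ext fun q' => ?_⟩
    simp only [Finset.bipartiteAbove, Finset.mem_filter, Finset.mem_univ, true_and,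
      Finset.mem_singleton]
    exact ⟨hu q', fun e => e ▸ hq⟩
  have h3 : ∀ q : ρ,
      Finset.bipartiteBelow (fun (x : ι × ι) q => R x.1 q ∧ R x.2 q) (univ : Finset ι).offDiag q
        = ({l | R l q} : Finset ι).offDiag := by
    intro q
    ext x
    simp only [Finset.bipartiteBelow, Finset.mem_filter, Finset.mem_offDiag, Finset.mem_univ,
      true_and]
    tauto
  rw [Finset.sum_congr rfl h2] at h1
  simp only [h3, Finset.sum_const, smul_eq_mul, mul_one, Finset.offDiag_card, Finset.card_univ] at h1
  have h4 : ∀ x : ℕ, ((x * x - x : ℕ) : ℤ) = (x : ℤ) * (x - 1) := by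
    intro x
    rw [Nat.cast_sub (Nat.le_mul_self x)]; push_cast; ring
  have h5 := congrArg (Nat.cast : ℕ → ℤ) h1
  rw [Nat.cast_sum, h4] at h5
  simp only [h4] at h5
  rw [← h5]; ring

namespace MNet
variable {ι π : Type*} [Fintype ι] [Fintype π] (N : MNet ι π)

/-- Comparison of the two bounds for tangent fields, in degree `|L| + w`. -/
lemma mult_bound {ρ : Type*} [Fintype ρ] (b : ρ → V3) (hb : ∀ q, b q ≠ 0)
    (hbne : ∀ q q', q ≠ q' → ∀ c : ℂ, b q ≠ c • b q')
    (hb1 : ∀ q, 1 ≤ #{l | N.α l ⬝ᵥ b q = 0})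
    (hcov : ∀ l l', l ≠ l' → ∃ q, N.α l ⬝ᵥ b q = 0 ∧ N.α l' ⬝ᵥ b q = 0)
    {w : ℕ} (hw : ∀ s, (N.wv s).IsHomogeneous w) (hr : 1 ≤ Fintype.card ι) :
    (Fintype.card ι : ℤ) - 1 + ((w : ℤ) - 1) * (Fintype.card ι - w)
      ≤ ∑ q, ((#{l | N.α l ⬝ᵥ b q = 0} : ℤ) - 1) := by
  have hpc := pair_count (fun l q => N.α l ⬝ᵥ b q = 0) (by
    intro l l' hll
    obtain ⟨q, hq⟩ := hcov l l' hll
    refine ⟨q, hq, fun q' hq' => ?_⟩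
    by_contra hne
    obtain ⟨c, hc⟩ := meet_unique (N.α0 l') (N.αne l l' hll) (hb q) hq'.1 hq'.2 hq.1 hq.2
    exact hbne q' q hne c hc)
  have h1 := tangent_lower N.α N.α0 N.αne b hb hbne univ (Fintype.card ι + w) univ
    (by rw [Finset.card_univ]; omega)
  have h2 := N.tangent_upper hw (m := Fintype.card ι + w) (by omega)
  rw [show Fintype.card ι + w + 1 - w + 2 = Fintype.card ι + 3 by omega,
    show Fintype.card ι + w + w - Fintype.card ι + 2 = 2 * w + 2 by omega] at h2
  rw [Finset.card_univ] at h1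
  generalize Fintype.card ι = r at *
  have h3 : 3 * (r + w + 2).choose 2
      + ∑ q, (#{l | N.α l ⬝ᵥ b q = 0} - 1).choose 2 ≤ (r + w + 1).choose 2 + (r + 3).choose 2
        + (2 * w + 2).choose 2 + r * (r + w + 1) := by
    refine h1.trans ?_; omega
  zify at h3
  have h4 : ∀ q, 2 * (((#{l | N.α l ⬝ᵥ b q = 0} - 1).choose 2 : ℕ) : ℤ)
      = (#{l | N.α l ⬝ᵥ b q = 0} : ℤ) * ((#{l | N.α l ⬝ᵥ b q = 0} : ℤ) - 1)
        - 2 * ((#{l | N.α l ⬝ᵥ b q = 0} : ℤ) - 1) := by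
    intro q
    rw [two_mul_choose_two, Nat.cast_sub (hb1 q)]; push_cast; ring
  have h5 : 2 * ∑ q, (((#{l | N.α l ⬝ᵥ b q = 0} - 1).choose 2 : ℕ) : ℤ)
      = (r : ℤ) ^ 2 - r - 2 * ∑ q, ((#{l | N.α l ⬝ᵥ b q = 0} : ℤ) - 1) := by
    rw [Finset.mul_sum, Finset.sum_congr rfl (fun q _ => h4 q), Finset.sum_sub_distrib, hpc,
      ← Finset.mul_sum]
  have c1 := two_mul_choose_two (r + w + 2)
  have c2 := two_mul_choose_two (r + w + 1)
  have c3 := two_mul_choose_two (r + 3)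
  have c4 := two_mul_choose_two (2 * w + 2)
  push_cast at c1 c2 c3 c4
  nlinarith

/-- The defect at a base point in the equality to be proved. -/
noncomputable def tp (p : π) : ℤ := (N.r p : ℤ) - 2 - (N.k - 2) * N.n p

lemma sum_m_on (p : π) : ∑ l with N.on l p, N.m l = N.k * N.n p := by
  rw [← Finset.sum_fiberwise_of_maps_to (t := univ) (g := N.cls) (fun _ _ => mem_univ _)]
  have : ∀ i, ∑ l ∈ ({l | N.on l p} : Finset ι) with N.cls l = i, N.m l = N.n p := by
    intro i
    rw [← N.h3 p i, Finset.filter_filter]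
    exact Finset.sum_congr (Finset.filter_congr fun l _ => and_comm) fun _ _ => rfl
  rw [Finset.sum_congr rfl (fun i _ => this i)]
  simp

lemma cast_m_sub (l : ι) : ((N.m l - 1 : ℕ) : ℤ) = (N.m l : ℤ) - 1 := by
  rw [Nat.cast_sub (N.mpos l)]; simp

lemma tp_eq (p : π) : N.tp p = 2 * N.n p - 2 - ∑ l with N.on l p, ((N.m l : ℤ) - 1) := by
  have h := congrArg (Nat.cast : ℕ → ℤ) (N.sum_m_on p)
  push_cast at h
  rw [Finset.sum_sub_distrib, h, tp, r]
  simp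
  ring

lemma γp_le_tp (p : π) : (N.γp p : ℤ) ≤ N.tp p := by
  have h := N.γp_le p
  zify at h
  simp only [cast_m_sub] at h
  rw [tp_eq]; linarith

/-- At a base point with `n p = 1` there is no defect. -/
lemma tp_of_n {p : π} (h : N.n p = 1) : N.tp p = 0 ∧ N.γp p = 0 := by
  have h1 := N.γp_le p
  rw [h] at h1
  have h2 := N.tp_eq p
  have h3 : ∑ l with N.on l p, (N.m l - 1) = 0 := by omega
  have h4 := congrArg (Nat.cast : ℕ → ℤ) h3
  push_cast at h4
  simp only [cast_m_sub] at h4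
  rw [h4, h] at h2
  exact ⟨by simpa using h2, by omega⟩

lemma sm_eq : (N.sm : ℤ) = N.k * N.d - Fintype.card ι := by
  have h : ∑ l, N.m l = N.k * N.d := by
    rw [← Finset.sum_fiberwise_of_maps_to (t := univ) (g := N.cls) (fun _ _ => mem_univ _),
      Finset.sum_congr rfl (fun i _ => N.h1 i)]
    simp
  have h2 := congrArg (Nat.cast : ℕ → ℤ) h
  rw [sm]
  push_cast at h2 ⊢
  simp only [cast_m_sub]
  rw [Finset.sum_sub_distrib, h2]; simp

end MNet
end Multinet

/-! ### Consequences of completeness -/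

namespace Multinet
open MvPolynomial
namespace MNet
variable {ι π : Type*} [Fintype ι] [Fintype π] (N : MNet ι π)

/-- The numerical consequences of completeness (hypothesis `hY`). The integer is
`D = 2d - 2 - ∑ (m - 1)`; the right-hand side of the final inequality is at most `0` by `γ_ineq`. -/
lemma defect_sum {ρ : Type*} [Fintype ρ] (b : ρ → V3) (hb : ∀ q, b q ≠ 0)
    (hbne : ∀ q q', q ≠ q' → ∀ c : ℂ, b q ≠ c • b q')
    (hb1 : ∀ q, 1 ≤ #{l | N.α l ⬝ᵥ b q = 0})
    (hcov : ∀ l l', l ≠ l' → ∃ q, N.α l ⬝ᵥ b q = 0 ∧ N.α l' ⬝ᵥ b q = 0)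
    (hY : ∑ q, ((#{l | N.α l ⬝ᵥ b q = 0} : ℤ) - 1) = ∑ p, ((N.r p : ℤ) - 1)
      + (2 - (N.k : ℤ)) * (3 * N.d - (N.d : ℤ) ^ 2 + ∑ p, ((N.n p : ℤ) ^ 2 - N.n p))
      + 2 * Fintype.card ι - 3 - Fintype.card π) :
    ∃ D : ℤ, (Fintype.card ι : ℤ) = D + 2 + (N.k - 2) * N.d ∧
      (D + 2) * N.d = 2 * ∑ p, (N.n p : ℤ) + ∑ p, N.n p * N.tp p ∧
      (D + 2) * N.γ = 2 * ∑ p, (N.γp p : ℤ) + ∑ p, N.tp p * N.γp p ∧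
      ∑ p, (N.tp p - N.γp p) * ((N.k - 2) * N.n p - 1 + N.γp p) ≤
        (N.γ : ℤ) ^ 2 + 3 * N.γ - ∑ p, (N.γp p : ℤ) ^ 2 - ∑ p, (N.γp p : ℤ) := by
  obtain ⟨w, hw, hwd⟩ := N.wv_deg
  have hr : 1 ≤ Fintype.card ι := by
    obtain ⟨l, -⟩ := N.surj N.i0
    exact Fintype.card_pos_iff.2 ⟨l⟩
  have hB := N.mult_bound b hb hbne hb1 hcov hw hr
  have hd := N.dpos
  have hsm := N.sm_eq
  have hwz : (N.sm : ℤ) + N.γ + w = 2 * N.d - 1 := by omega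
  have hnn : ∑ p, (N.n p : ℤ) ^ 2 = (N.d : ℤ) ^ 2 := by
    rw [sq (N.d : ℤ), ← N.bal_n.sum_mul_n]
    exact Finset.sum_congr rfl fun p _ => sq _
  have hng := N.bal_γ.sum_mul_n
  have hrp : ∀ p, (N.r p : ℤ) = N.tp p + 2 + (N.k - 2) * N.n p := fun p => by rw [tp]; ring
  have hrn := N.bal_n.sum_mul_r
  have hrg := N.bal_γ.sum_mul_r
  have e1 : ∑ p, (N.r p : ℤ) * N.n p = ∑ p, N.n p * N.tp p + 2 * ∑ p, (N.n p : ℤ)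
      + (N.k - 2) * ∑ p, (N.n p : ℤ) ^ 2 := by
    rw [Finset.mul_sum, Finset.mul_sum, ← Finset.sum_add_distrib, ← Finset.sum_add_distrib]
    exact Finset.sum_congr rfl fun p _ => by rw [hrp]; ring
  have e2 : ∑ p, (N.r p : ℤ) * N.γp p = ∑ p, N.tp p * N.γp p + 2 * ∑ p, (N.γp p : ℤ)
      + (N.k - 2) * ∑ p, (N.n p : ℤ) * N.γp p := by
    rw [Finset.mul_sum, Finset.mul_sum, ← Finset.sum_add_distrib, ← Finset.sum_add_distrib]
    exact Finset.sum_congr rfl fun p _ => by rw [hrp]; ring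
  have e3 : ∑ p, ((N.r p : ℤ) - 1) = ∑ p, N.tp p + (N.k - 2) * ∑ p, (N.n p : ℤ)
      + Fintype.card π := by
    have : (Fintype.card π : ℤ) = ∑ p : π, (1 : ℤ) := by simp
    rw [this, Finset.mul_sum, ← Finset.sum_add_distrib, ← Finset.sum_add_distrib]
    exact Finset.sum_congr rfl fun p _ => by rw [hrp]; ring
  have e4 : ∑ p, (N.tp p - N.γp p) * ((N.k - 2) * N.n p - 1 + N.γp p)
      = (N.k - 2) * ∑ p, N.n p * N.tp p - ∑ p, N.tp p + ∑ p, N.tp p * N.γp p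
        - (N.k - 2) * ∑ p, (N.n p : ℤ) * N.γp p + ∑ p, (N.γp p : ℤ)
        - ∑ p, (N.γp p : ℤ) ^ 2 := by
    rw [Finset.mul_sum, Finset.mul_sum, ← Finset.sum_sub_distrib, ← Finset.sum_add_distrib,
      ← Finset.sum_sub_distrib, ← Finset.sum_add_distrib, ← Finset.sum_sub_distrib]
    exact Finset.sum_congr rfl fun p _ => by ring
  have e5 : ∑ p, ((N.n p : ℤ) ^ 2 - N.n p) = (N.d : ℤ) ^ 2 - ∑ p, (N.n p : ℤ) := by
    rw [Finset.sum_sub_distrib, hnn]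
  rw [e5] at hY
  rw [hY, e3] at hB
  rw [e1, hnn] at hrn
  rw [e2, hng] at hrg
  rw [hng] at e4
  generalize (∑ p, N.tp p) = T at *
  generalize (∑ p, (N.n p : ℤ) * N.tp p) = nT at *
  generalize (∑ p, (N.n p : ℤ)) = S at *
  generalize (∑ p, N.tp p * (N.γp p : ℤ)) = Tg at *
  generalize (∑ p, (N.γp p : ℤ)) = g1 at *
  generalize (∑ p, (N.γp p : ℤ) ^ 2) = g2 at *
  generalize (Fintype.card ι : ℤ) = r at *
  obtain ⟨D, hD⟩ : ∃ D : ℤ, D = 2 * N.d - 2 - N.sm := ⟨_, rfl⟩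
  have hrD : r = D + 2 + (N.k - 2) * N.d := by rw [hD, hsm]; ring
  have hwD : (w : ℤ) = D + 1 - N.γ := by rw [hD]; linarith
  have f1 : (D + 2) * N.d = 2 * S + nT := by rw [hrD] at hrn; linarith
  have f2 : (D + 2) * N.γ = 2 * g1 + Tg := by rw [hrD] at hrg; linarith
  refine ⟨D, hrD, f1, f2, ?_⟩
  rw [e4]
  rw [hwD, hrD] at hB
  linear_combination hB - (N.k - 2) * f1 - f2

set_option maxHeartbeats 1000000 in
/-- In the case of equality in `defect_sum`, the form `G` is constant. -/
lemma gamma_zero {D : ℤ} (hr : (Fintype.card ι : ℤ) = D + 2 + (N.k - 2) * N.d)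
    (hn : (D + 2) * N.d = 2 * ∑ p, (N.n p : ℤ) + ∑ p, N.n p * N.tp p)
    (hg : (D + 2) * N.γ = 2 * ∑ p, (N.γp p : ℤ) + ∑ p, N.tp p * N.γp p)
    (ht : ∀ p, N.tp p = N.γp p)
    (he : (N.γ : ℤ) ^ 2 + 3 * N.γ = ∑ p, (N.γp p : ℤ) ^ 2 + ∑ p, (N.γp p : ℤ)) : N.γ = 0 := by
  by_contra hγ
  have hd := N.dpos
  have hk := N.hk
  have hnn : ∑ p, (N.n p : ℤ) ^ 2 = (N.d : ℤ) ^ 2 := by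
    rw [sq (N.d : ℤ), ← N.bal_n.sum_mul_n]
    exact Finset.sum_congr rfl fun p _ => sq _
  have hng : ∑ p, (N.n p : ℤ) * N.γp p = N.d * N.γ := N.bal_γ.sum_mul_n
  have hgg : ∑ p, N.tp p * (N.γp p : ℤ) = ∑ p, (N.γp p : ℤ) ^ 2 :=
    Finset.sum_congr rfl fun p _ => by rw [ht]; ring
  have hnt : ∑ p, (N.n p : ℤ) * N.tp p = N.d * N.γ := by
    rw [← hng]
    exact Finset.sum_congr rfl fun p _ => by rw [ht]
  have h3 := N.three_d_le
  have hrk := N.rank_bound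
  zify at h3 hrk
  rw [hgg] at hg
  rw [hnt] at hn
  -- the positivity of `γ` forces a base point with `n p ≥ 2`
  obtain ⟨p0, hp0⟩ : ∃ p, 2 ≤ N.n p := by
    by_contra hno
    push Not at hno
    have : ∑ p, (N.n p : ℤ) * N.γp p = 0 := by
      apply Finset.sum_eq_zero
      intro p _
      have h1 := N.npos p
      have h2 := hno p
      rw [(N.tp_of_n (p := p) (by omega)).2]; simp
    rw [this] at hng
    have : (0 : ℤ) < N.d * N.γ := by
      have : 0 < N.d * N.γ := Nat.mul_pos hd (Nat.pos_of_ne_zero hγ)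
      exact_mod_cast this
    omega
  have hcs : ∑ p, ((N.γ : ℤ) * N.n p - N.d * N.γp p) ^ 2
      = (N.d : ℤ) ^ 2 * (∑ p, (N.γp p : ℤ) ^ 2 - (N.γ : ℤ) ^ 2) := by
    have : ∑ p, ((N.γ : ℤ) * N.n p - N.d * N.γp p) ^ 2 = (N.γ : ℤ) ^ 2 * ∑ p, (N.n p : ℤ) ^ 2
        - 2 * N.γ * N.d * ∑ p, (N.n p : ℤ) * N.γp p + (N.d : ℤ) ^ 2 * ∑ p, (N.γp p : ℤ) ^ 2 := by
      rw [Finset.mul_sum, Finset.mul_sum, Finset.mul_sum, ← Finset.sum_sub_distrib,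
        ← Finset.sum_add_distrib]
      exact Finset.sum_congr rfl fun p _ => by ring
    rw [this, hnn, hng]; ring
  have hcs0 : ∀ p ∈ univ, 0 ≤ ((N.γ : ℤ) * N.n p - N.d * N.γp p) ^ 2 := fun p _ => sq_nonneg _
  have hcs1 := Finset.sum_nonneg hcs0
  obtain ⟨c, hc⟩ : ∃ c : ℤ, c = D - 4 - N.γ := ⟨_, rfl⟩
  have hD : D = c + 4 + N.γ := by linarith
  have hcγ : c * N.γ = (N.γ : ℤ) ^ 2 - ∑ p, (N.γp p : ℤ) ^ 2 := by
    rw [hD] at hg; linear_combination hg - 2 * he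
  have hcn : (c + 6) * N.d = 2 * ∑ p, (N.n p : ℤ) := by
    rw [hD] at hn; linear_combination hn
  have hγ1 : (1 : ℤ) ≤ N.γ := by have := Nat.pos_of_ne_zero hγ; exact_mod_cast this
  have hd1 : (1 : ℤ) ≤ N.d := by exact_mod_cast hd
  have hk1 : (1 : ℤ) ≤ (N.k : ℤ) - 2 := by have : (3 : ℤ) ≤ N.k := by exact_mod_cast hk
                                           linarith
  have hc0 : c ≤ 0 := by
    by_contra hcp
    push Not at hcp
    have h1 : (0 : ℤ) < c * N.γ := by positivity
    rw [hcs] at hcs1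
    have h2 : (0 : ℤ) < (N.d : ℤ) ^ 2 := by positivity
    have := nonneg_of_mul_nonneg_right hcs1 h2
    linarith
  have hrk' : c + 5 + N.γ + (N.k - 2) * ((N.d : ℤ) - 1) ≤ Fintype.card π := by
    rw [hr, hD] at hrk; linarith
  rcases hc0.lt_or_eq with hc0 | hc0
  · have hcd : -4 ≤ c * N.d := by linarith
    have hd4 : (N.d : ℤ) ≤ 4 := by nlinarith
    have hsq : ∀ p, (N.n p : ℤ) ^ 2 ≤ (N.d : ℤ) ^ 2 := fun p => by
      rw [← hnn]
      exact Finset.single_le_sum (f := fun p => (N.n p : ℤ) ^ 2) (fun _ _ => sq_nonneg _)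
        (mem_univ p)
    have hd4' : N.d ≤ 4 := by exact_mod_cast hd4
    have hp0' : (2 : ℤ) ≤ N.n p0 := by exact_mod_cast hp0
    obtain hd' | hd' | hd' | hd' : N.d = 1 ∨ N.d = 2 ∨ N.d = 3 ∨ N.d = 4 := by omega
    · have := hsq p0
      rw [hd'] at this
      push_cast at this
      nlinarith
    · -- a point with `n p = 2 = d` is the only base point
      have h1 := hsq p0
      have h2 : ∑ p ∈ univ.erase p0, (N.n p : ℤ) ^ 2 = 4 - (N.n p0 : ℤ) ^ 2 := by
        have := Finset.add_sum_erase univ (fun p => (N.n p : ℤ) ^ 2) (mem_univ p0)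
        rw [hnn, hd'] at this
        push_cast at this
        linarith
      have h3' : ∑ p ∈ univ.erase p0, (N.n p : ℤ) ≤ ∑ p ∈ univ.erase p0, (N.n p : ℤ) ^ 2 :=
        Finset.sum_le_sum fun p _ => by
          have : (1 : ℤ) ≤ N.n p := by exact_mod_cast N.npos p
          nlinarith
      have h4 := Finset.add_sum_erase univ (fun p => (N.n p : ℤ)) (mem_univ p0)
      rw [hd'] at h3
      push_cast at h3
      nlinarith
    · rw [hd'] at hcd hcn
      push_cast at hcd hcn
      omega
    · rw [hd'] at hcd hcn hng hnn hrk'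
      push_cast at hcd hcn hng hnn hrk'
      have hc1 : c = -1 := by omega
      rw [hc1] at hcn hrk'
      have hS : ∑ p, (N.n p : ℤ) = 10 := by linarith
      have hX : (8 : ℤ) ≤ Fintype.card π := by linarith
      have hn1 : ∀ p, (1 : ℤ) ≤ N.n p := fun p => by exact_mod_cast N.npos p
      have hS1 : ∑ p, ((N.n p : ℤ) - 1) = 10 - Fintype.card π := by
        rw [Finset.sum_sub_distrib, hS]; simp
      have hn3 : ∀ p, (N.n p : ℤ) ≤ 3 := fun p => by
        have := Finset.single_le_sum (f := fun p => (N.n p : ℤ) - 1)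
          (fun p _ => by have := hn1 p; linarith) (mem_univ p)
        rw [hS1] at this
        linarith
      have h6 : ∑ p, (3 - (N.n p : ℤ)) * ((N.n p : ℤ) - 1) = 24 - 3 * Fintype.card π := by
        have : ∑ p, (3 - (N.n p : ℤ)) * ((N.n p : ℤ) - 1) = 3 * ∑ p, ((N.n p : ℤ) - 1)
            - ∑ p, (N.n p : ℤ) ^ 2 + ∑ p, (N.n p : ℤ) := by
          rw [Finset.mul_sum, ← Finset.sum_sub_distrib, ← Finset.sum_add_distrib]
          exact Finset.sum_congr rfl fun p _ => by ring
        rw [this, hS1, hnn, hS]; ring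
      have h7 : ∀ p ∈ univ, 0 ≤ (3 - (N.n p : ℤ)) * ((N.n p : ℤ) - 1) := fun p _ =>
        mul_nonneg (by linarith [hn3 p]) (by linarith [hn1 p])
      have h8 := Finset.sum_nonneg h7
      have hX8 : (Fintype.card π : ℤ) = 8 := by linarith
      have hγ' : (N.γ : ℤ) = 1 := by linarith
      rw [hX8] at h6
      have h9 := (Finset.sum_eq_zero_iff_of_nonneg h7).1 (by rw [h6]; norm_num)
      have h10 : (3 : ℤ) ∣ ∑ p, (N.n p : ℤ) * N.γp p := by
        apply Finset.dvd_sum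
        intro p hp
        rcases mul_eq_zero.1 (h9 p hp) with h | h
        · exact Dvd.dvd.mul_right ⟨1, by linarith⟩ _
        · have : N.n p = 1 := by have : (N.n p : ℤ) = 1 := by linarith
                                 exact_mod_cast this
          rw [(N.tp_of_n this).2]; simp
      rw [hng, hγ'] at h10
      norm_num at h10
  · subst hc0
    have h1 : ∑ p, (N.γp p : ℤ) ^ 2 = (N.γ : ℤ) ^ 2 := by linarith
    rw [h1, sub_self, mul_zero] at hcs
    have h2 := (Finset.sum_eq_zero_iff_of_nonneg hcs0).1 hcs
    have hgp : ∀ p, (1 : ℤ) ≤ N.γp p := by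
      intro p
      have h4 := h2 p (mem_univ p)
      have h5 : (N.γ : ℤ) * N.n p = N.d * N.γp p := by
        have := pow_eq_zero_iff (two_ne_zero) |>.1 h4
        linarith
      have h6 : (1 : ℤ) ≤ N.n p := by exact_mod_cast N.npos p
      by_contra h7
      have h8 : (N.γp p : ℤ) = 0 := by omega
      rw [h8, mul_zero] at h5
      have h9 : (0 : ℤ) < N.γ * N.n p := mul_pos (by linarith) (by linarith)
      linarith
    have hn2 : ∀ p, (2 : ℤ) ≤ N.n p := by
      intro p
      have h4 := N.npos p
      have h5 : N.n p ≠ 1 := fun h => by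
        have := hgp p
        rw [(N.tp_of_n h).2] at this
        simp at this
      have : 2 ≤ N.n p := by omega
      exact_mod_cast this
    have h5 : (Fintype.card π : ℤ) ≤ ∑ p, (N.γp p : ℤ) := by
      have := Finset.sum_le_sum (s := univ) fun p (_ : p ∈ univ) => hgp p
      simpa using this
    have h6 : 2 * (Fintype.card π : ℤ) ≤ ∑ p, (N.n p : ℤ) := by
      have := Finset.sum_le_sum (s := univ) fun p (_ : p ∈ univ) => hn2 p
      simpa [mul_comm] using this
    have h7 : (N.d : ℤ) - 1 ≤ (N.k - 2) * ((N.d : ℤ) - 1) :=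
      le_mul_of_one_le_left (by linarith) hk1
    linarith

/-- The local test for completeness, in coordinates; `b` lists all points where at least two lines
of the arrangement meet, and `hY` is the completeness equation. -/
theorem tp_eq_zero {ρ : Type*} [Fintype ρ] (b : ρ → V3) (hb : ∀ q, b q ≠ 0)
    (hbne : ∀ q q', q ≠ q' → ∀ c : ℂ, b q ≠ c • b q')
    (hb1 : ∀ q, 1 ≤ #{l | N.α l ⬝ᵥ b q = 0})
    (hcov : ∀ l l', l ≠ l' → ∃ q, N.α l ⬝ᵥ b q = 0 ∧ N.α l' ⬝ᵥ b q = 0)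
    (hY : ∑ q, ((#{l | N.α l ⬝ᵥ b q = 0} : ℤ) - 1) = ∑ p, ((N.r p : ℤ) - 1)
      + (2 - (N.k : ℤ)) * (3 * N.d - (N.d : ℤ) ^ 2 + ∑ p, ((N.n p : ℤ) ^ 2 - N.n p))
      + 2 * Fintype.card ι - 3 - Fintype.card π) (p : π) : N.tp p = 0 := by
  obtain ⟨D, hr, hn, hg, hs⟩ := N.defect_sum b hb hbne hb1 hcov hY
  have hi := N.γ_ineq
  zify at hi
  simp only [← sq] at hi
  have hk1 : (1 : ℤ) ≤ (N.k : ℤ) - 2 := by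
    have : (3 : ℤ) ≤ N.k := by exact_mod_cast N.hk
    linarith
  have hn1 : ∀ p, (1 : ℤ) ≤ N.n p := fun p => by exact_mod_cast N.npos p
  have hkn : ∀ p, (N.n p : ℤ) ≤ (N.k - 2) * N.n p := fun p =>
    le_mul_of_one_le_left (by linarith [hn1 p]) hk1
  have hg0 : ∀ p, (0 : ℤ) ≤ N.γp p := fun p => Nat.cast_nonneg _
  have h0 : ∀ p ∈ univ, 0 ≤ (N.tp p - N.γp p) * ((N.k - 2) * N.n p - 1 + N.γp p) := fun p _ =>
    mul_nonneg (by linarith [N.γp_le_tp p]) (by linarith [hkn p, hn1 p, hg0 p])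
  have h1 := Finset.sum_nonneg h0
  have h2 := (Finset.sum_eq_zero_iff_of_nonneg h0).1 (by linarith)
  have ht : ∀ p, N.tp p = N.γp p := by
    intro p
    rcases mul_eq_zero.1 (h2 p (mem_univ p)) with h | h
    · linarith
    · have h3 : N.n p = 1 := by
        have : (N.n p : ℤ) = 1 := by linarith [hkn p, hn1 p, hg0 p]
        exact_mod_cast this
      rw [(N.tp_of_n h3).1, (N.tp_of_n h3).2]; rfl
  have hγ := N.gamma_zero hr hn hg ht (by linarith)
  rw [hγ] at hs
  have h3 : ∑ p, (N.γp p : ℤ) ≤ 0 := by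
    have : 0 ≤ ∑ p, (N.γp p : ℤ) ^ 2 := Finset.sum_nonneg fun _ _ => sq_nonneg _
    push_cast at hs
    linarith
  have h4 := Finset.single_le_sum (f := fun p => (N.γp p : ℤ)) (fun p _ => hg0 p) (mem_univ p)
  rw [ht]
  linarith [hg0 p]

end MNet
end Multinet

/-! ### From subspaces to coordinates -/

namespace Multinet

lemma exists_covector {ℓ : Submodule ℂ V3} (h : Module.finrank ℂ ℓ = 2) :
    ∃ α : V3, α ≠ 0 ∧ ∀ x, x ∈ ℓ ↔ α ⬝ᵥ x = 0 := by
  have hlt : ℓ < ⊤ := by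
    rw [lt_top_iff_ne_top]
    rintro rfl
    simp at h
  obtain ⟨f, hf0, hf⟩ := Submodule.exists_le_ker_of_lt_top ℓ hlt
  have hker : ℓ = LinearMap.ker f := by
    apply Submodule.eq_of_le_of_finrank_le hf
    rw [h]
    have h1 := Submodule.finrank_lt (K := ℂ) (s := LinearMap.ker f)
      (fun e => hf0 (LinearMap.ker_eq_top.1 e))
    simp at h1
    omega
  have hfx : ∀ x, f x = (fun i => f (Pi.single i 1)) ⬝ᵥ x := by
    intro x
    conv_lhs => rw [← Finset.univ_sum_single x]
    rw [map_sum, dotProduct]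
    refine Finset.sum_congr rfl fun i _ => ?_
    rw [mul_comm, ← smul_eq_mul, ← map_smul, ← Pi.single_smul, smul_eq_mul, mul_one]
  refine ⟨fun i => f (Pi.single i 1), fun h0 => hf0 ?_, fun x => ?_⟩
  · refine LinearMap.ext fun x => ?_
    rw [hfx x, h0]
    simp
  · rw [hker, LinearMap.mem_ker, hfx]

lemma exists_vector {p : Submodule ℂ V3} (h : Module.finrank ℂ p = 1) :
    ∃ a : V3, a ≠ 0 ∧ p = Submodule.span ℂ {a} := by
  obtain ⟨v, hv0, hv⟩ := finrank_eq_one_iff'.1 h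
  refine ⟨v, fun e => hv0 (Subtype.ext e), le_antisymm (fun x hx => ?_) ?_⟩
  · obtain ⟨c, hc⟩ := hv ⟨x, hx⟩
    exact Submodule.mem_span_singleton.2 ⟨c, congrArg Subtype.val hc⟩
  · rw [Submodule.span_singleton_le_iff_mem]; exact v.2

lemma finrank_inf_line {ℓ ℓ' : Submodule ℂ V3} (h : Module.finrank ℂ ℓ = 2)
    (h' : Module.finrank ℂ ℓ' = 2) (hne : ℓ ≠ ℓ') : Module.finrank ℂ (ℓ ⊓ ℓ' : Submodule ℂ V3) = 1 := by
  have h1 := Submodule.finrank_sup_add_finrank_inf_eq ℓ ℓ'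
  have h2 := Submodule.finrank_le (ℓ ⊔ ℓ')
  have h3 : Module.finrank ℂ (ℓ ⊓ ℓ' : Submodule ℂ V3) < 2 := by
    rw [← h]
    apply Submodule.finrank_lt_finrank_of_lt
    refine lt_of_le_of_ne inf_le_left fun e => hne ?_
    exact Submodule.eq_of_le_of_finrank_eq (inf_eq_left.1 e) (by rw [h, h'])
  simp at h2
  omega

lemma eq_inf_line {ℓ ℓ' p : Submodule ℂ V3} (h : Module.finrank ℂ ℓ = 2)
    (h' : Module.finrank ℂ ℓ' = 2) (hne : ℓ ≠ ℓ') (hp : Module.finrank ℂ p = 1) (h1 : p ≤ ℓ)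
    (h2 : p ≤ ℓ') : p = ℓ ⊓ ℓ' :=
  Submodule.eq_of_le_of_finrank_eq (le_inf h1 h2) (by rw [hp, finrank_inf_line h h' hne])

lemma sum_attach_filter {β M : Type*} [AddCommMonoid M] (L : Finset β) (P : β → Prop) (f : β → M) :
    ∑ l : L with P l.1, f l.1 = ∑ ℓ ∈ L with P ℓ, f ℓ := by
  rw [Finset.sum_filter, Finset.sum_filter]
  exact Finset.sum_coe_sort L (fun ℓ => if P ℓ then f ℓ else 0)

end Multinet

open Multinet in
/-- Local test for completeness: for a complete multinet (equality in
the Riemann–Hurwitz type formula) with gcd of multiplicities 1, for every p ∈ X one has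
2n_p − 2 = ∑_{ℓ ∋ p} (m(ℓ) − 1); in particular if all m(ℓ) = 1 then n_p = 1 for all
p ∈ X, i.e. the multinet is a net. -/
theorem complete_multinet_local_test
    (L : Finset (Submodule ℂ (Fin 3 → ℂ)))
    (hL2 : ∀ ℓ ∈ L, Module.finrank ℂ ℓ = 2)
    (k d : ℕ) (hk : 3 ≤ k)
    (Li : Fin k → Finset (Submodule ℂ (Fin 3 → ℂ)))
    (hsub : ∀ i, Li i ⊆ L)
    (hcover : ∀ ℓ ∈ L, ∃ i, ℓ ∈ Li i)
    (hdisj : ∀ i j, i ≠ j → Disjoint (Li i) (Li j))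
    (hne : ∀ i, (Li i).Nonempty)
    (m : Submodule ℂ (Fin 3 → ℂ) → ℕ)
    (hm : ∀ ℓ ∈ L, 0 < m ℓ)
    (X : Finset (Submodule ℂ (Fin 3 → ℂ)))
    (hX : ∀ p ∈ X, Module.finrank ℂ p = 1 ∧ 3 ≤ (L.filter (fun ℓ => p ≤ ℓ)).card)
    (h1 : ∀ i, ∑ ℓ ∈ Li i, m ℓ = d)
    (h2 : ∀ i j, i ≠ j → ∀ ℓ ∈ Li i, ∀ ℓ' ∈ Li j, ℓ ⊓ ℓ' ∈ X)
    (n : Submodule ℂ (Fin 3 → ℂ) → ℕ)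
    (h3 : ∀ p ∈ X, ∀ i, ∑ ℓ ∈ (Li i).filter (fun ℓ => p ≤ ℓ), m ℓ = n p)
    (h4 : ∀ i, ∀ ℓ ∈ Li i, ∀ ℓ' ∈ Li i,
      Relation.ReflTransGen
        (fun a b => a ∈ Li i ∧ b ∈ Li i ∧ a ≠ b ∧ a ⊓ b ∉ X) ℓ ℓ')
    (hgcd : L.gcd m = 1)
    (Xbar : Finset (Submodule ℂ (Fin 3 → ℂ)))
    (hXbar : ∀ p, p ∈ Xbar ↔ Module.finrank ℂ p = 1 ∧ p ∉ X ∧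
        2 ≤ (L.filter (fun ℓ => p ≤ ℓ)).card)
    (hcomplete : 3 + (X.card : ℤ)
      = (2 - (k : ℤ)) * (3 * (d : ℤ) - (d : ℤ) ^ 2 + ∑ p ∈ X, ((n p : ℤ) ^ 2 - (n p : ℤ)))
        + 2 * (L.card : ℤ)
        - ∑ p ∈ Xbar, (((L.filter (fun ℓ => p ≤ ℓ)).card : ℤ) - 1)) :
    (∀ p ∈ X, 2 * (n p : ℤ) - 2 = ∑ ℓ ∈ L.filter (fun ℓ => p ≤ ℓ), ((m ℓ : ℤ) - 1))
    ∧ ((∀ ℓ ∈ L, m ℓ = 1) → ∀ p ∈ X, n p = 1) := by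
  have key : ∀ p ∈ X, 2 * (n p : ℤ) - 2 = ∑ ℓ ∈ L.filter (fun ℓ => p ≤ ℓ), ((m ℓ : ℤ) - 1) := by
    have hα : ∀ l : L, ∃ α : V3, α ≠ 0 ∧ ∀ x, x ∈ l.1 ↔ α ⬝ᵥ x = 0 := fun l =>
      exists_covector (hL2 l.1 l.2)
    choose α α0 hα using hα
    have hv : ∀ p : Submodule ℂ V3, ∃ a : V3, Module.finrank ℂ p = 1 →
        a ≠ 0 ∧ p = Submodule.span ℂ {a} := by
      intro p
      by_cases h : Module.finrank ℂ p = 1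
      · obtain ⟨a, ha⟩ := exists_vector h
        exact ⟨a, fun _ => ha⟩
      · exact ⟨0, fun h' => absurd h' h⟩
    choose vec hvec using hv
    have hle : ∀ p : Submodule ℂ V3, Module.finrank ℂ p = 1 → ∀ l : L, α l ⬝ᵥ vec p = 0 ↔ p ≤ l.1 := by
      intro p hp l
      rw [← hα l]
      conv_rhs => rw [(hvec p hp).2]
      rw [Submodule.span_singleton_le_iff_mem]
    have hvne : ∀ p q : Submodule ℂ V3, Module.finrank ℂ p = 1 → Module.finrank ℂ q = 1 → p ≠ q →
        ∀ c : ℂ, vec p ≠ c • vec q := by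
      intro p q hp hq hpq c hc
      apply hpq
      apply Submodule.eq_of_le_of_finrank_eq _ (by rw [hp, hq])
      rw [(hvec p hp).2, Submodule.span_singleton_le_iff_mem, hc]
      refine Submodule.smul_mem _ _ ?_
      have h := Submodule.mem_span_singleton_self (R := ℂ) (vec q)
      rwa [← (hvec q hq).2] at h
    choose cls hcls using fun l : L => hcover l.1 l.2
    have hclsiff : ∀ (l : L) i, cls l = i ↔ l.1 ∈ Li i := by
      refine fun l i => ⟨fun e => e ▸ hcls l, fun h => ?_⟩
      by_contra hne
      exact Finset.disjoint_left.1 (hdisj _ _ hne) (hcls l) h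
    have hLi : ∀ i, L.filter (fun ℓ => ℓ ∈ Li i) = Li i := fun i => by
      ext ℓ
      rw [Finset.mem_filter]
      exact ⟨fun h => h.2, fun h => ⟨hsub i h, h⟩⟩
    have hcard : ∀ p : Submodule ℂ V3, Module.finrank ℂ p = 1 →
        #{l : L | α l ⬝ᵥ vec p = 0} = (L.filter (fun ℓ => p ≤ ℓ)).card := by
      intro p hp
      rw [Finset.card_eq_sum_ones, Finset.card_eq_sum_ones,
        ← sum_attach_filter L (fun ℓ => p ≤ ℓ) (fun _ => 1)]
      exact Finset.sum_congr (Finset.filter_congr fun l _ => hle p hp l) fun _ _ => rfl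
    let N : MNet L X :=
      { α := α
        α0 := α0
        αne := by
          intro l l' hll c hc
          have hc0 : c ≠ 0 := by
            rintro rfl
            exact α0 l (by simpa using hc)
          apply hll
          apply Subtype.ext
          ext x
          rw [hα l, hα l', hc, smul_dotProduct, smul_eq_mul, mul_eq_zero]
          simp [hc0]
        a := fun p => vec p.1
        a0 := fun p => (hvec p.1 (hX p.1 p.2).1).1
        ane := fun p q h => hvne p.1 q.1 (hX p.1 p.2).1 (hX q.1 q.2).1 fun e => h (Subtype.ext e)
        k := k
        hk := hk
        d := d
        cls := cls
        surj := by
          intro i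
          obtain ⟨ℓ, hℓ⟩ := hne i
          exact ⟨⟨ℓ, hsub i hℓ⟩, (hclsiff _ _).2 hℓ⟩
        m := fun l => m l.1
        mpos := fun l => hm l.1 l.2
        n := fun p => n p.1
        h1 := by
          intro i
          rw [← h1 i, ← hLi i, Finset.sum_filter, Finset.sum_filter, ← Finset.sum_coe_sort L]
          exact Finset.sum_congr rfl fun l _ => if_congr (hclsiff l i) rfl rfl
        h2 := by
          intro l l' hll
          have h := h2 _ _ hll l.1 (hcls l) l'.1 (hcls l')
          exact ⟨⟨_, h⟩, (hle _ (hX _ h).1 l).2 inf_le_left, (hle _ (hX _ h).1 l').2 inf_le_right⟩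
        h3 := by
          intro p i
          rw [← h3 p.1 p.2 i, ← hLi i, Finset.filter_filter, Finset.sum_filter, Finset.sum_filter,
            ← Finset.sum_coe_sort L]
          exact Finset.sum_congr rfl fun l _ =>
            if_congr (and_congr (hclsiff l i) (hle p.1 (hX _ p.2).1 l)) rfl rfl
        hex := by
          intro p
          have h := (hX p.1 p.2).2
          rw [← hcard p.1 (hX p.1 p.2).1] at h
          obtain ⟨l, hl⟩ := Finset.card_pos.1 (lt_of_lt_of_le (by norm_num) h)
          exact ⟨l, (Finset.mem_filter.1 hl).2⟩
        h4 := by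
          intro l l' hll
          have h := h4 (cls l) l.1 (hcls l) l'.1 (hll ▸ hcls l')
          suffices hs : ∀ ℓ, Relation.ReflTransGen
              (fun a b => a ∈ Li (cls l) ∧ b ∈ Li (cls l) ∧ a ≠ b ∧ a ⊓ b ∉ X) l.1 ℓ →
              ∀ y : L, y.1 = ℓ → Relation.ReflTransGen (fun x y : L => cls x = cls y ∧ x ≠ y ∧
                ¬ ∃ p : X, α x ⬝ᵥ vec p.1 = 0 ∧ α y ⬝ᵥ vec p.1 = 0) l y from hs _ h l' rfl
          intro ℓ hℓ
          induction hℓ with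
          | refl =>
            intro y hy
            rw [Subtype.ext hy]
          | tail _ hstep ih =>
            rename_i b c _
            obtain ⟨hb, hc, hbc, hX'⟩ := hstep
            intro y hy
            subst hy
            refine (ih ⟨b, hsub _ hb⟩ rfl).tail ⟨?_, ?_, ?_⟩
            · rw [(hclsiff ⟨b, hsub _ hb⟩ _).2 hb, (hclsiff y _).2 hc]
            · exact fun e => hbc (congrArg Subtype.val e)
            · rintro ⟨p, hp1, hp2⟩
              have hp := (hX p.1 p.2).1
              rw [hle _ hp] at hp1 hp2
              apply hX'
              rw [← eq_inf_line (hL2 b (hsub _ hb)) (hL2 y.1 y.2) hbc hp hp1 hp2]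
              exact p.2
        hgcd := by
          apply Nat.dvd_one.1
          rw [← hgcd]
          exact Finset.dvd_gcd fun ℓ hℓ =>
            Finset.gcd_dvd (f := fun l : L => m l.1) (mem_univ (⟨ℓ, hℓ⟩ : L)) }
    have hbar : ∀ q ∈ X ∪ Xbar, Module.finrank ℂ q = 1 ∧
        2 ≤ (L.filter (fun ℓ => q ≤ ℓ)).card := by
      intro q hq
      rcases Finset.mem_union.1 hq with h | h
      · exact ⟨(hX q h).1, by have := (hX q h).2; omega⟩
      · exact ⟨((hXbar q).1 h).1, ((hXbar q).1 h).2.2⟩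
    have hdis : Disjoint X Xbar :=
      Finset.disjoint_left.2 fun p hp hp' => ((hXbar p).1 hp').2.1 hp
    have hmain := N.tp_eq_zero (ρ := (X ∪ Xbar : Finset _)) (fun q => vec q.1)
      (fun q => (hvec q.1 (hbar q.1 q.2).1).1)
      (fun q q' h => hvne q.1 q'.1 (hbar q.1 q.2).1 (hbar q'.1 q'.2).1 fun e => h (Subtype.ext e))
      (by
        intro q
        have h := hbar q.1 q.2
        rw [← hcard q.1 h.1] at h
        exact le_trans (by norm_num) h.2)
      (by
        intro l l' hll
        have hll' : l.1 ≠ l'.1 := fun e => hll (Subtype.ext e)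
        have hp := finrank_inf_line (hL2 l.1 l.2) (hL2 l'.1 l'.2) hll'
        have hq : l.1 ⊓ l'.1 ∈ X ∪ Xbar := by
          rw [Finset.mem_union]
          by_cases h : l.1 ⊓ l'.1 ∈ X
          · exact Or.inl h
          · refine Or.inr ((hXbar _).2 ⟨hp, h, ?_⟩)
            apply Finset.one_lt_card.2
            exact ⟨l.1, Finset.mem_filter.2 ⟨l.2, inf_le_left⟩, l'.1,
              Finset.mem_filter.2 ⟨l'.2, inf_le_right⟩, hll'⟩
        exact ⟨⟨_, hq⟩, (hle _ hp l).2 inf_le_left, (hle _ hp l').2 inf_le_right⟩)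
      (by
        have e1 : ∑ q : (X ∪ Xbar : Finset _), ((#{l | N.α l ⬝ᵥ vec q.1 = 0} : ℤ) - 1)
            = ∑ q ∈ X ∪ Xbar, (((L.filter (fun ℓ => q ≤ ℓ)).card : ℤ) - 1) := by
          rw [← Finset.sum_coe_sort (X ∪ Xbar)]
          refine Finset.sum_congr rfl fun q _ => ?_
          rw [← hcard q.1 (hbar q.1 q.2).1]
        have e2 : ∑ p : X, ((N.r p : ℤ) - 1)
            = ∑ q ∈ X, (((L.filter (fun ℓ => q ≤ ℓ)).card : ℤ) - 1) := by
          rw [← Finset.sum_coe_sort X]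
          refine Finset.sum_congr rfl fun q _ => ?_
          rw [← hcard q.1 (hX q.1 q.2).1]
          rfl
        have e3 : ∑ p : X, ((N.n p : ℤ) ^ 2 - N.n p) = ∑ p ∈ X, ((n p : ℤ) ^ 2 - (n p : ℤ)) :=
          Finset.sum_coe_sort X (fun p => (n p : ℤ) ^ 2 - (n p : ℤ))
        rw [e1, e2, e3, Finset.sum_union hdis, Fintype.card_coe, Fintype.card_coe]
        change _ = _ + (2 - (k : ℤ)) * (3 * (d : ℤ) - (d : ℤ) ^ 2 + _) + _ - 3 - _
        linarith)
    intro p hp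
    have h := hmain ⟨p, hp⟩
    rw [N.tp_eq] at h
    have e : ∑ l : L with N.on l ⟨p, hp⟩, ((N.m l : ℤ) - 1)
        = ∑ ℓ ∈ L.filter (fun ℓ => p ≤ ℓ), ((m ℓ : ℤ) - 1) := by
      rw [← sum_attach_filter L (fun ℓ => p ≤ ℓ) (fun ℓ => (m ℓ : ℤ) - 1)]
      exact Finset.sum_congr (Finset.filter_congr fun l _ => hle p (hX p hp).1 l) fun _ _ => rfl
    rw [e] at h
    change 2 * (n p : ℤ) - 2 - _ = 0 at h
    linarith
  refine ⟨key, fun hm1 p hp => ?_⟩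
  have h := key p hp
  rw [Finset.sum_eq_zero (fun ℓ hℓ => by rw [hm1 ℓ (Finset.mem_filter.1 hℓ).1]; simp)] at h
  omega
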